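/- Let R be a commutative Noetherian ring of finite Krull dimension d, let f_i ∈ R[Y_i] for 1 ≤ i ≤ n, and let A = R[X_1,…,X_m,Y_1,…,Y_n, (f_1⋯f_n)^{-1}] be the localization of the polynomial ring R[X_1,…,X_m,Y_1,…,Y_n] at the powers of f_1⋯f_n. Then every finitely generated projective A-module P of constant rank r ≥ d+1 is cancellative: if P ⊕ A^t ≅ Q ⊕ A^t for some finitely generated projective A-module Q and some integer t > 0, then P ≅ Q. -/

import Mathlib

open MvPolynomial

noncomputable section

/-!
It suffices to move every unimodular element of `A × P` to `(1, 0)` by transvections: the free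
summands are then cancelled one at a time. This is done for `r ≥ 2`. If `r = 1`, and hence `d = 0`,
it leaves one free summand, and an isomorphism `A × P ≃ A × Q` of modules of rank two induces
`P ≃ Q` on second exterior powers.

*Free modules.* `E_{k+1}(A)` acts transitively on unimodular rows as soon as `k ≥ max (d + 1, 2)`.
For polynomial rings this is Suslin's argument: a change of variables makes some entry of the row
monic after inverting a suitable multiplicative set, and Quillen's local-global principle together
with Bass's stable range theorem does the rest. Each inverted polynomial `f` is then added by
further inverting `f ^ a * (1 + f * h)`, which lowers the dimension, and glueing along coprime
elements. For rows congruent to `(1, 0, …, 0)` modulo `s ^ 2`, the transitivity of `E(A, s)` follows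
from that of `E` over the base change of `A` to `R[ω] / (ω ^ 2 - s ^ 2 * ω)`.

*Projective modules.* Over a field finite free resolutions make `P` stably free, hence free.
Localizing at a minimal prime of `R`, where the maximal ideal is nilpotent, and clearing
denominators, one gets a non-nilpotent `s : R` and maps between `P` and `A ^ r` with both composites
equal to `s`. An element of `A × P` congruent to `(1, 0)` modulo `s ^ 3` then lifts to such a row.
As the same applies over every proper quotient `R ⧸ I`, Noetherian induction on `I` concludes.
-/

namespace DhorajiaKeshari

open Matrix (SpecialLinearGroup vecMulVec)
open Matrix.SpecialLinearGroup (transvection transvection_coe transvection_inv)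
open scoped Matrix Polynomial TensorProduct commutatorElement

universe u

lemma exists_ne_ne {ι : Type*} [Fintype ι] (hι : 3 ≤ Fintype.card ι) (i j : ι) :
    ∃ l, l ≠ i ∧ l ≠ j :=
  Cardinal.exists_ne_ne_of_three_le (by rw [Cardinal.mk_fintype]; exact_mod_cast hι) i j

lemma comp_single_one {ι R S : Type*} [DecidableEq ι] [CommRing R] [CommRing S]
    (f : R →+* S) (i : ι) : f ∘ Pi.single i 1 = Pi.single i 1 := by
  ext j
  simp [Pi.single_apply, apply_ite f]

lemma vecMulVec_mul_vecMulVec_of_dotProduct_eq_zero {ι R : Type*} [Fintype ι] [CommRing R]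
    {u v w x : ι → R} (h : v ⬝ᵥ w = 0) :
    vecMulVec u v * vecMulVec w x = 0 := by
  rw [Matrix.vecMulVec_mul_vecMulVec, h]
  ext
  simp [Matrix.vecMulVec_apply]

section ElementarySubgroup

variable {ι R S : Type*} [Fintype ι] [DecidableEq ι] [CommRing R] [CommRing S]

lemma transvection_commute {i j k l : ι} (hij : i ≠ j) (hkl : k ≠ l) (hjk : j ≠ k) (hli : l ≠ i)
    (a b : R) : Commute (transvection hij a) (transvection hkl b) := by
  refine Subtype.ext ?_
  simp only [Matrix.SpecialLinearGroup.coe_mul, transvection_coe, mul_add, add_mul,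
    one_mul, mul_one, Matrix.single_mul_single_of_ne _ _ _ _ hjk _,
    Matrix.single_mul_single_of_ne _ _ _ _ hli _]
  abel

lemma transvection_conj_left {i j k : ι} (hij : i ≠ j) (hjk : j ≠ k) (hik : i ≠ k) (a b : R) :
    transvection hij a * transvection hjk b * (transvection hij a)⁻¹ =
      transvection hjk b * transvection hik (a * b) := by
  rw [mul_inv_eq_iff_eq_mul]
  refine Subtype.ext ?_
  simp only [Matrix.SpecialLinearGroup.coe_mul, transvection_coe, mul_add, add_mul,
    one_mul, mul_one, Matrix.single_mul_single_same,
    Matrix.single_mul_single_of_ne _ _ _ _ hik.symm, zero_mul]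
  abel

lemma transvection_conj_right {i j k : ι} (hij : i ≠ j) (hjk : j ≠ k) (hik : i ≠ k) (a b : R) :
    transvection hjk a * transvection hij b * (transvection hjk a)⁻¹ =
      transvection hij b * transvection hik (-(b * a)) := by
  rw [mul_inv_eq_iff_eq_mul]
  refine Subtype.ext ?_
  simp only [Matrix.SpecialLinearGroup.coe_mul, transvection_coe, mul_add, add_mul,
    one_mul, mul_one, Matrix.single_mul_single_same, ← Matrix.single_neg, mul_neg, neg_mul,
    Matrix.single_mul_single_of_ne _ _ _ _ hij.symm,
    Matrix.single_mul_single_of_ne _ _ _ _ hik.symm,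
    Matrix.single_mul_single_of_ne _ _ _ _ hjk.symm, zero_mul]
  abel

lemma transvection_eq_commutator {i j k : ι} (hij : i ≠ j) (hjk : j ≠ k) (hik : i ≠ k) (a b : R) :
    transvection hik (a * b) = ⁅transvection hij a, transvection hjk b⁆ := by
  rw [commutatorElement_def, transvection_conj_left hij hjk hik,
    (transvection_commute hjk hik hik.symm hjk.symm _ _).eq, mul_inv_cancel_right]

lemma map_transvection (f : R →+* S) {i j : ι} (hij : i ≠ j) (c : R) :
    Matrix.SpecialLinearGroup.map f (transvection hij c) = transvection hij (f c) := by
  refine Subtype.ext ?_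
  simp [transvection_coe, Matrix.map_add, Matrix.map_single]

/-- The group `E(ι, I)` generated by the elementary matrices with off-diagonal entry in the
ideal `I`; it is not assumed to be normalised by `E(ι, R)`. -/
def elementarySubgroup (ι : Type*) [Fintype ι] [DecidableEq ι] (I : Ideal R) :
    Subgroup (SpecialLinearGroup ι R) :=
  Subgroup.closure {σ | ∃ (i j : ι) (hij : i ≠ j), ∃ c ∈ I, σ = transvection hij c}

variable {I : Ideal R}

lemma transvection_mem_elementarySubgroup {i j : ι} (hij : i ≠ j) {c : R} (hc : c ∈ I) :
    transvection hij c ∈ elementarySubgroup ι I :=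
  Subgroup.subset_closure ⟨i, j, hij, c, hc, rfl⟩

lemma elementarySubgroup_le_iff {H : Subgroup (SpecialLinearGroup ι R)} :
    elementarySubgroup ι I ≤ H ↔ ∀ (i j : ι) (hij : i ≠ j), ∀ c ∈ I, transvection hij c ∈ H := by
  refine (Subgroup.closure_le _).trans ⟨fun h i j hij c hc ↦ h ⟨i, j, hij, c, hc, rfl⟩, ?_⟩
  rintro h _ ⟨i, j, hij, c, hc, rfl⟩
  exact h i j hij c hc

lemma elementarySubgroup_mono {J : Ideal R} (h : I ≤ J) :
    elementarySubgroup ι I ≤ elementarySubgroup ι J :=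
  elementarySubgroup_le_iff.2 fun _ _ hij _ hc ↦ transvection_mem_elementarySubgroup hij (h hc)

lemma map_mem_elementarySubgroup (f : R →+* S) {σ : SpecialLinearGroup ι R}
    (hσ : σ ∈ elementarySubgroup ι (⊤ : Ideal R)) :
    Matrix.SpecialLinearGroup.map f σ ∈ elementarySubgroup ι (⊤ : Ideal S) := by
  suffices h : elementarySubgroup ι ⊤ ≤
      (elementarySubgroup ι ⊤).comap (Matrix.SpecialLinearGroup.map f) from h hσ
  refine elementarySubgroup_le_iff.2 fun i j hij c _ ↦ ?_
  rw [Subgroup.mem_comap, map_transvection]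
  exact transvection_mem_elementarySubgroup hij Submodule.mem_top

@[elab_as_elim]
lemma elementarySubgroup_induction
    {p : ∀ σ : SpecialLinearGroup ι R, σ ∈ elementarySubgroup ι I → Prop} (one : p 1 (one_mem _))
    (transvection_mul : ∀ (i j : ι) (hij : i ≠ j) (c : R) (hc : c ∈ I) (σ hσ), p σ hσ →
      p (transvection hij c * σ) (mul_mem (transvection_mem_elementarySubgroup hij hc) hσ))
    {σ : SpecialLinearGroup ι R} (hσ : σ ∈ elementarySubgroup ι I) : p σ hσ := by
  refine Subgroup.closure_induction_left one ?_ ?_ hσ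
  · rintro _ ⟨i, j, hij, c, hc, rfl⟩ τ hτ h
    exact transvection_mul i j hij c hc τ hτ h
  · rintro _ ⟨i, j, hij, c, hc, rfl⟩ τ hτ h
    simpa only [transvection_inv] using transvection_mul i j hij (-c) (I.neg_mem hc) τ hτ h

lemma map_smul_comp (f : R →+* S) (σ : SpecialLinearGroup ι R) (v : ι → R) :
    Matrix.SpecialLinearGroup.map f σ • (f ∘ v) = f ∘ (σ • v) := by
  ext i
  exact (f.map_mulVec σ.1 v i).symm

end ElementarySubgroup

section OneAddElementary

variable {ι R : Type*} [Fintype ι] [DecidableEq ι] [CommRing R] {I : Ideal R}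

/-- `1 + N` is a product of elementary matrices with off-diagonal entry in `I`. -/
def OneAddElementary (I : Ideal R) (N : Matrix ι ι R) : Prop :=
  ∃ σ ∈ elementarySubgroup ι I, (σ : Matrix ι ι R) = 1 + N

namespace OneAddElementary

lemma zero : OneAddElementary I (0 : Matrix ι ι R) := ⟨1, one_mem _, by simp⟩

lemma single {i j : ι} (hij : i ≠ j) {c : R} (hc : c ∈ I) :
    OneAddElementary I (Matrix.single i j c) :=
  ⟨transvection hij c, transvection_mem_elementarySubgroup hij hc, rfl⟩

lemma add {M N : Matrix ι ι R} (hM : OneAddElementary I M) (hN : OneAddElementary I N)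
    (hMN : M * N = 0) : OneAddElementary I (M + N) := by
  obtain ⟨σ, hσ, hσM⟩ := hM
  obtain ⟨τ, hτ, hτN⟩ := hN
  refine ⟨σ * τ, mul_mem hσ hτ, ?_⟩
  rw [Matrix.SpecialLinearGroup.coe_mul, hσM, hτN, add_mul, mul_add, mul_add, hMN]
  simp only [one_mul, mul_one, add_zero]
  abel

lemma sum {κ : Type*} (s : Finset κ) {N : κ → Matrix ι ι R}
    (hN : ∀ k, OneAddElementary I (N k)) (hmul : ∀ k l, N k * N l = 0) :
    OneAddElementary I (∑ k ∈ s, N k) := by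
  classical
  induction s using Finset.induction_on with
  | empty => simpa using zero
  | insert a s ha ih =>
    rw [Finset.sum_insert ha]
    refine (hN a).add ih ?_
    rw [Finset.mul_sum]
    exact Finset.sum_eq_zero fun k _ ↦ hmul a k

lemma vecMulVec_single {u : ι → R} {l : ι} (hl : u l = 0) {y : R} (hy : y ∈ I) :
    OneAddElementary I (vecMulVec u (Pi.single l y)) := by
  have hsum : vecMulVec u (Pi.single l y) = ∑ k, Matrix.single k l (u k * y) := by
    ext i j
    obtain rfl | hj := eq_or_ne j l
    · simp [Matrix.vecMulVec_apply, Matrix.sum_apply, Matrix.single_apply]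
    · simp [Matrix.vecMulVec_apply, Matrix.sum_apply, hj, hj.symm]
  rw [hsum]
  refine sum _ (fun k ↦ ?_) fun k m ↦ ?_
  · obtain rfl | hk := eq_or_ne k l
    · simpa [hl] using zero
    · exact single hk (I.mul_mem_left _ hy)
  · obtain rfl | hm := eq_or_ne m l
    · simp [hl]
    · exact Matrix.single_mul_single_of_ne _ _ _ _ hm.symm _

lemma single_vecMulVec {v : ι → R} {l : ι} (hl : v l = 0) (hv : ∀ k, v k ∈ I) :
    OneAddElementary I (vecMulVec (Pi.single l 1) v) := by
  have hsum : vecMulVec (Pi.single l 1) v = ∑ k, Matrix.single l k (v k) := by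
    ext i j
    obtain rfl | hi := eq_or_ne i l
    · simp [Matrix.vecMulVec_apply, Matrix.sum_apply, Matrix.single_apply]
    · simp [Matrix.vecMulVec_apply, Matrix.sum_apply, hi, hi.symm]
  rw [hsum]
  refine sum _ (fun k ↦ ?_) fun k m ↦ ?_
  · obtain rfl | hk := eq_or_ne l k
    · simpa [hl] using zero
    · exact single hk (hv k)
  · obtain rfl | hk := eq_or_ne k l
    · simp [hl]
    · exact Matrix.single_mul_single_of_ne _ _ _ _ hk _

end OneAddElementary

end OneAddElementary

section ElementaryEquiv

variable {ι R S : Type*} [Fintype ι] [DecidableEq ι] [CommRing R] [CommRing S]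

/-- Two vectors are elementarily equivalent if they lie in one orbit of the group generated by all
elementary matrices. -/
def ElementaryEquiv (v w : ι → R) : Prop :=
  ∃ σ ∈ elementarySubgroup ι (⊤ : Ideal R), σ • v = w

namespace ElementaryEquiv

lemma refl (v : ι → R) : ElementaryEquiv v v := ⟨1, one_mem _, one_smul _ v⟩

lemma symm {v w : ι → R} (h : ElementaryEquiv v w) : ElementaryEquiv w v := by
  obtain ⟨σ, hσ, rfl⟩ := h
  exact ⟨σ⁻¹, inv_mem hσ, inv_smul_smul σ v⟩

lemma trans {u v w : ι → R} (h : ElementaryEquiv u v) (h' : ElementaryEquiv v w) :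
    ElementaryEquiv u w := by
  obtain ⟨σ, hσ, rfl⟩ := h
  obtain ⟨τ, hτ, rfl⟩ := h'
  exact ⟨τ * σ, mul_mem hτ hσ, mul_smul τ σ u⟩

lemma map (f : R →+* S) {v w : ι → R} (h : ElementaryEquiv v w) :
    ElementaryEquiv (f ∘ v) (f ∘ w) := by
  obtain ⟨σ, hσ, rfl⟩ := h
  exact ⟨Matrix.SpecialLinearGroup.map f σ, map_mem_elementarySubgroup f hσ, map_smul_comp f σ v⟩

lemma of_oneAddElementary {I : Ideal R} {N : Matrix ι ι R} (hN : OneAddElementary I N)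
    (v : ι → R) : ElementaryEquiv v (v + N.mulVec v) := by
  obtain ⟨σ, hσ, hσN⟩ := hN
  refine ⟨σ, elementarySubgroup_mono le_top hσ, ?_⟩
  rw [Matrix.SpecialLinearGroup.smul_def, hσN, Matrix.smul_eq_mulVec, Matrix.add_mulVec,
    Matrix.one_mulVec]

lemma add_smul {i : ι} {c : ι → R} (hc : c i = 0) (v : ι → R) :
    ElementaryEquiv v (v + v i • c) := by
  convert of_oneAddElementary (.vecMulVec_single hc (y := 1) (I := ⊤) Submodule.mem_top) v using 2
  simp [Matrix.vecMulVec_mulVec, -smul_eq_mul]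

lemma add_single_dotProduct {i : ι} {c : ι → R} (hc : c i = 0) (v : ι → R) :
    ElementaryEquiv v (v + Pi.single i (c ⬝ᵥ v)) := by
  convert of_oneAddElementary (.single_vecMulVec hc (I := ⊤) fun _ ↦ Submodule.mem_top) v using 2
  ext j
  simp [Matrix.vecMulVec_mulVec, Pi.single_apply]

lemma single_of_apply_eq_one {v : ι → R} {i : ι} (h : v i = 1) (j : ι) :
    ElementaryEquiv v (Pi.single j 1) := by
  have clear {w : ι → R} {k : ι} (hk : w k = 1) : ElementaryEquiv w (Pi.single k 1) := by
    convert add_smul (i := k) (c := Pi.single k 1 - w) (by simp [hk]) w using 1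
    simp [hk]
  refine (clear h).trans ?_
  obtain rfl | hij := eq_or_ne i j
  · exact refl _
  · refine (add_smul (i := i) (c := Pi.single j 1) (by simp [hij]) _).trans (clear ?_)
    simp [hij]

lemma single_of_dotProduct_eq_one {u v : ι → R} {i : ι} (hu : u i = 0) (h : u ⬝ᵥ v = 1) (j : ι) :
    ElementaryEquiv v (Pi.single j 1) := by
  refine (add_single_dotProduct (i := i) (c := (1 - v i) • u) (by simp [hu]) v).trans
    (single_of_apply_eq_one (i := i) ?_ j)
  simp [h]

end ElementaryEquiv

/-- A vector is unimodular if its entries generate the unit ideal. -/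
def IsUnimodular {ι R : Type*} [Fintype ι] [CommRing R] (v : ι → R) : Prop :=
  ∃ u : ι → R, u ⬝ᵥ v = 1

namespace IsUnimodular

lemma map {ι R S : Type*} [Fintype ι] [CommRing R] [CommRing S] (f : R →+* S) {v : ι → R}
    (h : IsUnimodular v) : IsUnimodular (f ∘ v) := by
  obtain ⟨u, hu⟩ := h
  exact ⟨f ∘ u, by rw [← f.map_dotProduct, hu, map_one]⟩

lemma congr {v w : ι → R} (h : IsUnimodular v) (hvw : ElementaryEquiv v w) : IsUnimodular w := by
  obtain ⟨u, hu⟩ := h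
  obtain ⟨σ, -, rfl⟩ := hvw
  refine ⟨Matrix.vecMul u (σ⁻¹ : SpecialLinearGroup ι R), ?_⟩
  rw [← Matrix.dotProduct_mulVec, ← Matrix.smul_eq_mulVec, ← Matrix.SpecialLinearGroup.smul_def,
    inv_smul_smul, hu]

lemma single (i : ι) : IsUnimodular (Pi.single i (1 : R)) := ⟨Pi.single i 1, by simp⟩

end IsUnimodular

/-- `E(ι, R)` acts transitively on the unimodular vectors over `R`. -/
def ElementaryTransitive (ι : Type*) [Fintype ι] [DecidableEq ι] (R : Type*) [CommRing R] : Prop :=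
  ∀ v : ι → R, IsUnimodular v → ∀ i, ElementaryEquiv v (Pi.single i 1)

namespace ElementaryTransitive

lemma of_ringEquiv (e : R ≃+* S) (h : ElementaryTransitive ι R) : ElementaryTransitive ι S := by
  intro v hv i
  have h' := (h _ (hv.map (e.symm : S →+* R)) i).map (e : R →+* S)
  rw [comp_single_one] at h'
  convert h' using 1
  ext j
  simp

lemma of_subsingleton [Subsingleton R] : ElementaryTransitive ι R := fun v _ i ↦ by
  rw [Subsingleton.elim v (Pi.single i 1)]
  exact .refl _

end ElementaryTransitive

end ElementaryEquiv

section Dilation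

variable {ι R S : Type*} [Fintype ι] [DecidableEq ι] [CommRing R] [CommRing S] [Algebra R S]

/-- The image in `SL(ι, S)` of the elementary group of the principal ideal `(s)` of `R`. -/
def elementaryImage (ι S : Type*) [Fintype ι] [DecidableEq ι] [CommRing S] [Algebra R S] (s : R) :
    Subgroup (SpecialLinearGroup ι S) :=
  (elementarySubgroup ι (Ideal.span {s})).map (Matrix.SpecialLinearGroup.map (algebraMap R S))

lemma transvection_mem_elementaryImage {s a : R} (h : s ∣ a) {i j : ι} (hij : i ≠ j) :
    transvection hij (algebraMap R S a) ∈ elementaryImage ι S s :=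
  ⟨transvection hij a, transvection_mem_elementarySubgroup hij (Ideal.mem_span_singleton.2 h),
    map_transvection _ hij a⟩

lemma exists_map_eq_of_mem_elementaryImage {s : R} {σ : SpecialLinearGroup ι S}
    (h : σ ∈ elementaryImage ι S s) : ∃ τ ∈ elementarySubgroup ι (⊤ : Ideal R),
      Matrix.SpecialLinearGroup.map (algebraMap R S) τ = σ := by
  obtain ⟨τ, hτ, rfl⟩ := h
  exact ⟨τ, elementarySubgroup_mono le_top hτ, rfl⟩

lemma conj_mem_elementaryImage {γ : SpecialLinearGroup ι S} {s t : R}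
    (h : ∀ (i j : ι) (hij : i ≠ j) (x : R),
      γ * transvection hij (algebraMap R S (t * x)) * γ⁻¹ ∈ elementaryImage ι S s)
    {τ : SpecialLinearGroup ι S} (hτ : τ ∈ elementaryImage ι S t) :
    γ * τ * γ⁻¹ ∈ elementaryImage ι S s := by
  suffices hle : elementaryImage ι S t ≤
      (elementaryImage ι S s).comap (MulAut.conj γ).toMonoidHom from hle hτ
  rw [elementaryImage, Subgroup.map_le_iff_le_comap, elementarySubgroup_le_iff]
  intro i j hij c hc
  obtain ⟨x, rfl⟩ := Ideal.mem_span_singleton.1 hc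
  rw [Subgroup.mem_comap, Subgroup.mem_comap, map_transvection]
  exact h i j hij x

variable {s : R}

section Conjugation

variable {K M n : ℕ} {a : R} {c : S} {p q : ι}

lemma mul_algebraMap_pow_mul (h : c * algebraMap R S s ^ K = algebraMap R S a) (hn : M + K ≤ n)
    (x : R) : c * algebraMap R S (s ^ n * x) =
      algebraMap R S (s ^ M * (s ^ (n - (M + K)) * (a * x))) := by
  obtain ⟨m, rfl⟩ := Nat.exists_eq_add_of_le hn
  rw [Nat.add_sub_cancel_left]
  simp only [map_mul, map_pow, ← h]
  ring

lemma conj_transvection_mem_elementaryImage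
    (h : c * algebraMap R S s ^ K = algebraMap R S a) (hn : M + K ≤ n) (hpq : p ≠ q)
    {i j : ι} (hij : i ≠ j) (hne : ¬(p = j ∧ q = i)) (x : R) :
    transvection hpq c * transvection hij (algebraMap R S (s ^ n * x)) * (transvection hpq c)⁻¹ ∈
      elementaryImage ι S (s ^ M) := by
  have hdvd : s ^ M ∣ s ^ n * x := (pow_dvd_pow s (by omega)).mul_right x
  have hmul := mul_algebraMap_pow_mul h hn x
  obtain rfl | hqi := eq_or_ne q i
  · have hpj : p ≠ j := fun h ↦ hne ⟨h, rfl⟩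
    rw [transvection_conj_left hpq hij hpj, hmul]
    exact mul_mem (transvection_mem_elementaryImage hdvd _)
      (transvection_mem_elementaryImage (dvd_mul_right _ _) _)
  · obtain rfl | hpj := eq_or_ne p j
    · rw [transvection_conj_right hij hpq hqi.symm, mul_comm _ c, hmul, ← map_neg]
      exact mul_mem (transvection_mem_elementaryImage hdvd _)
        (transvection_mem_elementaryImage (dvd_mul_right _ _).neg_right _)
    · rw [(transvection_commute hpq hij hqi hpj.symm c _).eq, mul_inv_cancel_right]
      exact transvection_mem_elementaryImage hdvd _

end Conjugation

variable (s) [IsLocalization.Away s S]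

/- An opposite root is the case not covered by `conj_transvection_mem_elementaryImage`; writing the
second transvection as a commutator through a third index reduces to the other cases. -/
lemma exists_conj_transvection_mem_elementaryImage (hι : 3 ≤ Fintype.card ι)
    {p q : ι} (hpq : p ≠ q) (c : S) (M : ℕ) : ∃ N, ∀ (i j : ι) (hij : i ≠ j) (x : R),
      transvection hpq c * transvection hij (algebraMap R S (s ^ N * x)) * (transvection hpq c)⁻¹ ∈
        elementaryImage ι S (s ^ M) := by
  obtain ⟨K, a, h⟩ := IsLocalization.Away.surj s c
  refine ⟨(M + K) + (M + K), fun i j hij x ↦ ?_⟩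
  by_cases hne : p = j ∧ q = i
  · obtain ⟨rfl, rfl⟩ := hne
    obtain ⟨l, hlp, hlq⟩ := exists_ne_ne hι p q
    rw [show s ^ (M + K + (M + K)) * x = (s ^ (M + K) * 1) * (s ^ (M + K) * x) by ring, map_mul,
      transvection_eq_commutator hlq.symm hlp hij,
      ← MulAut.conj_apply, map_commutatorElement]
    have hleft := conj_transvection_mem_elementaryImage h (le_refl (M + K)) hpq hlq.symm
      (fun h ↦ hlp h.1.symm) 1
    have hright := conj_transvection_mem_elementaryImage h (le_refl (M + K)) hpq hlp
      (fun h ↦ hlq h.2.symm) x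
    exact mul_mem (mul_mem (mul_mem hleft hright) (inv_mem hleft)) (inv_mem hright)
  · exact conj_transvection_mem_elementaryImage h (by omega) hpq hij hne x

lemma exists_conj_mem_elementaryImage (hι : 3 ≤ Fintype.card ι) {γ : SpecialLinearGroup ι S}
    (hγ : γ ∈ elementarySubgroup ι (⊤ : Ideal S)) (M : ℕ) :
    ∃ N, ∀ τ ∈ elementaryImage ι S (s ^ N), γ * τ * γ⁻¹ ∈ elementaryImage ι S (s ^ M) := by
  induction hγ using elementarySubgroup_induction generalizing M with
  | one => exact ⟨M, fun τ h ↦ by simpa using h⟩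
  | transvection_mul i j hij c _ σ _ ih =>
    obtain ⟨N, hN⟩ := exists_conj_transvection_mem_elementaryImage s hι hij c M
    obtain ⟨N', hN'⟩ := ih N
    refine ⟨N', fun τ hτ ↦ ?_⟩
    simpa only [mul_inv_rev, mul_assoc] using conj_mem_elementaryImage hN (hN' τ hτ)

lemma exists_eval_sub_eval_eq (g : S[X]) : ∃ K, ∀ (N : ℕ) (a b : R), ∃ q : R,
    g.eval (algebraMap R S (a + s ^ (K + N) * b)) - g.eval (algebraMap R S a) =
      algebraMap R S (s ^ N * q) := by
  obtain ⟨_, ⟨K, rfl⟩, hg⟩ := IsLocalization.integerNormalization_spec (Submonoid.powers s) g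
  set g' := IsLocalization.integerNormalization (Submonoid.powers s) g
  have eval_eq (z : R) :
      algebraMap R S (s ^ K) * g.eval (algebraMap R S z) = algebraMap R S (g'.eval z) := by
    rw [← Polynomial.eval_map_apply, hg, Polynomial.eval_smul, Algebra.smul_def]
  refine ⟨K, fun N a b ↦ ?_⟩
  obtain ⟨q, hq⟩ := g'.sub_dvd_eval_sub (a + s ^ (K + N) * b) a
  refine ⟨b * q, ((IsLocalization.Away.algebraMap_isUnit s).pow K).mul_left_cancel ?_⟩
  rw [← map_pow, mul_sub, eval_eq, eval_eq, ← map_sub, hq, ← map_mul]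
  congr 1
  ring

lemma exists_eval_mul_inv_mem_elementaryImage (hι : 3 ≤ Fintype.card ι)
    {σ : SpecialLinearGroup ι S[X]} (hσ : σ ∈ elementarySubgroup ι (⊤ : Ideal S[X])) (a : R)
    (M : ℕ) : ∃ N, ∀ b : R,
      Matrix.SpecialLinearGroup.map
          (Polynomial.evalRingHom (algebraMap R S (a + s ^ N * b))) σ *
        (Matrix.SpecialLinearGroup.map (Polynomial.evalRingHom (algebraMap R S a)) σ)⁻¹ ∈
          elementaryImage ι S (s ^ M) := by
  induction hσ using elementarySubgroup_induction generalizing M with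
  | one => exact ⟨0, fun b ↦ by simp⟩
  | transvection_mul i j hij g _ σ _ ih =>
    set ev : R → SpecialLinearGroup ι S[X] →* SpecialLinearGroup ι S := fun z ↦
      Matrix.SpecialLinearGroup.map (Polynomial.evalRingHom (algebraMap R S z))
    obtain ⟨N₁, h₁⟩ := exists_conj_mem_elementaryImage s hι
      (map_mem_elementarySubgroup (Polynomial.evalRingHom (algebraMap R S a))
        (transvection_mem_elementarySubgroup hij (c := g) Submodule.mem_top)) M
    obtain ⟨N₂, h₂⟩ := ih N₁
    obtain ⟨K, hK⟩ := exists_eval_sub_eval_eq s g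
    refine ⟨K + (M + N₂), fun b ↦ ?_⟩
    have hgen : ev (a + s ^ (K + (M + N₂)) * b) (transvection hij g) *
        (ev a (transvection hij g))⁻¹ ∈ elementaryImage ι S (s ^ M) := by
      obtain ⟨q, hq⟩ := hK (M + N₂) a b
      simp only [ev, map_transvection, transvection_inv, Polynomial.coe_evalRingHom]
      rw [← Matrix.SpecialLinearGroup.transvection_add, ← sub_eq_add_neg, hq]
      exact transvection_mem_elementaryImage
        ((pow_dvd_pow s (Nat.le_add_right M N₂)).mul_right q) hij
    have hconj := h₁ _ (h₂ (s ^ (K + M) * b))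
    rw [show a + s ^ N₂ * (s ^ (K + M) * b) = a + s ^ (K + (M + N₂)) * b by ring] at hconj
    simpa only [ev, map_mul, mul_inv_rev, mul_assoc, inv_mul_cancel_left] using mul_mem hgen hconj

end Dilation

section Splitting

variable {ι : Type*} [Fintype ι] [DecidableEq ι]

lemma exists_elementary_path {R : Type*} [CommRing R] {σ : SpecialLinearGroup ι R}
    (hσ : σ ∈ elementarySubgroup ι (⊤ : Ideal R)) :
    ∃ τ ∈ elementarySubgroup ι (⊤ : Ideal R[X]),
      Matrix.SpecialLinearGroup.map (Polynomial.evalRingHom 0) τ = 1 ∧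
      Matrix.SpecialLinearGroup.map (Polynomial.evalRingHom 1) τ = σ := by
  induction hσ using elementarySubgroup_induction with
  | one => exact ⟨1, one_mem _, by simp, by simp⟩
  | transvection_mul i j hij c _ σ _ ih =>
    obtain ⟨τ, hτ, h0, h1⟩ := ih
    refine ⟨transvection hij (Polynomial.C c * Polynomial.X) * τ,
      mul_mem (transvection_mem_elementarySubgroup hij Submodule.mem_top) hτ, ?_, ?_⟩
    · rw [map_mul, h0, map_transvection]
      simp
    · rw [map_mul, h1, map_transvection]
      simp

/- Join `1` to `σ` by an elementary path `τ(T)`; then `σ = τ(1) τ(c)⁻¹ · τ(c) τ(0)⁻¹`, where `c` is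
close to `0` in the `t`-adic and close to `1` in the `f`-adic sense. -/
lemma exists_map_mul_eq_map (hι : 3 ≤ Fintype.card ι) {R Rf Rt S : Type*}
    [CommRing R] [CommRing Rf] [CommRing Rt] [CommRing S] [Algebra R Rf] [Algebra R Rt]
    [Algebra Rf S] [Algebra Rt S] [Algebra R S] [IsScalarTower R Rf S] [IsScalarTower R Rt S]
    {f t : R} (hft : IsCoprime f t) [IsLocalization.Away (algebraMap R Rf t) S]
    [IsLocalization.Away (algebraMap R Rt f) S] {σ : SpecialLinearGroup ι S}
    (hσ : σ ∈ elementarySubgroup ι (⊤ : Ideal S)) :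
    ∃ ρ ∈ elementarySubgroup ι (⊤ : Ideal Rf), ∃ ρ' ∈ elementarySubgroup ι (⊤ : Ideal Rt),
      Matrix.SpecialLinearGroup.map (algebraMap Rt S) ρ' * σ =
        Matrix.SpecialLinearGroup.map (algebraMap Rf S) ρ := by
  obtain ⟨τ, hτ, h0, h1⟩ := exists_elementary_path hσ
  obtain ⟨M, hM⟩ := exists_eval_mul_inv_mem_elementaryImage (algebraMap R Rf t) hι hτ 0 0
  obtain ⟨N, hN⟩ := exists_eval_mul_inv_mem_elementaryImage (algebraMap R Rt f) hι hτ 1 0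
  obtain ⟨x, y, hxy⟩ := hft.symm.pow (m := M) (n := N)
  obtain ⟨ρ, hρ, eρ⟩ := exists_map_eq_of_mem_elementaryImage (hM (algebraMap R Rf x))
  obtain ⟨ρ', hρ', eρ'⟩ := exists_map_eq_of_mem_elementaryImage (hN (algebraMap R Rt (-y)))
  have hpoint : algebraMap Rt S (1 + algebraMap R Rt f ^ N * algebraMap R Rt (-y)) =
      algebraMap Rf S (0 + algebraMap R Rf t ^ M * algebraMap R Rf x) := by
    rw [← map_one (algebraMap R Rt), zero_add]
    simp only [← map_pow, ← map_mul, ← map_add, ← IsScalarTower.algebraMap_apply]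
    exact congrArg _ (by linear_combination -hxy)
  refine ⟨ρ, hρ, ρ', hρ', ?_⟩
  rw [eρ, eρ', hpoint, map_one, map_zero, h0, h1]
  group

end Splitting

section Descent

variable {ι R S : Type*} [Fintype ι] [DecidableEq ι] [CommRing R] [CommRing S] [Algebra R S]
  {M : Submonoid R} [IsLocalization M S]

/-- The canonical map `R_s → M⁻¹R` for `s ∈ M`. -/
def awayToLocalization (S : Type*) [CommRing S] [Algebra R S] [IsLocalization M S] (s : M) :
    Localization.Away (s : R) →+* S :=
  IsLocalization.Away.lift (s : R) (IsLocalization.map_units S s)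

lemma awayToLocalization_algebraMap (s : M) (a : R) :
    awayToLocalization S s (algebraMap R _ a) = algebraMap R S a :=
  IsLocalization.Away.lift_eq _ _ a

/-- The canonical map `R_s → R_{st}` for `s, t ∈ M`. -/
def awayToAwayMul (s t : M) :
    Localization.Away (s : R) →+* Localization.Away ((s * t : M) : R) :=
  IsLocalization.Away.lift (s : R) <| isUnit_of_dvd_unit (map_dvd _ (dvd_mul_right (s : R) t)) <|
    IsLocalization.Away.algebraMap_isUnit ((s * t : M) : R)

lemma awayToAwayMul_algebraMap (s t : M) (a : R) :
    awayToAwayMul s t (algebraMap R _ a) = algebraMap R _ a :=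
  IsLocalization.Away.lift_eq _ _ a

lemma awayToLocalization_comp_awayToAwayMul (s t : M) :
    (awayToLocalization S (s * t)).comp (awayToAwayMul s t) = awayToLocalization S s := by
  refine IsLocalization.ringHom_ext (Submonoid.powers (s : R)) (RingHom.ext fun a ↦ ?_)
  simp only [RingHom.comp_apply, awayToAwayMul_algebraMap, awayToLocalization_algebraMap]

lemma exists_awayToLocalization_eq (c : S) :
    ∃ (t : M), ∀ s : M, ∃ b, awayToLocalization S (s * t) b = c := by
  obtain ⟨⟨a, t⟩, hat⟩ := IsLocalization.surj M c
  refine ⟨t, fun s ↦ ⟨IsLocalization.mk' _ (s * a)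
    (⟨_, 1, pow_one _⟩ : Submonoid.powers ((s * t : M) : R)), ?_⟩⟩
  refine (IsLocalization.map_units S (s * t)).mul_left_injective ?_
  change _ * algebraMap R S (s * t : M) = _ * algebraMap R S (s * t : M)
  rw [← awayToLocalization_algebraMap (s * t), ← map_mul, IsLocalization.mk'_spec,
    awayToLocalization_algebraMap, awayToLocalization_algebraMap, Submonoid.coe_mul, map_mul,
    map_mul, mul_left_comm, hat]

lemma exists_map_awayToLocalization_eq {σ : SpecialLinearGroup ι S}
    (hσ : σ ∈ elementarySubgroup ι (⊤ : Ideal S)) :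
    ∃ s : M, ∃ τ ∈ elementarySubgroup ι (⊤ : Ideal (Localization.Away (s : R))),
      Matrix.SpecialLinearGroup.map (awayToLocalization S s) τ = σ := by
  induction hσ using elementarySubgroup_induction with
  | one => exact ⟨1, 1, one_mem _, map_one _⟩
  | transvection_mul i j hij c _ σ _ ih =>
    obtain ⟨s, τ, hτ, rfl⟩ := ih
    obtain ⟨t, ht⟩ := exists_awayToLocalization_eq (M := M) c
    obtain ⟨b, rfl⟩ := ht s
    refine ⟨s * t, transvection hij b * Matrix.SpecialLinearGroup.map (awayToAwayMul s t) τ,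
      mul_mem (transvection_mem_elementarySubgroup hij Submodule.mem_top)
        (map_mem_elementarySubgroup _ hτ), ?_⟩
    rw [map_mul, map_transvection, ← awayToLocalization_comp_awayToAwayMul (S := S) s t]
    congr 1

lemma exists_mul_eq_of_awayToLocalization_eq {s : M} {b c : Localization.Away (s : R)}
    (h : awayToLocalization S s b = awayToLocalization S s c) :
    ∃ t : M, algebraMap R _ (t : R) * b = algebraMap R _ (t : R) * c := by
  obtain ⟨K, a, ha⟩ := IsLocalization.Away.surj (s : R) (b - c)
  have ha0 : algebraMap R S a = 0 := by
    rw [← awayToLocalization_algebraMap s, ← ha, map_mul, map_sub, h, sub_self, zero_mul]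
  obtain ⟨m, hm⟩ := (IsLocalization.map_eq_zero_iff M S a).1 ha0
  refine ⟨m * s ^ K, sub_eq_zero.1 ?_⟩
  rw [← mul_sub, Submonoid.coe_mul, map_mul, mul_assoc, SubmonoidClass.coe_pow, map_pow,
    mul_comm _ (b - c), ha, ← map_mul, hm, map_zero]

lemma exists_awayToAwayMul_comp_eq {κ : Type*} [Finite κ] {s : M}
    {v w : κ → Localization.Away (s : R)}
    (h : awayToLocalization S s ∘ v = awayToLocalization S s ∘ w) :
    ∃ t : M, awayToAwayMul s t ∘ v = awayToAwayMul s t ∘ w := by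
  cases nonempty_fintype κ
  choose m hm using fun k ↦ exists_mul_eq_of_awayToLocalization_eq (congrFun h k)
  refine ⟨∏ k, m k, funext fun k ↦ ?_⟩
  set t := ∏ k, m k
  have hunit : IsUnit (algebraMap R (Localization.Away ((s * t : M) : R)) (m k)) := by
    refine isUnit_of_dvd_unit (map_dvd _ ?_)
      (IsLocalization.Away.algebraMap_isUnit ((s * t : M) : R))
    exact map_dvd M.subtype ((Finset.dvd_prod_of_mem m (Finset.mem_univ k)).mul_left s)
  refine hunit.mul_left_cancel ?_
  simpa only [map_mul, awayToAwayMul_algebraMap, Function.comp_apply] using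
    congrArg (awayToAwayMul s t) (hm k)

lemma ElementaryEquiv.exists_away {v w : ι → R}
    (h : ElementaryEquiv (algebraMap R S ∘ v) (algebraMap R S ∘ w)) (M : Submonoid R)
    [IsLocalization M S] : ∃ s ∈ M, ElementaryEquiv
      (algebraMap R (Localization.Away s) ∘ v) (algebraMap R (Localization.Away s) ∘ w) := by
  obtain ⟨σ, hσ, hσv⟩ := h
  obtain ⟨s, τ, hτ, rfl⟩ := exists_map_awayToLocalization_eq (M := M) hσ
  have comp_eq (u : ι → R) :
      awayToLocalization S s ∘ (algebraMap R (Localization.Away (s : R)) ∘ u) =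
        algebraMap R S ∘ u :=
    funext fun k ↦ awayToLocalization_algebraMap s (u k)
  rw [← comp_eq, ← comp_eq, map_smul_comp] at hσv
  obtain ⟨t, ht⟩ := exists_awayToAwayMul_comp_eq hσv
  have comp_eq' (u : ι → R) : awayToAwayMul s t ∘ (algebraMap R (Localization.Away (s : R)) ∘ u) =
      algebraMap R (Localization.Away ((s * t : M) : R)) ∘ u :=
    funext fun k ↦ awayToAwayMul_algebraMap s t (u k)
  refine ⟨(s * t : M), (s * t).2, _, map_mem_elementarySubgroup (awayToAwayMul s t) hτ, ?_⟩
  rw [← comp_eq', ← comp_eq', map_smul_comp, ht]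

end Descent

section MonicEntry

variable {ι R : Type*} [CommRing R]

lemma coeff_mem_leadingCoeffNth {I : Ideal R[X]} {f : R[X]} (hf : f.Monic) (hfI : f ∈ I) {n : ℕ}
    (hfn : f.natDegree = n + 1) {p : R[X]} (hp : p ∈ I) (hpn : p.degree ≤ n) (t : ℕ) :
    p.coeff t ∈ I.leadingCoeffNth n := by
  have coeff_sub_mem (t : ℕ) (ht : t ≤ n) : ∀ p ∈ I, p.degree ≤ n →
      p.coeff (n - t) ∈ I.leadingCoeffNth n := by
    induction t with
    | zero => exact fun p hp hpn ↦ ⟨p, ⟨Polynomial.mem_degreeLE.2 hpn, hp⟩, rfl⟩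
    | succ t ih =>
      intro p hp hpn
      set q := Polynomial.X * p - Polynomial.C (p.coeff n) * f with hq
      have hqI : q ∈ I := I.sub_mem (I.mul_mem_left _ hp) (I.mul_mem_left _ hfI)
      have hqn : q.degree ≤ n := by
        refine (Polynomial.degree_le_iff_coeff_zero _ _).2 fun k hk ↦ ?_
        obtain ⟨k, rfl⟩ := Nat.exists_eq_succ_of_ne_zero (Nat.ne_zero_of_lt (Nat.cast_lt.1 hk))
        rw [hq, Polynomial.coeff_sub, Polynomial.coeff_X_mul, Polynomial.coeff_C_mul]
        obtain h | rfl := (Nat.lt_succ_iff.1 (Nat.cast_lt.1 hk)).lt_or_eq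
        · rw [(Polynomial.degree_le_iff_coeff_zero _ _).1 hpn k (Nat.cast_lt.2 h),
            f.coeff_eq_zero_of_natDegree_lt (by omega), mul_zero, sub_zero]
        · rw [Nat.succ_eq_add_one, ← hfn, hf.coeff_natDegree, mul_one, sub_self]
      have hmem := ih (by omega) q hqI hqn
      rw [show n - t = n - (t + 1) + 1 by omega, hq, Polynomial.coeff_sub, Polynomial.coeff_X_mul,
        Polynomial.coeff_C_mul] at hmem
      have hpmem : p.coeff n ∈ I.leadingCoeffNth n := ⟨p, ⟨Polynomial.mem_degreeLE.2 hpn, hp⟩, rfl⟩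
      exact (Submodule.sub_mem_iff_left _ (Ideal.mul_mem_right _ _ hpmem)).1 hmem
  obtain ht | ht := le_or_gt t n
  · rw [← Nat.sub_sub_self ht]
    exact coeff_sub_mem (n - t) (n.sub_le t) p hp hpn
  · rw [(Polynomial.degree_le_iff_coeff_zero _ _).1 hpn t (Nat.cast_lt.2 ht)]
    exact zero_mem _

lemma exists_degree_le_coeff_eq_one {f g : R[X]} (hf : f.Monic) {n : ℕ}
    (hfn : f.natDegree = n + 1) (hgn : g.degree ≤ n) {t : ℕ} (ht : IsUnit (g.coeff t)) :
    ∃ a b : R[X], (a * f + b * g).degree ≤ n ∧ (a * f + b * g).coeff n = 1 := by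
  have hmem : g.coeff t ∈ (Ideal.span {f, g}).leadingCoeffNth n :=
    coeff_mem_leadingCoeffNth hf (Ideal.subset_span (by simp)) hfn (Ideal.subset_span (by simp))
      hgn t
  obtain ⟨p, ⟨hpn, hpI⟩, hp⟩ : (1 : R) ∈ (Ideal.span {f, g}).leadingCoeffNth n := by
    rw [Ideal.eq_top_of_isUnit_mem _ hmem ht]
    exact Submodule.mem_top
  obtain ⟨a, b, rfl⟩ := Ideal.mem_span_pair.1 hpI
  exact ⟨a, b, Polynomial.mem_degreeLE.1 hpn, hp⟩

lemma exists_isUnit_coeff [Fintype ι] [IsLocalRing R] {w : ι → R[X]} (hw : IsUnimodular w) {i : ι}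
    (hi : (w i).Monic) (hdeg : (w i).natDegree ≠ 0) :
    ∃ j ≠ i, ∃ t, IsUnit ((w j).coeff t) := by
  classical
  by_contra! hcon
  set q := Polynomial.mapRingHom (IsLocalRing.residue R) with hq
  have hvanish : ∀ j ≠ i, (q ∘ w) j = 0 := fun j hj ↦ Polynomial.ext fun t ↦ by
    rw [Function.comp_apply, hq, Polynomial.coe_mapRingHom, Polynomial.coeff_map,
      Polynomial.coeff_zero, IsLocalRing.residue_eq_zero_iff]
    exact (IsLocalRing.mem_maximalIdeal _).2 (hcon j hj t)
  obtain ⟨u, hu⟩ := hw.map q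
  rw [dotProduct, Finset.sum_eq_single i (fun j _ hj ↦ by rw [hvanish j hj, mul_zero]) (by simp)]
    at hu
  have hone := (hi.map (IsLocalRing.residue R)).isUnit_iff.1 (.of_mul_eq_one_right _ hu)
  rw [← hi.natDegree_map (IsLocalRing.residue R), hone, Polynomial.natDegree_one] at hdeg
  exact hdeg rfl

variable [Fintype ι] [DecidableEq ι]

lemma exists_elementaryEquiv_degree_le [Nontrivial R] {n : ℕ} {v : ι → R[X]} {i : ι}
    (hv : (v i).Monic) (hn : (v i).natDegree = n + 1) :
    ∃ w, ElementaryEquiv v w ∧ w i = v i ∧ ∀ j ≠ i, (w j).degree ≤ n := by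
  set c : ι → R[X] := fun j ↦ if j = i then 0 else -(v j /ₘ v i)
  refine ⟨_, .add_smul (i := i) (c := c) (by simp [c]) v, by simp [c], fun j hj ↦ ?_⟩
  have hmod : (v + v i • c) j = v j %ₘ v i := by
    rw [Polynomial.modByMonic_eq_sub_mul_div]
    simp [c, hj, sub_eq_add_neg]
  rw [hmod, Polynomial.degree_le_iff_coeff_zero]
  intro k hk
  refine Polynomial.coeff_eq_zero_of_degree_lt ((Polynomial.degree_modByMonic_lt _ hv).trans_le ?_)
  refine Polynomial.degree_le_natDegree.trans ?_
  rw [hn]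
  exact_mod_cast Nat.succ_le_of_lt (Nat.cast_lt.1 hk)

lemma exists_elementaryEquiv_monic_of_isUnit_coeff [Nontrivial R] (hι : 3 ≤ Fintype.card ι) {n : ℕ}
    {w : ι → R[X]} {i j : ι} (hji : j ≠ i) (hi : (w i).Monic) (hin : (w i).natDegree = n + 1)
    (hdeg : ∀ k ≠ i, (w k).degree ≤ n) {t : ℕ} (ht : IsUnit ((w j).coeff t)) :
    ∃ w' l, ElementaryEquiv w w' ∧ (w' l).Monic ∧ (w' l).natDegree = n := by
  obtain ⟨l, hli, hlj⟩ := exists_ne_ne hι i j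
  obtain ⟨a, b, hab, hab1⟩ := exists_degree_le_coeff_eq_one hi hin (hdeg j hji) ht
  set e := Polynomial.C (1 - (w l).coeff n) * (a * w i + b * w j) with he
  have hdot : (Polynomial.C (1 - (w l).coeff n) • (Pi.single i a + Pi.single j b)) ⬝ᵥ w = e := by
    rw [smul_dotProduct, add_dotProduct, single_dotProduct, single_dotProduct, smul_eq_mul]
  have hequiv : ElementaryEquiv w (w + Pi.single l e) :=
    hdot ▸ .add_single_dotProduct
      (by simp [Pi.single_eq_of_ne hli, Pi.single_eq_of_ne hlj]) w
  have hn : (w l + e).degree ≤ n :=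
    (Polynomial.degree_add_le _ _).trans (max_le (hdeg l hli)
      ((Polynomial.smul_eq_C_mul (R := R) _ ▸ Polynomial.degree_smul_le _ _).trans hab))
  have hcoeff : (w l + e).coeff n = 1 := by
    rw [Polynomial.coeff_add, he, Polynomial.coeff_C_mul, hab1]
    ring
  refine ⟨_, l, hequiv, ?_, ?_⟩ <;> rw [Pi.add_apply, Pi.single_eq_same]
  · exact Polynomial.monic_of_degree_le n hn hcoeff
  · exact Polynomial.natDegree_eq_of_le_of_coeff_ne_zero (Polynomial.natDegree_le_of_degree_le hn)
      (hcoeff ▸ one_ne_zero)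

lemma elementaryEquiv_single_of_monic_of_isLocalRing [IsLocalRing R] (hι : 3 ≤ Fintype.card ι)
    {v : ι → R[X]} (hv : IsUnimodular v) {i : ι} (hi : (v i).Monic) (k : ι) :
    ElementaryEquiv v (Pi.single k 1) := by
  induction hn : (v i).natDegree generalizing v i with
  | zero => exact .single_of_apply_eq_one (hi.natDegree_eq_zero.1 hn) k
  | succ n ih =>
    obtain ⟨w, hvw, hwi, hdeg⟩ := exists_elementaryEquiv_degree_le hi hn
    rw [← hwi] at hi hn
    obtain ⟨j, hji, t, ht⟩ := exists_isUnit_coeff (hv.congr hvw) hi (by omega)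
    obtain ⟨w', l, hww', hl, hln⟩ :=
      exists_elementaryEquiv_monic_of_isUnit_coeff hι hji hi hn hdeg ht
    exact (hvw.trans hww').trans (ih ((hv.congr hvw).congr hww') hl hln)

end MonicEntry

section QuillenIdeal

variable {ι R : Type*} [CommRing R]

lemma exists_pow_smul_eq [Finite ι] {s : R} {S : Type*} [CommRing S] [Algebra R S]
    [IsLocalization.Away s S] {v w : ι → R} (h : algebraMap R S ∘ v = algebraMap R S ∘ w) :
    ∃ M : ℕ, s ^ M • v = s ^ M • w := by
  cases nonempty_fintype ι
  choose n hn using fun k ↦ IsLocalization.Away.exists_of_eq (S := S) s (congrFun h k)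
  refine ⟨∑ k, n k, funext fun k ↦ ?_⟩
  obtain ⟨q, hq⟩ := pow_dvd_pow s (Finset.single_le_sum_of_canonicallyOrdered (f := n)
    (Finset.mem_univ k))
  rw [Pi.smul_apply, Pi.smul_apply, smul_eq_mul, smul_eq_mul, hq, mul_right_comm, hn,
    mul_right_comm]

/-- Evaluation at `0`, viewed as an endomorphism of `R[X]`. -/
def evalZero (R : Type*) [CommRing R] : R[X] →+* R[X] :=
  Polynomial.C.comp (Polynomial.evalRingHom 0)

lemma evalZero_comp_evalZero : (evalZero R).comp (evalZero R) = evalZero R := by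
  ext <;> simp [evalZero]

lemma exists_eq_X_smul {u : ι → R[X]} (hu : evalZero R ∘ u = 0) :
    ∃ u', u = (Polynomial.X : R[X]) • u' := by
  have hdvd (k : ι) : Polynomial.X ∣ u k := by
    rw [Polynomial.X_dvd_iff, Polynomial.coeff_zero_eq_eval_zero]
    exact Polynomial.C_eq_zero.1 (congrFun hu k)
  choose u' hu' using hdvd
  exact ⟨u', funext hu'⟩

variable [Fintype ι] [DecidableEq ι]

lemma smul_smul_comm (c : R) (σ : SpecialLinearGroup ι R) (v : ι → R) :
    c • (σ • v) = σ • (c • v) :=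
  (Matrix.mulVec_smul (σ : Matrix ι ι R) c v).symm

lemma exists_smul_eq_add_X_smul {c : R} {w : ι → R[X]} {τ : SpecialLinearGroup ι R[X]}
    (hτ : τ ∈ elementarySubgroup ι (⊤ : Ideal R[X]))
    (h : Polynomial.C c • (τ • (evalZero R ∘ w)) = Polynomial.C c • w) :
    ∃ ρ ∈ elementarySubgroup ι (⊤ : Ideal R[X]), ∃ u : ι → R[X],
      ρ • (evalZero R ∘ w) = w + (Polynomial.X : R[X]) • u ∧ Polynomial.C c • u = 0 := by
  have evalZero_smul (v : ι → R[X]) :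
      evalZero R ∘ (Polynomial.C c • v) = Polynomial.C c • (evalZero R ∘ v) :=
    funext fun k ↦ by simp [evalZero]
  have evalZero_comp (v : ι → R[X]) : evalZero R ∘ (evalZero R ∘ v) = evalZero R ∘ v :=
    funext fun k ↦ RingHom.congr_fun evalZero_comp_evalZero (v k)
  set τ₀ := Matrix.SpecialLinearGroup.map (evalZero R) τ with hτ₀
  have map_τ₀ : Matrix.SpecialLinearGroup.map (evalZero R) τ₀ = τ₀ := by
    exact Subtype.ext (Matrix.ext fun i j ↦ RingHom.congr_fun evalZero_comp_evalZero (τ i j))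
  have smul_τ₀ : Polynomial.C c • (τ₀ • (evalZero R ∘ w)) = Polynomial.C c • (evalZero R ∘ w) := by
    rw [← evalZero_smul w, ← h, evalZero_smul, ← map_smul_comp, evalZero_comp]
  have smul_ρ : Polynomial.C c • ((τ * τ₀⁻¹) • (evalZero R ∘ w)) = Polynomial.C c • w := by
    rw [smul_smul_comm, ← smul_τ₀, smul_smul_comm, smul_smul, inv_mul_cancel_right,
      ← smul_smul_comm, h]
  have evalZero_ρ : evalZero R ∘ ((τ * τ₀⁻¹) • (evalZero R ∘ w) - w) = 0 := by
    have : evalZero R ∘ ((τ * τ₀⁻¹) • (evalZero R ∘ w)) = evalZero R ∘ w := by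
      rw [← map_smul_comp, evalZero_comp, map_mul, map_inv, map_τ₀, ← hτ₀, mul_inv_cancel, one_smul]
    funext k
    rw [Function.comp_apply, Pi.sub_apply, map_sub, Pi.zero_apply]
    exact sub_eq_zero.2 (congrFun this k)
  obtain ⟨u, hu⟩ := exists_eq_X_smul evalZero_ρ
  refine ⟨_, mul_mem hτ (inv_mem (map_mem_elementarySubgroup _ hτ)), u,
    (sub_eq_iff_eq_add'.1 hu), ?_⟩
  have hXu : (Polynomial.X : R[X]) • (Polynomial.C c • u) = 0 := by
    rw [smul_comm, ← hu, smul_sub, smul_ρ, sub_self]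
  exact funext fun k ↦ Polynomial.monic_X.isRegular.left (by simpa using congrFun hXu k)

lemma ElementaryEquiv.comp_C_mul_X {c : R} {w : ι → R[X]} {τ : SpecialLinearGroup ι R[X]}
    (hτ : τ ∈ elementarySubgroup ι (⊤ : Ideal R[X]))
    (h : Polynomial.C c • (τ • (evalZero R ∘ w)) = Polynomial.C c • w) :
    ElementaryEquiv (evalZero R ∘ w)
      (Polynomial.compRingHom (Polynomial.C c * Polynomial.X) ∘ w) := by
  obtain ⟨ρ, hρ, u, hu, hcu⟩ := exists_smul_eq_add_X_smul hτ h
  set g := Polynomial.compRingHom (Polynomial.C c * Polynomial.X) with hg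
  refine ⟨_, map_mem_elementarySubgroup g hρ, ?_⟩
  have g_evalZero : g ∘ (evalZero R ∘ w) = evalZero R ∘ w :=
    funext fun k ↦ by simp [hg, evalZero]
  rw [← g_evalZero, map_smul_comp, hu]
  funext k
  have hgu : Polynomial.C c * g (u k) = 0 := by
    have : g (Polynomial.C c * u k) = 0 := (congrArg g (congrFun hcu k)).trans (map_zero g)
    simpa [hg] using this
  simp only [Function.comp_apply, Pi.add_apply, Pi.smul_apply, smul_eq_mul, map_add, map_mul]
  rw [show g Polynomial.X = Polynomial.C c * Polynomial.X by simp [hg], mul_right_comm, hgu,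
    zero_mul, add_zero]

lemma comp_eval₂_comp {κ T U : Type*} [CommRing T] [CommRing U] (φ : T →+* U) (g : R →+* T) (x : T)
    (v : κ → R[X]) :
    φ ∘ (Polynomial.eval₂ g x ∘ v) = Polynomial.eval₂ (φ.comp g) (φ x) ∘ v :=
  funext fun k ↦ Polynomial.hom_eval₂ (v k) g φ x

lemma ElementaryEquiv.eval₂_add {v : ι → R[X]} {b : R}
    (h : ElementaryEquiv
      (Polynomial.eval₂ (algebraMap R R[X][X])
        (Polynomial.C Polynomial.X + algebraMap R R[X][X] b * Polynomial.X) ∘ v)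
      (Polynomial.eval₂ (algebraMap R R[X][X]) (Polynomial.C Polynomial.X) ∘ v))
    {T : Type*} [CommRing T] (g : R →+* T) (x y : T) :
    ElementaryEquiv (Polynomial.eval₂ g (x + g b * y) ∘ v) (Polynomial.eval₂ g x ∘ v) := by
  set φ : R[X][X] →+* T := Polynomial.eval₂RingHom (Polynomial.eval₂RingHom g x) y with hφ
  have hg : φ.comp (algebraMap R R[X][X]) = g := by ext; simp [hφ]
  have hx : φ (Polynomial.C Polynomial.X) = x := by simp [hφ]
  have hy : φ Polynomial.X = y := by simp [hφ]
  have hb : φ (algebraMap R R[X][X] b) = g b := RingHom.congr_fun hg b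
  have := h.map φ
  rwa [comp_eval₂_comp, comp_eval₂_comp, hg, map_add, map_mul, hx, hy, hb] at this

/-- Quillen's ideal of a polynomial row `v`: the `b` for which `v(X + bY)` and `v(X)` are
elementarily equivalent over `R[X][Y]`. -/
def quillenIdeal (v : ι → R[X]) : Ideal R where
  carrier := {b | ElementaryEquiv
    (Polynomial.eval₂ (algebraMap R R[X][X])
      (Polynomial.C Polynomial.X + algebraMap R R[X][X] b * Polynomial.X) ∘ v)
    (Polynomial.eval₂ (algebraMap R R[X][X]) (Polynomial.C Polynomial.X) ∘ v)}
  zero_mem' := by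
    rw [Set.mem_ofPred_eq, map_zero, zero_mul, add_zero]
    exact .refl _
  add_mem' {a b} ha hb := by
    rw [Set.mem_ofPred_eq, map_add, add_mul, ← add_assoc]
    exact (ElementaryEquiv.eval₂_add hb _ _ _).trans ha
  smul_mem' c a ha := by
    rw [Set.mem_ofPred_eq, smul_eq_mul, mul_comm c, map_mul, mul_assoc]
    exact ElementaryEquiv.eval₂_add ha _ _ _

lemma mem_quillenIdeal {v : ι → R[X]} {b : R} : b ∈ quillenIdeal v ↔ ElementaryEquiv
    (Polynomial.eval₂ (algebraMap R R[X][X])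
      (Polynomial.C Polynomial.X + algebraMap R R[X][X] b * Polynomial.X) ∘ v)
    (Polynomial.eval₂ (algebraMap R R[X][X]) (Polynomial.C Polynomial.X) ∘ v) :=
  Iff.rfl

lemma exists_elementary_smul_eq (hι : 3 ≤ Fintype.card ι) {v : ι → R[X]} {s : R[X][X]}
    {S : Type*} [CommRing S] [Algebra R[X][X] S] [IsLocalization.Away s S] {i : ι}
    (h : ElementaryEquiv
      (Polynomial.map ((algebraMap R[X][X] S).comp (algebraMap R R[X][X])) ∘ v) (Pi.single i 1))
    (x : R[X][X]) :
    ∃ N, ∃ τ ∈ elementarySubgroup ι (⊤ : Ideal R[X][X]),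
      algebraMap R[X][X] S ∘ (τ • (Polynomial.eval₂ (algebraMap R R[X][X]) x ∘ v)) =
        algebraMap R[X][X] S ∘
          (Polynomial.eval₂ (algebraMap R R[X][X]) (x + s ^ N * Polynomial.X) ∘ v) := by
  obtain ⟨σ, hσ, hσv⟩ := h.symm
  obtain ⟨N, hN⟩ := exists_eval_mul_inv_mem_elementaryImage s hι hσ x 0
  obtain ⟨τ, hτ, hτσ⟩ := exists_map_eq_of_mem_elementaryImage (hN Polynomial.X)
  have eval_σ (z : R[X][X]) :
      Matrix.SpecialLinearGroup.map (Polynomial.evalRingHom (algebraMap R[X][X] S z)) σ •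
        (Pi.single i 1 : ι → S) =
          algebraMap R[X][X] S ∘ (Polynomial.eval₂ (algebraMap R R[X][X]) z ∘ v) := by
    rw [← comp_single_one (Polynomial.evalRingHom (algebraMap R[X][X] S z)), map_smul_comp, hσv,
      comp_eval₂_comp]
    exact funext fun k ↦ Polynomial.eval_map _ _
  refine ⟨N, τ, hτ, ?_⟩
  rw [← map_smul_comp, hτσ, ← eval_σ, ← eval_σ, smul_smul, inv_mul_cancel_right]

lemma exists_pow_mem_quillenIdeal (hι : 3 ≤ Fintype.card ι) {v : ι → R[X]} {s : R} {i : ι}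
    (h : ElementaryEquiv (algebraMap R[X] (Localization.Away (Polynomial.C s)) ∘ v)
      (Pi.single i 1)) : ∃ N, s ^ N ∈ quillenIdeal v := by
  let S := Localization.Away (Polynomial.C (Polynomial.C s))
  let ψ : R[X] →+* S[X] :=
    Polynomial.mapRingHom ((algebraMap R[X][X] S).comp (algebraMap R R[X][X]))
  have hψ : IsUnit (ψ (Polynomial.C s)) := by
    have : ψ (Polynomial.C s) = Polynomial.C (algebraMap _ S (Polynomial.C (Polynomial.C s))) :=
      Polynomial.map_C _
    rw [this, Polynomial.isUnit_C]
    exact IsLocalization.Away.algebraMap_isUnit (Polynomial.C (Polynomial.C s))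
  have hψv : ElementaryEquiv (ψ ∘ v) (Pi.single i 1) := by
    have := h.map (IsLocalization.Away.lift _ hψ)
    rwa [comp_single_one, ← Function.comp_assoc, ← RingHom.coe_comp,
      IsLocalization.Away.lift_comp] at this
  obtain ⟨N, τ, hτ, hτv⟩ :=
    exists_elementary_smul_eq (s := Polynomial.C (Polynomial.C s)) hι hψv
      (Polynomial.C Polynomial.X)
  set w := Polynomial.eval₂ (algebraMap R R[X][X])
    (Polynomial.C Polynomial.X + Polynomial.C (Polynomial.C s) ^ N * Polynomial.X) ∘ v with hw
  have evalZero_w : evalZero R[X] ∘ w =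
      Polynomial.eval₂ (algebraMap R R[X][X]) (Polynomial.C Polynomial.X) ∘ v := by
    rw [hw, comp_eval₂_comp]
    congr 2
    · ext; simp [evalZero]
    · simp [evalZero]
  rw [← evalZero_w] at hτv
  obtain ⟨M, hM⟩ := exists_pow_smul_eq (s := Polynomial.C (Polynomial.C s)) hτv
  rw [← map_pow] at hM
  refine ⟨N + M, ?_⟩
  have := (ElementaryEquiv.comp_C_mul_X hτ hM).symm
  rw [evalZero_w, hw, comp_eval₂_comp] at this
  have hcomp : (Polynomial.compRingHom (Polynomial.C (Polynomial.C s ^ M) * Polynomial.X)).comp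
      (algebraMap R R[X][X]) = algebraMap R R[X][X] := by
    ext; simp
  have hpoint : Polynomial.compRingHom (Polynomial.C (Polynomial.C s ^ M) * Polynomial.X)
      (Polynomial.C Polynomial.X + Polynomial.C (Polynomial.C s) ^ N * Polynomial.X) =
      Polynomial.C Polynomial.X + algebraMap R R[X][X] (s ^ (N + M)) * Polynomial.X := by
    simp [pow_add, mul_assoc]
  rwa [hcomp, hpoint] at this

lemma quillenIdeal_eq_top (hι : 3 ≤ Fintype.card ι) {v : ι → R[X]} (hv : IsUnimodular v) {i : ι}
    (hi : (v i).Monic) : quillenIdeal v = ⊤ := by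
  by_contra hne
  obtain ⟨m, hm, hle⟩ := Ideal.exists_le_maximal _ hne
  let Rm := Localization.AtPrime m
  let _ : Algebra R[X] Rm[X] := (Polynomial.mapRingHom (algebraMap R Rm)).toAlgebra
  have : IsLocalization (m.primeCompl.map (Polynomial.C : R →+* R[X])) Rm[X] :=
    Polynomial.isLocalization m.primeCompl Rm
  have hlocal : ElementaryEquiv (algebraMap R[X] Rm[X] ∘ v)
      (algebraMap R[X] Rm[X] ∘ Pi.single i 1) := by
    rw [comp_single_one]
    have hi' : ((algebraMap R[X] Rm[X] ∘ v) i).Monic := hi.map (algebraMap R Rm)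
    exact elementaryEquiv_single_of_monic_of_isLocalRing hι (hv.map _) hi' i
  obtain ⟨_, ⟨s, hs, rfl⟩, h⟩ := hlocal.exists_away (m.primeCompl.map Polynomial.C)
  rw [comp_single_one] at h
  obtain ⟨N, hN⟩ := exists_pow_mem_quillenIdeal hι h
  exact hs (hm.isPrime.mem_of_pow_mem N (hle hN))

lemma elementaryEquiv_evalZero_of_monic (hι : 3 ≤ Fintype.card ι) {v : ι → R[X]}
    (hv : IsUnimodular v) {i : ι} (hi : (v i).Monic) : ElementaryEquiv v (evalZero R ∘ v) := by
  have hone : (1 : R) ∈ quillenIdeal v :=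
    quillenIdeal_eq_top hι hv hi ▸ Submodule.mem_top
  convert ElementaryEquiv.eval₂_add (mem_quillenIdeal.1 hone) (Polynomial.C : R →+* R[X]) 0
    Polynomial.X using 1
  · funext k
    simp
  · funext k
    simp [evalZero, Polynomial.coeff_zero_eq_eval_zero]

lemma ElementaryTransitive.elementaryEquiv_single_of_monic (hR : ElementaryTransitive ι R)
    (hι : 3 ≤ Fintype.card ι) {v : ι → R[X]} (hv : IsUnimodular v) {i : ι} (hi : (v i).Monic)
    (j : ι) : ElementaryEquiv v (Pi.single j 1) := by
  refine (elementaryEquiv_evalZero_of_monic hι hv hi).trans ?_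
  have := (hR _ (hv.map (Polynomial.evalRingHom 0)) j).map (Polynomial.C : R →+* R[X])
  rwa [comp_single_one] at this

end QuillenIdeal

section StableRange

variable {R S : Type*} [CommRing R] [CommRing S]

lemma ringKrullDim_quotient_succ_le_of_forall_not_le {I : Ideal R}
    (hI : ∀ p ∈ minimalPrimes R, ¬ I ≤ p) : ringKrullDim (R ⧸ I) + 1 ≤ ringKrullDim R := by
  obtain rfl | htop := eq_or_ne I ⊤
  · rw [ringKrullDim_eq_bot_of_subsingleton, WithBot.bot_add]
    exact bot_le
  have : Nonempty (PrimeSpectrum.zeroLocus (I : Set R)) := by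
    rwa [Set.nonempty_coe_sort, Set.nonempty_iff_ne_empty, ne_eq,
      PrimeSpectrum.zeroLocus_empty_iff_eq_top]
  have : Nontrivial R :=
    have := Ideal.Quotient.nontrivial_iff.2 htop
    (Ideal.Quotient.mk I).domain_nontrivial
  rw [ringKrullDim_quotient, Order.krullDim_eq_iSup_length, ringKrullDim,
    Order.krullDim_eq_iSup_length, ← WithBot.coe_one, ← WithBot.coe_add,
    ENat.iSup_add, WithBot.coe_le_coe, iSup_le_iff]
  intro l
  obtain ⟨p, hp, hpl⟩ := Ideal.exists_minimalPrimes_le (J := l.head.1.asIdeal) bot_le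
  let q : PrimeSpectrum R := ⟨p, hp.1.1⟩
  have hq : q < l.head.1 := lt_of_le_of_ne hpl fun h ↦ hI p hp
    ((PrimeSpectrum.mem_zeroLocus _ _).1 (h ▸ l.head.2))
  let l' : LTSeries (PrimeSpectrum R) := (l.map Subtype.val (Subtype.strictMono_coe _)).cons q hq
  have hlen : l'.length = l.length + 1 := RelSeries.cons_length _ q hq
  calc (l.length : ℕ∞) + 1 = l'.length := by rw [hlen, Nat.cast_succ]
    _ ≤ _ := le_iSup (fun s : LTSeries (PrimeSpectrum R) ↦ (s.length : ℕ∞)) l'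

lemma exists_notMem_isNilpotent_mul {p : Ideal R} (hp : p ∈ minimalPrimes R) {b : R} (hb : b ∈ p) :
    ∃ y ∉ p, IsNilpotent (y * b) := by
  have := hp.1.1
  have hmem : algebraMap R (Localization.AtPrime p) b ∈
      ((⊥ : Ideal R).map (algebraMap R (Localization.AtPrime p))).radical := by
    rw [IsLocalization.AtPrime.radical_map_of_mem_minimalPrimes _ p ⊥ hp]
    exact Ideal.mem_map_of_mem _ hb
  obtain ⟨n, hn⟩ := hmem
  rw [Ideal.map_bot, Ideal.mem_bot, ← map_pow] at hn
  obtain ⟨y, hy⟩ := (IsLocalization.map_eq_zero_iff p.primeCompl _ _).1 hn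
  refine ⟨y, y.2, n + 1, ?_⟩
  calc (y * b) ^ (n + 1) = y ^ n * b * (y * b ^ n) := by ring
    _ = 0 := by rw [hy, mul_zero]

/-- The boundary ideal of `b` (Heitmann, Lombardi–Quitté): no minimal prime contains it, so
quotienting by it lowers the Krull dimension. -/
def krullBoundary (b : R) : Ideal R :=
  Ideal.span {b} ⊔ (nilradical R).colon {b}

lemma ringKrullDim_quotient_krullBoundary_succ_le (b : R) :
    ringKrullDim (R ⧸ krullBoundary b) + 1 ≤ ringKrullDim R := by
  refine ringKrullDim_quotient_succ_le_of_forall_not_le fun p hp hle ↦ ?_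
  obtain ⟨y, hy, hyb⟩ := exists_notMem_isNilpotent_mul hp
    (hle (Ideal.mem_sup_left (Ideal.mem_span_singleton_self b)))
  exact hy (hle (Ideal.mem_sup_right (Submodule.mem_colon_singleton.2 hyb)))

lemma exists_mem_of_sup_krullBoundary_eq_top {I : Ideal R} {b : R} (h : I ⊔ krullBoundary b = ⊤) :
    ∃ y, ∀ y', Associated y' y → ∀ p : Ideal R, p.IsPrime → I ≤ p → ∀ a, b + a * y' ∈ p →
      a ∈ p ∧ b ∈ p := by
  obtain ⟨c, hc, z, hz, hcz⟩ := Submodule.mem_sup.1 (h ▸ Submodule.mem_top : (1 : R) ∈ _)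
  obtain ⟨b', hb', y, hy, rfl⟩ := Submodule.mem_sup.1 hz
  refine ⟨y, fun y' hyy' p hp hIp a hay ↦ ?_⟩
  have hmem : y' ∈ p ↔ y ∈ p := p.mem_iff_of_associated hyy'
  have hyp : y ∉ p := fun hyp ↦ by
    have hbp : b ∈ p := by
      have := p.sub_mem hay (p.mul_mem_left a (hmem.2 hyp))
      rwa [add_sub_cancel_right] at this
    refine hp.ne_top ((Ideal.eq_top_iff_one p).2 (hcz ▸ p.add_mem (hIp hc) (p.add_mem ?_ hyp)))
    exact (Ideal.span_singleton_le_iff_mem p).2 hbp hb'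
  have hyb : y * b ∈ p := nilradical_le_prime p (Submodule.mem_colon_singleton.1 hy)
  have hbp : b ∈ p := (hp.mem_or_mem hyb).resolve_left hyp
  refine ⟨(hp.mem_or_mem ((p.add_mem_iff_right hbp).1 hay)).resolve_right fun h ↦ hyp (hmem.1 h),
    hbp⟩

lemma isUnimodular_iff_forall_isPrime {ι : Type*} [Fintype ι] {v : ι → R} :
    IsUnimodular v ↔ ∀ p : Ideal R, p.IsPrime → ∃ i, v i ∉ p := by
  have : IsUnimodular v ↔ Ideal.span (Set.range v) = ⊤ := by
    rw [Ideal.eq_top_iff_one, Ideal.mem_span_range_iff_exists_fun]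
    rfl
  rw [this]
  constructor
  · intro h p hp
    by_contra! hmem
    exact hp.ne_top (top_le_iff.1 (h ▸ Ideal.span_le.2 (Set.range_subset_iff.2 hmem)))
  · intro h
    by_contra hne
    obtain ⟨m, hm, hle⟩ := Ideal.exists_le_maximal _ hne
    obtain ⟨i, hi⟩ := h m hm.isPrime
    exact hi (hle (Ideal.subset_span ⟨i, rfl⟩))

lemma exists_associated_comp_mk {g : R →+* S} (hg : ∀ y, ∃ b, Associated (g b) y) (I : Ideal S)
    (z : S ⧸ I) : ∃ b, Associated ((Ideal.Quotient.mk I).comp g b) z := by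
  obtain ⟨y, rfl⟩ := Ideal.Quotient.mk_surjective z
  obtain ⟨b, hb⟩ := hg y
  exact ⟨b, hb.map (Ideal.Quotient.mk I)⟩

lemma span_sup_eq_top_of_isUnimodular_mk {ι : Type*} [Fintype ι] {I : Ideal R} {w : ι → R}
    (hw : IsUnimodular (Ideal.Quotient.mk I ∘ w)) : Ideal.span (Set.range w) ⊔ I = ⊤ := by
  obtain ⟨u, hu⟩ := hw
  choose u' hu' using fun i ↦ Ideal.Quotient.mk_surjective (u i)
  obtain rfl : Ideal.Quotient.mk I ∘ u' = u := funext hu'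
  rw [← RingHom.map_dotProduct, ← map_one (Ideal.Quotient.mk I), Ideal.Quotient.eq] at hu
  rw [Ideal.eq_top_iff_one, ← sub_sub_cancel (u' ⬝ᵥ w) 1]
  refine Ideal.sub_mem _ (Ideal.mem_sup_left ?_) (Ideal.mem_sup_right hu)
  exact Ideal.sum_mem _ fun i _ ↦ Ideal.mul_mem_left _ _ (Ideal.subset_span ⟨i, rfl⟩)

lemma exists_isUnimodular_snoc {n : ℕ} {g : R →+* S} (hg : ∀ y, ∃ b, Associated (g b) y)
    {v : Fin (n + 2) → R} (hv : IsUnimodular (g ∘ v)) {x : Fin n → R}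
    (hx : IsUnimodular (Ideal.Quotient.mk (krullBoundary (g (v (Fin.last (n + 1))))) ∘
      fun i ↦ g (v i.castSucc.succ + v 0 * x i))) :
    ∃ y, IsUnimodular fun i ↦ g (v i.succ + v 0 * (Fin.snoc x y : Fin (n + 1) → R) i) := by
  obtain ⟨y, hy⟩ := exists_mem_of_sup_krullBoundary_eq_top (span_sup_eq_top_of_isUnimodular_mk hx)
  obtain ⟨y', hy'⟩ := hg y
  refine ⟨y', isUnimodular_iff_forall_isPrime.2 fun p hp ↦ ?_⟩
  by_contra! hmem
  have hinit (i : Fin n) : g (v i.castSucc.succ + v 0 * x i) ∈ p := by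
    simpa only [Fin.snoc_castSucc] using hmem i.castSucc
  obtain ⟨h0, hlast⟩ := hy _ hy' p hp
    (Ideal.span_le.2 (Set.range_subset_iff.2 hinit)) (g (v 0)) (by
      simpa only [Fin.snoc_last, Fin.succ_last, map_add, map_mul] using hmem (Fin.last n))
  obtain ⟨i, hi⟩ := isUnimodular_iff_forall_isPrime.1 hv p hp
  refine hi ?_
  induction i using Fin.cases with
  | zero => exact h0
  | succ i =>
    induction i using Fin.lastCases with
    | last => exact hlast
    | cast i =>
      have := hinit i
      rw [map_add, map_mul] at this
      exact (p.add_mem_iff_left (p.mul_mem_right _ h0)).1 this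

-- Bass's stable range theorem; `g` stands for a localization followed by a quotient map.
lemma exists_isUnimodular_add_mul {n : ℕ} (g : R →+* S) (hg : ∀ y, ∃ b, Associated (g b) y)
    (hS : ringKrullDim S < n) (v : Fin (n + 1) → R) (hv : IsUnimodular (g ∘ v)) :
    ∃ x : Fin n → R, IsUnimodular (fun i ↦ g (v i.succ + v 0 * x i)) := by
  induction n generalizing S with
  | zero =>
    have : Subsingleton S := by
      by_contra h
      rw [not_subsingleton_iff_nontrivial] at h
      exact absurd (ringKrullDim_nonneg_of_nontrivial (R := S)) (not_le.2 (by simpa using hS))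
    exact ⟨Fin.elim0, 0, Subsingleton.elim _ _⟩
  | succ n ih =>
    set b := g (v (Fin.last (n + 1)))
    set π := Ideal.Quotient.mk (krullBoundary b)
    have hdim : ringKrullDim (S ⧸ krullBoundary b) < n := by
      have := (ringKrullDim_quotient_krullBoundary_succ_le b).trans_lt hS
      refine not_le.1 fun h ↦ absurd this (not_lt.2 ?_)
      push_cast
      gcongr
    have hπb : π b = 0 :=
      Ideal.Quotient.eq_zero_iff_mem.2 (Ideal.mem_sup_left (Ideal.mem_span_singleton_self b))
    have hinit : IsUnimodular (π.comp g ∘ Fin.init v) := by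
      refine isUnimodular_iff_forall_isPrime.2 fun p hp ↦ ?_
      obtain ⟨i, hi⟩ := isUnimodular_iff_forall_isPrime.1 (hv.map π) p hp
      obtain ⟨i, rfl⟩ | rfl := i.eq_castSucc_or_eq_last
      · exact ⟨i, hi⟩
      · exact absurd (show π b ∈ p from hπb ▸ p.zero_mem) hi
    obtain ⟨x, hx⟩ := ih (π.comp g) (exists_associated_comp_mk hg _) hdim _ hinit
    exact ⟨_, (exists_isUnimodular_snoc hg hv hx).choose_spec⟩

lemma exists_elementaryEquiv_isUnimodular_tail {n : ℕ} (g : R →+* S)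
    (hg : ∀ y, ∃ b, Associated (g b) y) (hS : ringKrullDim S < n) {v : Fin (n + 1) → R}
    (hv : IsUnimodular v) :
    ∃ v', ElementaryEquiv v v' ∧ v' 0 = v 0 ∧ IsUnimodular (g ∘ Fin.tail v') := by
  obtain ⟨x, hx⟩ := exists_isUnimodular_add_mul g hg hS v (hv.map g)
  refine ⟨_, ElementaryEquiv.add_smul (i := 0) (c := Fin.cons 0 x) (Fin.cons_zero _ _) v, ?_, ?_⟩
  · simp
  · exact hx

lemma elementaryTransitive_of_ringKrullDim_lt {n : ℕ} (hR : ringKrullDim R < n) :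
    ElementaryTransitive (Fin (n + 1)) R := by
  intro v hv j
  obtain ⟨v', hvv', -, c, hc⟩ :=
    exists_elementaryEquiv_isUnimodular_tail (RingHom.id R) (fun y ↦ ⟨y, .refl y⟩) hR hv
  refine hvv'.trans (.single_of_dotProduct_eq_one (i := 0) (u := Fin.cons 0 c) (Fin.cons_zero _ _)
    ?_ j)
  rw [dotProduct, Fin.sum_univ_succ]
  simpa [dotProduct, Fin.tail] using hc

end StableRange

section LeadingCoeffLocalization

variable {R L : Type*} [CommRing R] [CommRing L]

/-- The polynomials whose leading coefficient lies in `S`. Inverting them in `R[X]` produces a ring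
of the same Krull dimension as `S⁻¹R`, which generalizes the ring `R(X)`. -/
def leadingCoeffSubmonoid (S : Submonoid R) (h0 : (0 : R) ∉ S) : Submonoid R[X] where
  carrier := {f | f.leadingCoeff ∈ S}
  one_mem' := by
    have : Nontrivial R := nontrivial_of_ne 0 1 fun h ↦ h0 (h ▸ S.one_mem)
    simp [S.one_mem]
  mul_mem' {f g} hf hg := by
    have hfg := S.mul_mem hf hg
    rw [← Polynomial.leadingCoeff_mul' fun h ↦ h0 (h ▸ hfg)] at hfg
    exact hfg

variable {S : Submonoid R} {h0 : (0 : R) ∉ S}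

lemma mem_leadingCoeffSubmonoid {f : R[X]} :
    f ∈ leadingCoeffSubmonoid S h0 ↔ f.leadingCoeff ∈ S := Iff.rfl

lemma zero_notMem_leadingCoeffSubmonoid : (0 : R[X]) ∉ leadingCoeffSubmonoid S h0 := by
  rwa [mem_leadingCoeffSubmonoid, Polynomial.leadingCoeff_zero]

lemma map_C_le_leadingCoeffSubmonoid : S.map Polynomial.C ≤ leadingCoeffSubmonoid S h0 := by
  rintro _ ⟨s, hs, rfl⟩
  rwa [mem_leadingCoeffSubmonoid, Polynomial.leadingCoeff_C]

lemma degree_mul_C_le (f : R[X]) (a : R) : (f * Polynomial.C a).degree ≤ f.degree :=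
  (Polynomial.degree_mul_le_of_le le_rfl Polynomial.degree_C_le).trans (add_zero _).le

lemma exists_map_eq_mul_C [Algebra R L] [Nontrivial L] {f : L[X]} (hf : f.Monic) {h : R[X]} {s : R}
    (hs : h.map (algebraMap R L) = f * Polynomial.C (algebraMap R L s)) :
    ∃ r : R[X], r.degree < f.natDegree ∧ (Polynomial.C s * Polynomial.X ^ f.natDegree + r).map
      (algebraMap R L) = h.map (algebraMap R L) := by
  set a := algebraMap R L
  have hmap : (h - Polynomial.C s * Polynomial.X ^ f.natDegree).map a =
      f.eraseLead * Polynomial.C (a s) := by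
    rw [← Polynomial.self_sub_C_mul_X_pow, hf.leadingCoeff, Polynomial.map_sub, hs]
    simp only [Polynomial.map_mul, Polynomial.map_C, Polynomial.map_pow, Polynomial.map_X, map_one]
    ring
  obtain ⟨r, hr, hdeg⟩ := Polynomial.exists_degree_eq_of_mem_lifts
    ((Polynomial.mem_lifts _).2 ⟨_, hmap⟩)
  refine ⟨r, ?_, ?_⟩
  · rw [hdeg, ← Polynomial.degree_eq_natDegree hf.ne_zero]
    exact (degree_mul_C_le _ _).trans_lt (Polynomial.degree_eraseLead_lt hf.ne_zero)
  · rw [Polynomial.map_add, hr, ← hmap, ← Polynomial.map_add, add_sub_cancel]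

lemma exists_mem_leadingCoeffSubmonoid_of_monic [Algebra R L] [IsLocalization S L] {I : Ideal R[X]}
    {f : L[X]} (hf : f.Monic) (hfI : f ∈ I.map (Polynomial.mapRingHom (algebraMap R L))) :
    ∃ h ∈ I, h ∈ leadingCoeffSubmonoid S h0 := by
  let _ : Algebra R[X] L[X] := (Polynomial.mapRingHom (algebraMap R L)).toAlgebra
  have : IsLocalization (S.map (Polynomial.C : R →+* R[X])) L[X] := Polynomial.isLocalization S L
  have : Nontrivial L :=
    not_subsingleton_iff_nontrivial.1 (mt (IsLocalization.subsingleton_iff (M := S)).1 h0)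
  obtain ⟨⟨⟨h, hI⟩, ⟨_, s, hs, rfl⟩⟩, hfs⟩ :=
    (IsLocalization.mem_map_algebraMap_iff (S.map (Polynomial.C : R →+* R[X])) L[X]).1 hfI
  obtain ⟨r, hr, hrh⟩ := exists_map_eq_mul_C (h := h) (s := s) hf
    (hfs.symm.trans (by congr 1; exact Polynomial.map_C _))
  obtain ⟨⟨_, t, ht, rfl⟩, htr⟩ := IsLocalization.exists_of_eq
    (M := S.map (Polynomial.C : R →+* R[X])) (S := L[X]) hrh
  refine ⟨Polynomial.C t * h, I.mul_mem_left _ hI, ?_⟩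
  have hts := S.mul_mem ht hs
  have hlead : Polynomial.C t * h =
      r * Polynomial.C t + Polynomial.C (t * s) * Polynomial.X ^ f.natDegree := by
    rw [← show Polynomial.C t * _ = Polynomial.C t * h from htr, map_mul]
    ring
  have hdeg : (r * Polynomial.C t).degree <
      (Polynomial.C (t * s) * Polynomial.X ^ f.natDegree).degree := by
    rw [Polynomial.degree_C_mul_X_pow _ fun h ↦ h0 (h ▸ hts)]
    exact (degree_mul_C_le _ _).trans_lt hr
  rwa [mem_leadingCoeffSubmonoid, hlead, Polynomial.leadingCoeff_add_of_degree_lt hdeg,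
    Polynomial.leadingCoeff_C_mul_X_pow]

lemma exists_monic_mem_of_isMaximal_comap_C (q : Ideal R[X]) [hq : q.IsMaximal]
    (hp : (q.comap (Polynomial.C : R →+* R[X])).IsMaximal) : ∃ f ∈ q, f.Monic := by
  set p := q.comap (Polynomial.C : R →+* R[X])
  let _ : Field (R ⧸ p) := Ideal.Quotient.field p
  let π : R[X] →+* (R ⧸ p)[X] := Polynomial.mapRingHom (Ideal.Quotient.mk p)
  have hπ : Function.Surjective π := Polynomial.map_surjective _ Ideal.Quotient.mk_surjective
  have hker : RingHom.ker π ≤ q := by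
    rw [Polynomial.ker_mapRingHom, Ideal.mk_ker, Ideal.map_le_iff_le_comap]
  obtain ⟨f, hf, hf0⟩ : ∃ f ∈ q, π f ≠ 0 := by
    by_contra! hzero
    have hkerq : RingHom.ker π = q := le_antisymm hker hzero
    have hfield : IsField (R[X] ⧸ RingHom.ker π) :=
      (Ideal.Quotient.maximal_ideal_iff_isField_quotient _).1 (hkerq ▸ hq)
    exact Polynomial.not_isField _
      (MulEquiv.isField hfield (RingHom.quotientKerEquivOfSurjective hπ).symm.toMulEquiv)
  obtain ⟨c, hc⟩ := hπ (Polynomial.C (π f).leadingCoeff⁻¹)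
  have hmonic : (π (f * c)).Monic := by
    rw [map_mul, hc]
    exact Polynomial.monic_mul_leadingCoeff_inv hf0
  obtain ⟨g, hg, -, hgm⟩ :=
    Polynomial.lifts_and_degree_eq_and_monic ((Polynomial.mem_lifts _).2 ⟨_, rfl⟩) hmonic
  have hsub : g - f * c ∈ RingHom.ker π := by
    rw [RingHom.mem_ker, map_sub, sub_eq_zero]
    exact hg
  exact ⟨g, by simpa using q.add_mem (hker hsub) (q.mul_mem_right c hf), hgm⟩

lemma height_le_of_forall_not_monic [IsNoetherianRing R] {d : ℕ} (hd : ringKrullDim R ≤ d)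
    (q : Ideal R[X]) [hq : q.IsPrime] (h : ∀ f ∈ q, ¬ f.Monic) : q.height ≤ d := by
  by_cases hm : q.IsMaximal
  · set p := q.comap (Polynomial.C : R →+* R[X])
    have hpp : p.IsPrime := Ideal.comap_isPrime _ _
    have : q.LiesOver p := ⟨rfl⟩
    have hp : ¬ p.IsMaximal := fun hp ↦
      let ⟨f, hf, hfm⟩ := exists_monic_mem_of_isMaximal_comap_C q hp
      h f hf hfm
    obtain ⟨m, hmm, hle⟩ := Ideal.exists_le_maximal p hpp.ne_top
    have hlt : p < m := lt_of_le_of_ne hle fun e ↦ hp (e ▸ hmm)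
    have := hmm.isPrime
    rw [Polynomial.height_eq_height_add_one p q]
    refine (Ideal.height_add_one_le_of_lt_of_isPrime hlt).trans ?_
    exact_mod_cast (Ideal.height_le_ringKrullDim_of_isPrime (I := m)).trans hd
  · obtain ⟨m, hmm, hle⟩ := Ideal.exists_le_maximal q hq.ne_top
    have hlt : q < m := lt_of_le_of_ne hle fun e ↦ hm (e ▸ hmm)
    have := hmm.isPrime
    have hdm : (m.height : WithBot ℕ∞) ≤ (d + 1 : ℕ∞) := by
      refine (Ideal.height_le_ringKrullDim_of_isPrime (I := m)).trans ?_
      rw [Polynomial.ringKrullDim_of_isNoetherianRing]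
      push_cast
      gcongr
    exact (ENat.add_le_add_iff_right ENat.one_ne_top).1
      ((Ideal.height_add_one_le_of_lt_of_isPrime hlt).trans (WithBot.coe_le_coe.1 hdm))

lemma ringKrullDim_localization_leadingCoeffSubmonoid_le [IsNoetherianRing R] {d : ℕ}
    (hd : ringKrullDim (Localization S) ≤ d) :
    ringKrullDim (Localization (leadingCoeffSubmonoid S h0)) ≤ d := by
  rw [ringKrullDim_le_iff_height_le]
  intro Q hQ
  let L := Localization S
  have : IsNoetherianRing L := IsLocalization.isNoetherianRing S L inferInstance
  let _ : Algebra R[X] L[X] := (Polynomial.mapRingHom (algebraMap R L)).toAlgebra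
  have : IsLocalization (S.map (Polynomial.C : R →+* R[X])) L[X] := Polynomial.isLocalization S L
  set q := Q.under R[X]
  have hq : q.IsPrime := Ideal.comap_isPrime _ _
  have hdisj : Disjoint (leadingCoeffSubmonoid S h0 : Set R[X]) q :=
    ((IsLocalization.isPrime_iff_isPrime_disjoint (leadingCoeffSubmonoid S h0) _ Q).1 hQ).2
  have hdisjC : Disjoint (S.map (Polynomial.C : R →+* R[X]) : Set R[X]) q :=
    hdisj.mono_left map_C_le_leadingCoeffSubmonoid
  set q' := q.map (algebraMap R[X] L[X])
  have : q'.IsPrime := IsLocalization.isPrime_of_isPrime_disjoint _ _ _ hq hdisjC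
  have hq' : q'.under R[X] = q := IsLocalization.under_map_of_isPrime_disjoint _ _ hq hdisjC
  have hheight : Q.height = q'.height := by
    rw [← IsLocalization.height_under (leadingCoeffSubmonoid S h0) Q,
      ← IsLocalization.height_under (S.map (Polynomial.C : R →+* R[X])) q', hq']
  rw [hheight]
  refine mod_cast height_le_of_forall_not_monic hd q' fun f hf hfm ↦ ?_
  obtain ⟨h, hhq, hh⟩ := exists_mem_leadingCoeffSubmonoid_of_monic (h0 := h0) hfm hf
  exact Set.disjoint_left.1 hdisj hh hhq

end LeadingCoeffLocalization

section ChangeOfVariables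

variable {R : Type*} [CommRing R]

/-- The automorphism of `R[y][z]` given by `y ↦ z`, `z ↦ y + z ^ N`. For large `N` it makes
polynomials with monic leading coefficient monic. -/
def nagataEquiv (R : Type*) [CommRing R] (N : ℕ) : R[X][X] ≃+* R[X][X] :=
  RingEquiv.ofRingHom
    (Polynomial.eval₂RingHom (Polynomial.mapRingHom Polynomial.C)
      (Polynomial.C Polynomial.X + Polynomial.X ^ N))
    (Polynomial.eval₂RingHom
      (Polynomial.eval₂RingHom (Polynomial.C.comp Polynomial.C)
        (Polynomial.X - Polynomial.C Polynomial.X ^ N))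
      (Polynomial.C Polynomial.X))
    (by ext <;> simp [Polynomial.eval₂_pow]) (by ext <;> simp [Polynomial.eval₂_pow])

lemma nagataEquiv_apply (N : ℕ) (g : R[X][X]) :
    nagataEquiv R N g = ∑ i ∈ Finset.range (g.natDegree + 1),
      (g.coeff i).map Polynomial.C * (Polynomial.X ^ N + Polynomial.C Polynomial.X) ^ i := by
  simp_rw [add_comm (Polynomial.X ^ N)]
  exact Polynomial.eval₂_eq_sum_range _ _

lemma natDegree_map_C_mul_pow_le (N : ℕ) (f : R[X]) (i : ℕ) :
    (f.map Polynomial.C * (Polynomial.X ^ N + Polynomial.C (Polynomial.X : R[X])) ^ i).natDegree ≤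
      f.natDegree + i * N := by
  nontriviality R
  refine Polynomial.natDegree_mul_le.trans (add_le_add Polynomial.natDegree_map_le ?_)
  refine Polynomial.natDegree_pow_le.trans ?_
  rw [Polynomial.natDegree_X_pow_add_C]

lemma exists_monic_nagataEquiv {g : R[X][X]} (hg : g.leadingCoeff.Monic) :
    ∃ N, (nagataEquiv R N g).Monic := by
  nontriviality R
  let e := (Finset.range g.natDegree).sup fun i ↦ (g.coeff i).natDegree
  have hX : (Polynomial.X ^ (e + 1) + Polynomial.C (Polynomial.X : R[X])).Monic :=
    Polynomial.monic_X_pow_add_C _ e.succ_ne_zero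
  have hg' : (g.coeff g.natDegree).Monic := hg
  have hlead : ((g.coeff g.natDegree).map Polynomial.C *
      (Polynomial.X ^ (e + 1) + Polynomial.C (Polynomial.X : R[X])) ^ g.natDegree).Monic :=
    (hg'.map _).mul (hX.pow _)
  have hdeg : (e + 1) * g.natDegree ≤ ((g.coeff g.natDegree).map Polynomial.C *
      (Polynomial.X ^ (e + 1) + Polynomial.C (Polynomial.X : R[X])) ^ g.natDegree).natDegree := by
    rw [(hg'.map _).natDegree_mul (hX.pow _), hX.natDegree_pow,
      Polynomial.natDegree_X_pow_add_C, mul_comm]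
    exact Nat.le_add_left _ _
  refine ⟨e + 1, ?_⟩
  rw [nagataEquiv_apply, Finset.sum_range_succ, add_comm]
  refine hlead.add_of_left ?_
  rw [Polynomial.degree_eq_natDegree hlead.ne_zero]
  refine (Polynomial.degree_sum_le _ _).trans_lt ?_
  rw [Finset.sup_lt_iff (WithBot.bot_lt_coe _)]
  intro i hi
  refine Polynomial.degree_le_natDegree.trans_lt (Nat.cast_lt.2 (lt_of_lt_of_le ?_ hdeg))
  calc _ ≤ (g.coeff i).natDegree + i * (e + 1) := natDegree_map_C_mul_pow_le _ _ _
    _ ≤ e + i * (e + 1) :=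
      Nat.add_le_add_right (Finset.le_sup (f := fun i ↦ (g.coeff i).natDegree) hi) _
    _ < (e + 1) * (i + 1) := by
      rw [mul_comm, add_comm, mul_add_one]
      exact Nat.add_lt_add_left e.lt_succ_self _
    _ ≤ (e + 1) * g.natDegree := Nat.mul_le_mul_left _ (Finset.mem_range.1 hi)

/-- Every element of `S` becomes monic after a ring automorphism of `R[X]`. -/
def MonicUpToAutomorphism (S : Submonoid R[X]) : Prop :=
  ∀ f ∈ S, ∃ e : R[X] ≃+* R[X], (e f).Monic

lemma MonicUpToAutomorphism.leadingCoeffSubmonoid {S : Submonoid R[X]}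
    (hS : MonicUpToAutomorphism S) (h0 : (0 : R[X]) ∉ S) :
    MonicUpToAutomorphism (leadingCoeffSubmonoid S h0) := by
  intro f hf
  obtain ⟨e, he⟩ := hS _ hf
  have hlead : (Polynomial.mapEquiv e f).leadingCoeff.Monic := by
    rwa [Polynomial.mapEquiv_apply,
      Polynomial.leadingCoeff_map_of_injective (f := (e : R[X] →+* R[X])) e.injective]
  obtain ⟨N, hN⟩ := exists_monic_nagataEquiv hlead
  exact ⟨(Polynomial.mapEquiv e).trans (nagataEquiv R N), hN⟩

end ChangeOfVariables

section PolynomialTransitivity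

lemma leadingCoeff_add_X_pow_mul {R : Type*} [CommRing R] {f : R[X]} (hf : f ≠ 0) (g : R[X]) :
    (g + Polynomial.X ^ (g.natDegree + 1) * f).leadingCoeff = f.leadingCoeff := by
  nontriviality R
  have hdeg : g.degree < (Polynomial.X ^ (g.natDegree + 1) * f).degree := by
    rw [Polynomial.X_pow_mul, Polynomial.degree_mul_X_pow, Polynomial.degree_eq_natDegree hf]
    exact Polynomial.degree_le_natDegree.trans_lt (by norm_cast; omega)
  rw [Polynomial.leadingCoeff_add_of_degree_lt hdeg, Polynomial.X_pow_mul,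
    Polynomial.leadingCoeff_mul_X_pow]

lemma exists_associated_algebraMap {R S : Type*} [CommRing R] [CommRing S] [Algebra R S]
    (M : Submonoid R) [IsLocalization M S] (y : S) : ∃ b, Associated (algebraMap R S b) y := by
  obtain ⟨⟨b, t⟩, hb⟩ := IsLocalization.surj M y
  exact ⟨b, hb ▸ (associated_mul_unit_left y _ (IsLocalization.map_units S t))⟩

lemma exists_dotProduct_mem_of_isUnimodular {ι R S : Type*} [Fintype ι] [CommRing R] [CommRing S]
    [Algebra R S] (M : Submonoid R) [IsLocalization M S] {v : ι → R}
    (hv : IsUnimodular (algebraMap R S ∘ v)) : ∃ c : ι → R, c ⬝ᵥ v ∈ M := by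
  have hmap : (Ideal.span (Set.range v)).map (algebraMap R S) = ⊤ := by
    rw [Ideal.map_span, ← Set.range_comp, Ideal.eq_top_iff_one]
    exact Ideal.mem_span_range_iff_exists_fun.2 hv
  have hdisj := mt (IsLocalization.map_algebraMap_ne_top_iff_disjoint M S _).2 (not_not.2 hmap)
  obtain ⟨f, hfM, hf⟩ := Set.not_disjoint_iff.1 hdisj
  obtain ⟨c, rfl⟩ := Ideal.mem_span_range_iff_exists_fun.1 hf
  exact ⟨c, hfM⟩

variable {R : Type*} [CommRing R] [IsNoetherianRing R] {d n : ℕ}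

lemma exists_elementaryEquiv_leadingCoeff_mem {S : Submonoid R} (h0 : (0 : R) ∉ S)
    (hd : ringKrullDim (Localization S) ≤ d) (hn : d < n) {v : Fin (n + 1) → R[X]}
    (hv : IsUnimodular v) : ∃ w, ElementaryEquiv v w ∧ (w 0).leadingCoeff ∈ S := by
  let T := leadingCoeffSubmonoid S h0
  have hT : ringKrullDim (Localization T) < n :=
    (ringKrullDim_localization_leadingCoeffSubmonoid_le hd).trans_lt (mod_cast hn)
  obtain ⟨v', hvv', -, htail⟩ := exists_elementaryEquiv_isUnimodular_tail
    (algebraMap R[X] (Localization T)) (exists_associated_algebraMap T) hT hv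
  obtain ⟨c, hc⟩ := exists_dotProduct_mem_of_isUnimodular T htail
  have hadd := ElementaryEquiv.add_single_dotProduct (i := 0)
    (c := (Polynomial.X : R[X]) ^ ((v' 0).natDegree + 1) • (Fin.cons 0 c : Fin (n + 1) → R[X]))
    (by simp) v'
  refine ⟨_, hvv'.trans hadd, ?_⟩
  have hdot : (Fin.cons 0 c : Fin (n + 1) → R[X]) ⬝ᵥ v' = c ⬝ᵥ Fin.tail v' := by
    simp [dotProduct, Fin.sum_univ_succ, Fin.tail]
  rw [Pi.add_apply, Pi.single_eq_same, smul_dotProduct, hdot, smul_eq_mul,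
    leadingCoeff_add_X_pow_mul fun h ↦ zero_notMem_leadingCoeffSubmonoid (h ▸ hc)]
  exact hc

lemma elementaryTransitive_polynomial {S : Submonoid R} (h0 : (0 : R) ∉ S)
    (hd : ringKrullDim (Localization S) ≤ d)
    (hS : MonicUpToAutomorphism (leadingCoeffSubmonoid S h0)) (hn : d < n) (hn2 : 2 ≤ n)
    (hR : ElementaryTransitive (Fin (n + 1)) R) : ElementaryTransitive (Fin (n + 1)) R[X] := by
  intro v hv j
  obtain ⟨w, hvw, hw⟩ := exists_elementaryEquiv_leadingCoeff_mem h0 hd hn hv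
  obtain ⟨e, he⟩ := hS _ hw
  refine hvw.trans ?_
  have hew := (hR.elementaryEquiv_single_of_monic (by simpa using hn2)
    (v := (e : R[X] →+* R[X]) ∘ w) ((hv.congr hvw).map _) he j).map (e.symm : R[X] →+* R[X])
  rw [comp_single_one] at hew
  convert hew using 1
  ext1 i
  simp

theorem elementaryTransitive_mvPolynomial (R : Type*) [CommRing R] [IsNoetherianRing R]
    (hd : ringKrullDim R ≤ d) (hn : d < n) (hn2 : 2 ≤ n) (m : ℕ) :
    ElementaryTransitive (Fin (n + 1)) (MvPolynomial (Fin m) R) := by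
  cases subsingleton_or_nontrivial R
  · exact .of_subsingleton
  suffices ∃ (B : Type _) (_ : CommRing B) (_ : IsNoetherianRing B)
      (_ : B ≃+* MvPolynomial (Fin m) R) (S : Submonoid B) (h0 : (0 : B) ∉ S),
      ringKrullDim (Localization S) ≤ d ∧ MonicUpToAutomorphism (leadingCoeffSubmonoid S h0) ∧
      ElementaryTransitive (Fin (n + 1)) B by
    obtain ⟨B, _, _, e, _, _, _, _, hB⟩ := this
    exact hB.of_ringEquiv e
  induction m with
  | zero =>
    refine ⟨R, inferInstance, inferInstance, (MvPolynomial.isEmptyRingEquiv R (Fin 0)).symm, ⊥,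
      by simp, ?_, fun f hf ↦ ⟨RingEquiv.refl _, hf⟩,
      elementaryTransitive_of_ringKrullDim_lt (hd.trans_lt (mod_cast hn))⟩
    have hunits : (⊥ : Submonoid R) ≤ IsUnit.submonoid R := bot_le
    rwa [← ringKrullDim_eq_of_ringEquiv
      (IsLocalization.atUnits R (⊥ : Submonoid R) (S := Localization ⊥) hunits).toRingEquiv]
  | succ m ih =>
    obtain ⟨B, _, _, e, S, h0, hS, hmonic, hB⟩ := ih
    exact ⟨B[X], inferInstance, inferInstance,
      (Polynomial.mapEquiv e).trans (MvPolynomial.finSuccEquiv R m).symm.toRingEquiv,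
      leadingCoeffSubmonoid S h0, zero_notMem_leadingCoeffSubmonoid,
      ringKrullDim_localization_leadingCoeffSubmonoid_le hS, hmonic.leadingCoeffSubmonoid _,
      elementaryTransitive_polynomial h0 hS hmonic hn hn2 hB⟩

end PolynomialTransitivity

section Glueing

variable {ι R Rf Rt S : Type*} [Fintype ι] [CommRing R] [CommRing Rf] [CommRing Rt] [CommRing S]
  [Algebra R Rf] [Algebra R Rt] {f t : R}

lemma IsUnimodular.of_isCoprime (hft : IsCoprime f t) [IsLocalization.Away f Rf]
    [IsLocalization.Away t Rt] {w : ι → R} (hf : IsUnimodular (algebraMap R Rf ∘ w))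
    (ht : IsUnimodular (algebraMap R Rt ∘ w)) : IsUnimodular w := by
  obtain ⟨b, N, hb : f ^ N = b ⬝ᵥ w⟩ := exists_dotProduct_mem_of_isUnimodular (.powers f) hf
  obtain ⟨c, M, hc : t ^ M = c ⬝ᵥ w⟩ := exists_dotProduct_mem_of_isUnimodular (.powers t) ht
  obtain ⟨x, y, hxy⟩ := IsCoprime.pow (m := N) (n := M) hft
  refine ⟨x • b + y • c, ?_⟩
  rw [add_dotProduct, smul_dotProduct, smul_dotProduct, ← hb, ← hc, smul_eq_mul, smul_eq_mul, hxy]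

variable [Algebra R S] [Algebra Rf S] [Algebra Rt S] [IsScalarTower R Rf S]
  [IsScalarTower R Rt S]

lemma exists_algebraMap_eq_of_algebraMap_eq (hft : IsCoprime f t) [IsLocalization.Away f Rf]
    [IsLocalization.Away t Rt] [IsLocalization.Away (algebraMap R Rf t) S] {a : Rf} {b : Rt}
    (hab : algebraMap Rf S a = algebraMap Rt S b) :
    ∃ c : R, algebraMap R Rf c = a ∧ algebraMap R Rt c = b := by
  have : IsLocalization.Away (f * t) S := IsLocalization.Away.mul' Rf S f t
  obtain ⟨N, a₀, ha⟩ := IsLocalization.Away.surj f a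
  obtain ⟨M, b₀, hb⟩ := IsLocalization.Away.surj t b
  have hS : algebraMap R S (t ^ M * a₀) = algebraMap R S (f ^ N * b₀) := by
    have ha' := congrArg (algebraMap Rf S) ha
    have hb' := congrArg (algebraMap Rt S) hb
    simp only [map_mul, map_pow, ← IsScalarTower.algebraMap_apply] at ha' hb' ⊢
    rw [← ha', ← hb', hab]
    ring
  obtain ⟨K, hK⟩ := IsLocalization.Away.exists_of_eq (f * t) hS
  obtain ⟨u, v, huv⟩ := IsCoprime.pow (m := K + N) (n := K + M) hft
  refine ⟨v * t ^ K * b₀ + u * f ^ K * a₀, ?_, ?_⟩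
  · have hf := (IsLocalization.Away.algebraMap_isUnit (S := Rf) f).pow (K + N)
    apply hf.mul_left_cancel
    have hnum : f ^ (K + N) * (v * t ^ K * b₀ + u * f ^ K * a₀) = f ^ K * a₀ := by
      linear_combination (-v) * hK + f ^ K * a₀ * huv
    rw [← map_pow, ← map_mul, hnum, map_mul, ← ha]
    simp only [map_pow]
    ring
  · have ht := (IsLocalization.Away.algebraMap_isUnit (S := Rt) t).pow (K + M)
    apply ht.mul_left_cancel
    have hnum : t ^ (K + M) * (v * t ^ K * b₀ + u * f ^ K * a₀) = t ^ K * b₀ := by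
      linear_combination u * hK + t ^ K * b₀ * huv
    rw [← map_pow, ← map_mul, hnum, map_mul, ← hb]
    simp only [map_pow]
    ring

variable [DecidableEq ι]

lemma ElementaryTransitive.elementaryEquiv_single_of_isCoprime (hι : 3 ≤ Fintype.card ι)
    (hR : ElementaryTransitive ι R) (hft : IsCoprime f t) [IsLocalization.Away f Rf] {v : ι → Rf}
    (hv : IsUnimodular v) {i : ι} (h : ElementaryEquiv
      (algebraMap Rf (Localization.Away (algebraMap R Rf t)) ∘ v) (Pi.single i 1)) :
    ElementaryEquiv v (Pi.single i 1) := by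
  let S := Localization.Away (algebraMap R Rf t)
  let Rt := Localization.Away t
  have htS : IsUnit (algebraMap R S t) := by
    rw [IsScalarTower.algebraMap_apply R Rf S]
    exact IsLocalization.Away.algebraMap_isUnit _
  let _ : Algebra Rt S := (IsLocalization.Away.lift t htS).toAlgebra
  have : IsScalarTower R Rt S :=
    .of_algebraMap_eq fun x ↦ (IsLocalization.Away.lift_eq t htS x).symm
  have : IsLocalization.Away (algebraMap R Rt f) S := IsLocalization.Away.commutes Rt Rf S t f
  obtain ⟨σ, hσ, hσv⟩ := h
  obtain ⟨ρ, hρ, ρ', hρ', hsplit⟩ := exists_map_mul_eq_map (Rf := Rf) (Rt := Rt) (S := S) hι hft hσ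
  have hagree : algebraMap Rf S ∘ (ρ • v) = algebraMap Rt S ∘ (ρ' • Pi.single i 1) := by
    rw [← map_smul_comp, ← map_smul_comp, ← hsplit, comp_single_one, ← hσv, mul_smul]
  choose w hwf hwt using fun k ↦
    exists_algebraMap_eq_of_algebraMap_eq (Rf := Rf) (Rt := Rt) hft (congrFun hagree k)
  have hvw : ElementaryEquiv v (algebraMap R Rf ∘ w) := ⟨ρ, hρ, (funext hwf).symm⟩
  have hiw : ElementaryEquiv (Pi.single i 1) (algebraMap R Rt ∘ w) := ⟨ρ', hρ', (funext hwt).symm⟩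
  have hw : IsUnimodular w :=
    .of_isCoprime hft (hv.congr hvw) ((IsUnimodular.single i).congr hiw)
  exact hvw.trans (comp_single_one (algebraMap R Rf) i ▸ (hR w hw i).map (algebraMap R Rf))

end Glueing

section Localization

variable {ι A B : Type*} [Fintype ι] [DecidableEq ι] [CommRing A] [CommRing B]

lemma ElementaryTransitive.of_isLocalization_away {a : A} {b : B} (e : A ≃+* B) (h : e a = b)
    (S T : Type*) [CommRing S] [CommRing T] [Algebra A S] [Algebra B T] [IsLocalization.Away a S]
    [IsLocalization.Away b T] (hS : ElementaryTransitive ι S) : ElementaryTransitive ι T := by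
  subst h
  exact hS.of_ringEquiv (IsLocalization.ringEquivOfRingEquiv (M := Submonoid.powers a)
    (T := Submonoid.powers (e a)) S T e (Submonoid.map_powers e a))

lemma ElementaryTransitive.of_isLocalization_away_mul (hι : 3 ≤ Fintype.card ι) {f g : A}
    {N : Submonoid A} (hfN : f ∈ N) (hgN : g ∈ N)
    (hN : ∀ x ∈ N, ∃ (a : ℕ) (h : A), x ∣ (g * f) ^ a * (1 + f * h))
    (Ag D : Type*) [CommRing Ag] [CommRing D] [Algebra A Ag] [Algebra A B] [Algebra A D]
    [Algebra Ag B] [IsScalarTower A Ag B] [IsLocalization.Away g Ag]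
    [IsLocalization.Away (algebraMap A Ag f) B] [IsLocalization N D]
    (hAg : ElementaryTransitive ι Ag) (hD : ElementaryTransitive ι D) :
    ElementaryTransitive ι B := by
  have : IsLocalization.Away (g * f) B := IsLocalization.Away.mul' Ag B g f
  have hgf : g * f ∈ N := N.mul_mem hgN hfN
  have hunit : IsUnit (algebraMap A D (g * f)) := IsLocalization.map_units D ⟨g * f, hgf⟩
  let _ : Algebra B D := (IsLocalization.Away.lift (g * f) hunit).toAlgebra
  have : IsScalarTower A B D :=
    .of_algebraMap_eq fun x ↦ (IsLocalization.Away.lift_eq (g * f) hunit x).symm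
  have : IsLocalization (N.map (algebraMap A B)) D :=
    IsLocalization.isLocalization_of_submonoid_le B D _ N (Submonoid.powers_le.2 hgf)
  intro v hv i
  have hDv := hD _ (hv.map (algebraMap B D)) i
  rw [← comp_single_one (algebraMap B D)] at hDv
  obtain ⟨_, ⟨x, hxN, rfl⟩, hx⟩ := hDv.exists_away (N.map (algebraMap A B))
  obtain ⟨a, h, hdvd⟩ := hN x hxN
  let t : Ag := algebraMap A Ag (1 + f * h)
  have hcop : IsCoprime (algebraMap A Ag f) t :=
    ⟨-algebraMap A Ag h, 1, by simp only [t, map_add, map_mul, map_one]; ring⟩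
  refine hAg.elementaryEquiv_single_of_isCoprime hι hcop hv ?_
  let T := Localization.Away (algebraMap Ag B t)
  have hxT : IsUnit (algebraMap B T (algebraMap A B x)) := by
    refine isUnit_of_dvd_unit (map_dvd _ (map_dvd _ hdvd)) ?_
    rw [map_mul, map_mul, map_pow, IsScalarTower.algebraMap_apply A Ag B (1 + f * h)]
    exact (((IsLocalization.Away.algebraMap_isUnit (g * f)).pow a).map _).mul
      (IsLocalization.Away.algebraMap_isUnit _)
  have hlift := hx.map (IsLocalization.Away.lift (algebraMap A B x) hxT)
  simp only [← Function.comp_assoc, ← RingHom.coe_comp, IsLocalization.Away.lift_comp,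
    comp_single_one] at hlift
  exact hlift

end Localization

section PowMulOneAdd

variable {R : Type*} [CommRing R]

/-- The multiplicative set `{f ^ a * (1 + f * h)}`. No prime disjoint from it is maximal, so
inverting it lowers the Krull dimension. -/
def powMulOneAddSubmonoid (f : R) : Submonoid R where
  carrier := {x | ∃ (a : ℕ) (h : R), x = f ^ a * (1 + f * h)}
  one_mem' := ⟨0, 0, by simp⟩
  mul_mem' := by
    rintro _ _ ⟨a, h, rfl⟩ ⟨b, k, rfl⟩
    exact ⟨a + b, h + k + f * h * k, by ring⟩

lemma self_mem_powMulOneAddSubmonoid (f : R) : f ∈ powMulOneAddSubmonoid f := ⟨1, 0, by simp⟩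

lemma one_add_mul_mem_powMulOneAddSubmonoid (f h : R) : 1 + f * h ∈ powMulOneAddSubmonoid f :=
  ⟨0, h, by simp⟩

lemma ringKrullDim_localization_powMulOneAddSubmonoid_le (f : R) {d : ℕ}
    (hd : ringKrullDim R ≤ (d + 1 : ℕ)) :
    ringKrullDim (Localization (powMulOneAddSubmonoid f)) ≤ d := by
  rw [ringKrullDim_le_iff_height_le]
  intro Q hQ
  let q := Q.under R
  have : q.IsPrime := Ideal.comap_isPrime _ _
  have hdisj : Disjoint (powMulOneAddSubmonoid f : Set R) q :=
    ((IsLocalization.isPrime_iff_isPrime_disjoint _ _ Q).1 hQ).2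
  have hfq : f ∉ q := Set.disjoint_left.1 hdisj (self_mem_powMulOneAddSubmonoid f)
  have hq : ¬ q.IsMaximal := fun hmax ↦ by
    obtain ⟨y, i, hi, hyi⟩ := hmax.exists_inv hfq
    obtain rfl : i = 1 + f * -y := by linear_combination hyi
    exact Set.disjoint_left.1 hdisj (one_add_mul_mem_powMulOneAddSubmonoid f _) hi
  obtain ⟨m, hm, hqm⟩ := Ideal.exists_le_maximal q (Ideal.IsPrime.ne_top this)
  have hlt : q < m := lt_of_le_of_ne hqm (by rintro h; exact hq (h ▸ hm))
  have hmd := (ringKrullDim_le_iff_height_le _).1 hd hm.isPrime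
  have hheight : q.height + 1 ≤ (d + 1 : ℕ) :=
    have := hm.isPrime
    (Ideal.height_add_one_le_of_lt_of_isPrime hlt).trans (by exact_mod_cast hmd)
  push_cast at hheight
  rw [← IsLocalization.height_under (powMulOneAddSubmonoid f) Q]
  exact_mod_cast (ENat.add_le_add_iff_right (by simp)).1 hheight

end PowMulOneAdd

section SeparatedProduct

variable {R σ : Type*} [CommRing R] {n : ℕ}

/-- The product `F₁(y₁) ⋯ Fₙ(yₙ)` of one-variable polynomials evaluated at the variables `yᵢ`. -/
def separatedProduct (y : Fin n → σ) (F : Fin n → R[X]) : MvPolynomial σ R :=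
  ∏ i, Polynomial.aeval (X (y i) : MvPolynomial σ R) (F i)

lemma map_aeval_algebraMap {B B' R' : Type*} [CommRing R'] [CommRing B] [CommRing B'] [Algebra R B]
    [Algebra R' B'] (φ : R →+* R') (ψ : B →+* B')
    (h : ψ.comp (algebraMap R B) = (algebraMap R' B').comp φ) (p : R[X]) (x : B) :
    ψ (Polynomial.aeval x p) = Polynomial.aeval (ψ x) (p.map φ) := by
  rw [Polynomial.aeval_def, Polynomial.hom_eval₂, h, Polynomial.aeval_def, Polynomial.eval₂_map]

lemma map_separatedProduct {R' : Type*} [CommRing R'] (φ : R →+* R') (y : Fin n → σ)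
    (F : Fin n → R[X]) :
    MvPolynomial.map φ (separatedProduct y F) = separatedProduct y fun i ↦ (F i).map φ := by
  simp only [separatedProduct, map_prod]
  refine Finset.prod_congr rfl fun i _ ↦ ?_
  rw [map_aeval_algebraMap φ _ (by ext; simp [MvPolynomial.algebraMap_eq]), map_X]

/-- The isomorphism `R[σ] ≃ R[s][σ \ {s}]` making the variable `s` a constant. -/
def splitVariable [DecidableEq σ] (s : σ) :
    MvPolynomial σ R ≃+* MvPolynomial {x : σ // x ≠ s} R[X] :=
  ((renameEquiv R (Equiv.optionSubtypeNe s).symm).trans (optionEquivRight R _)).toRingEquiv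

section SplitVariable

variable [DecidableEq σ]

lemma splitVariable_C (s : σ) (r : R) : splitVariable s (C r) = C (Polynomial.C r) := by
  simp [splitVariable]

lemma splitVariable_X_self (s : σ) :
    splitVariable s (X s : MvPolynomial σ R) = C Polynomial.X := by
  simp [splitVariable]

lemma splitVariable_X_of_ne {s x : σ} (h : x ≠ s) :
    splitVariable s (X x : MvPolynomial σ R) = X ⟨x, h⟩ := by
  simp [splitVariable, Equiv.optionSubtypeNe_symm_apply, h]

lemma splitVariable_aeval (s : σ) (p : R[X]) (x : MvPolynomial σ R) :
    splitVariable s (Polynomial.aeval x p) =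
      Polynomial.aeval (splitVariable s x) (p.map Polynomial.C) :=
  map_aeval_algebraMap Polynomial.C (splitVariable s).toRingHom
    (by ext r; simp [MvPolynomial.algebraMap_eq, splitVariable_C]) p x

lemma splitVariable_aeval_X_self (s : σ) (p : R[X]) :
    splitVariable s (Polynomial.aeval (X s : MvPolynomial σ R) p) = C p := by
  rw [splitVariable_aeval, splitVariable_X_self, Polynomial.aeval_def, Polynomial.eval₂_map,
    MvPolynomial.algebraMap_eq, ← Polynomial.hom_eval₂, Polynomial.eval₂_C_X]

lemma splitVariable_separatedProduct {s : σ} (y : Fin n → σ) (hy : ∀ i, y i ≠ s)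
    (F : Fin n → R[X]) : splitVariable s (separatedProduct y F) =
      separatedProduct (fun i ↦ (⟨y i, hy i⟩ : {x // x ≠ s})) fun i ↦
        (F i).map Polynomial.C := by
  simp only [separatedProduct, map_prod, splitVariable_aeval, splitVariable_X_of_ne (hy _)]

end SplitVariable

end SeparatedProduct

section Transitivity

lemma exists_dvd_of_mem_localizationLocalizationSubmodule {R S : Type*} [CommRing R] [CommRing S]
    [Algebra R S] {M : Submonoid R} [IsLocalization M S] {g x : R} (hx : x ∈
      IsLocalization.localizationLocalizationSubmodule M (.powers (algebraMap R S g))) :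
    ∃ a : ℕ, ∃ z ∈ M, x ∣ g ^ a * z := by
  rw [IsLocalization.mem_localizationLocalizationSubmodule] at hx
  obtain ⟨⟨_, a, rfl⟩, z, hxz⟩ := hx
  have hxz' : algebraMap R S x = algebraMap R S (g ^ a * z) := by rw [hxz, map_mul, map_pow]
  obtain ⟨c, hc⟩ := (IsLocalization.eq_iff_exists M S).1 hxz'
  exact ⟨a, z * c, (z * c).2, c, by rw [mul_comm x, hc]; ring⟩

lemma ElementaryTransitive.away_mul_C {ι σ R : Type*} [Fintype ι] [DecidableEq ι] [CommRing R]
    (hι : 3 ≤ Fintype.card ι) {f : R} {g : MvPolynomial σ R}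
    (hg : ElementaryTransitive ι (Localization.Away g))
    (hf : ElementaryTransitive ι (Localization.Away
      (MvPolynomial.map (algebraMap R (Localization (powMulOneAddSubmonoid f))) g))) :
    ElementaryTransitive ι (Localization.Away (g * C f)) := by
  let L := Localization (powMulOneAddSubmonoid f)
  let M := (powMulOneAddSubmonoid f).map (C (σ := σ))
  let _ := MvPolynomial.algebraMvPolynomial (σ := σ) (R := R) (S := L)
  have : IsLocalization M (MvPolynomial σ L) := MvPolynomial.isLocalization _ _
  let T := Submonoid.powers (MvPolynomial.map (algebraMap R L) g)
  let N := IsLocalization.localizationLocalizationSubmodule M T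
  let _ : Algebra (MvPolynomial σ R) (Localization T) := inferInstance
  have : IsLocalization N (Localization T) :=
    IsLocalization.localization_localization_isLocalization M T _
  have hfN : C f ∈ N := IsLocalization.mem_localizationLocalizationSubmodule.2
    ⟨1, ⟨C f, f, self_mem_powMulOneAddSubmonoid f, rfl⟩, by simp⟩
  have hgN : g ∈ N := IsLocalization.mem_localizationLocalizationSubmodule.2
    ⟨⟨_, Submonoid.mem_powers _⟩, 1, by simp⟩
  have hN : ∀ x ∈ N, ∃ (a : ℕ) (h : MvPolynomial σ R), x ∣ (g * C f) ^ a * (1 + C f * h) := by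
    intro x hx
    obtain ⟨a, _, ⟨_, ⟨b, h, rfl⟩, rfl⟩, hdvd⟩ :=
      exists_dvd_of_mem_localizationLocalizationSubmodule hx
    refine ⟨a + b, C h, hdvd.trans ⟨g ^ b * C f ^ a, ?_⟩⟩
    simp only [map_mul, map_add, map_pow, map_one]
    ring
  let B := Localization.Away (algebraMap (MvPolynomial σ R) (Localization.Away g) (C f))
  have : IsLocalization.Away (g * C f) B := IsLocalization.Away.mul' (Localization.Away g) B g _
  have hB : ElementaryTransitive ι B :=
    .of_isLocalization_away_mul hι hfN hgN hN (Localization.Away g) (Localization T) hg hf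
  exact ElementaryTransitive.of_isLocalization_away (a := g * C f) (b := g * C f)
    (RingEquiv.refl _) rfl B _ hB

lemma elementaryTransitive_away_one {σ R : Type*} [CommRing R] [IsNoetherianRing R] [Finite σ]
    {d k : ℕ} (hd : ringKrullDim R ≤ d) (hk : d < k) (hk2 : 2 ≤ k) :
    ElementaryTransitive (Fin (k + 1)) (Localization.Away (1 : MvPolynomial σ R)) := by
  obtain ⟨m, ⟨e⟩⟩ := Finite.exists_equiv_fin σ
  have hσ := (elementaryTransitive_mvPolynomial R hd hk hk2 m).of_ringEquiv
    (renameEquiv R e.symm).toRingEquiv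
  exact hσ.of_ringEquiv (IsLocalization.atOne _ _).toRingEquiv

theorem elementaryTransitive_away_separatedProduct {d k : ℕ} (hk : d < k) (hk2 : 2 ≤ k) {n : ℕ}
    {R : Type*} [CommRing R] [IsNoetherianRing R] (hd : ringKrullDim R ≤ d) {σ : Type*} [Finite σ]
    {y : Fin n → σ} (hy : Function.Injective y) (F : Fin n → R[X]) :
    ElementaryTransitive (Fin (k + 1)) (Localization.Away (separatedProduct y F)) := by
  classical
  induction n generalizing R σ with
  | zero =>
    have hone : separatedProduct y F = 1 := by simp [separatedProduct]
    rw [hone]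
    exact elementaryTransitive_away_one hd hk hk2
  | succ n ih =>
    let s := y (Fin.last n)
    have hys (i : Fin n) : y i.castSucc ≠ s := fun h ↦ (Fin.castSucc_lt_last i).ne (hy h)
    have hy' : Function.Injective fun i : Fin n ↦ y i.castSucc :=
      hy.comp (Fin.castSucc_injective n)
    let f := F (Fin.last n)
    let y' : Fin n → {x // x ≠ s} := fun i ↦ ⟨y i.castSucc, hys i⟩
    let g := separatedProduct y' fun i ↦ (F i.castSucc).map Polynomial.C
    have hsplit := splitVariable_separatedProduct _ hys fun i ↦ F i.castSucc
    have hprod : splitVariable s (separatedProduct y F) = g * C f := by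
      rw [separatedProduct, Fin.prod_univ_castSucc, map_mul, splitVariable_aeval_X_self]
      exact congrArg (· * C f) hsplit
    have hg : ElementaryTransitive (Fin (k + 1)) (Localization.Away g) :=
      .of_isLocalization_away (splitVariable s) hsplit _ _
        (ih hd hy' fun i ↦ F i.castSucc)
    let L := Localization (powMulOneAddSubmonoid f)
    have : IsNoetherianRing L :=
      IsLocalization.isNoetherianRing (powMulOneAddSubmonoid f) L inferInstance
    have hL : ringKrullDim L ≤ d := ringKrullDim_localization_powMulOneAddSubmonoid_le f (by
      rw [Polynomial.ringKrullDim_of_isNoetherianRing]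
      push_cast
      gcongr)
    have hgL := ih hL (y := y') (fun i j h ↦ hy' (congrArg Subtype.val h)) fun i ↦
      ((F i.castSucc).map Polynomial.C).map (algebraMap _ L)
    rw [← map_separatedProduct] at hgL
    have hsymm : (splitVariable s).symm (g * C f) = separatedProduct y F := by
      rw [← hprod, RingEquiv.symm_apply_apply]
    exact ElementaryTransitive.of_isLocalization_away (splitVariable s).symm hsymm _ _
      (ElementaryTransitive.away_mul_C (by simpa using hk2) hg hgL)

end Transitivity

section RelativeElementary

variable {ι R S : Type*} [Fintype ι] [DecidableEq ι] [CommRing R] [CommRing S]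

lemma OneAddElementary.mul_of_square_zero {I : Ideal R} {M N : Matrix ι ι R}
    (hM : OneAddElementary I M) (hN : OneAddElementary I N) (hM' : OneAddElementary I (-M))
    (hN' : OneAddElementary I (-N)) (hMM : M * M = 0) (hNN : N * N = 0) (hNM : N * M = 0) :
    OneAddElementary I (M * N) := by
  obtain ⟨σ, hσ, hσM⟩ := hM
  obtain ⟨τ, hτ, hτN⟩ := hN
  obtain ⟨σ', hσ', hσM'⟩ := hM'
  obtain ⟨τ', hτ', hτN'⟩ := hN'
  refine ⟨σ * τ * (σ' * τ'), mul_mem (mul_mem hσ hτ) (mul_mem hσ' hτ'), ?_⟩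
  simp only [Matrix.SpecialLinearGroup.coe_mul, hσM, hτN, hσM', hτN']
  have hexpand : (1 + M) * (1 + N) * ((1 + -M) * (1 + -N)) = 1 + M * N - M * M - N * N - N * M
      + M * M * N + N * M * N - M * (N * M) - M * (N * N) + M * (N * M) * N := by noncomm_ring
  rw [hexpand, hMM, hNN, hNM]
  simp only [zero_mul, mul_zero, sub_zero, add_zero]

lemma OneAddElementary.vecMulVec_mul_vecMulVec {I : Ideal R} {p q : ι → R} {l : ι} (hp : p l = 0)
    (hq : q l = 0) (hqp : q ⬝ᵥ p = 0) {y : R} (hy : y ∈ I) (hqI : ∀ k, q k ∈ I) :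
    OneAddElementary I (vecMulVec p (Pi.single l y) * vecMulVec (Pi.single l 1) q) := by
  refine mul_of_square_zero (vecMulVec_single hp hy) (single_vecMulVec hq hqI) ?_ ?_
    (vecMulVec_mul_vecMulVec_of_dotProduct_eq_zero ?_)
    (vecMulVec_mul_vecMulVec_of_dotProduct_eq_zero ?_)
    (vecMulVec_mul_vecMulVec_of_dotProduct_eq_zero hqp)
  · rw [← Matrix.vecMulVec_neg, ← Pi.single_neg]
    exact vecMulVec_single hp (I.neg_mem hy)
  · rw [← Matrix.vecMulVec_neg]
    exact single_vecMulVec (by simp [hq]) fun k ↦ I.neg_mem (hqI k)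
  · simp [hp]
  · simp [hq]

-- Write `u = w + p` with `p` supported on `{i, j}`: then `vecMulVec w _` is a product of
-- elementary matrices outright, and `vecMulVec p _` is a commutator through a third index `l`;
-- the two factors of the commutator use up one factor `s` each.
lemma OneAddElementary.smul_vecMulVec_sub (hι : 3 ≤ Fintype.card ι) (s c : R) {i j : ι}
    (hij : i ≠ j) (u : ι → R) : OneAddElementary (Ideal.span {s})
      ((s ^ 2 * c) • vecMulVec u (Pi.single i (u j) - Pi.single j (u i))) := by
  obtain ⟨l, hli, hlj⟩ := exists_ne_ne hι i j
  set I := Ideal.span {s}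
  have hsI (x : R) : s * x ∈ I := I.mul_mem_right _ (Ideal.mem_span_singleton_self s)
  set q : ι → R := Pi.single i (u j) - Pi.single j (u i) with hq
  set p : ι → R := Pi.single i (u i) + Pi.single j (u j) with hp
  set w : ι → R := u - p with hw
  have hql : q l = 0 := by simp [hq, hli, hlj]
  have hpl : p l = 0 := by simp [hp, hli, hlj]
  have hwi : w i = 0 := by simp [hw, hp, hij]
  have hwj : w j = 0 := by simp [hw, hp, hij.symm]
  have hqp : q ⬝ᵥ p = 0 := by
    simp only [hq, hp, dotProduct_add, dotProduct_single, Pi.sub_apply, Pi.single_eq_same, ne_eq,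
      hij, not_false_eq_true, Pi.single_eq_of_ne, sub_zero, hij.symm, zero_sub, neg_mul]
    ring
  have hdecomp : (s ^ 2 * c) • vecMulVec u q =
      vecMulVec w (Pi.single i (s * (s * c * u j))) +
        vecMulVec w (Pi.single j (s * -(s * c * u i))) +
      vecMulVec p (Pi.single l (s * c)) * vecMulVec (Pi.single l 1) (s • q) := by
    have hu : u = w + p := (sub_add_cancel u p).symm
    rw [Matrix.vecMulVec_mul_vecMulVec]
    nth_rw 1 [hu]
    ext a b
    simp only [Matrix.smul_apply, Matrix.add_apply, Matrix.vecMulVec_apply, Pi.add_apply,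
      Pi.smul_apply, hq, Pi.sub_apply, Pi.single_apply, smul_eq_mul, single_dotProduct]
    split_ifs <;> simp <;> ring
  rw [hdecomp]
  have hw_part := (vecMulVec_single hwi (hsI (s * c * u j))).add
    (vecMulVec_single hwj (hsI (-(s * c * u i))))
    (vecMulVec_mul_vecMulVec_of_dotProduct_eq_zero (by simp [hwi]))
  refine hw_part.add (vecMulVec_mul_vecMulVec hpl (by simp [hql]) ?_ (hsI c) fun k ↦ hsI _) ?_
  · rw [smul_dotProduct, hqp, smul_zero]
  · rw [← mul_assoc, ← Matrix.vecMulVec_add, vecMulVec_mul_vecMulVec_of_dotProduct_eq_zero,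
      zero_mul]
    simp only [mul_neg, hp, dotProduct_add, dotProduct_single, Pi.add_apply, Pi.single_eq_same,
      ne_eq, hij, not_false_eq_true, Pi.single_eq_of_ne, add_zero, hij.symm, zero_add, neg_mul]
    ring

-- The row `v` is a combination of the Koszul relations `u j • e i - u i • e j`, since `u` is
-- unimodular.
lemma OneAddElementary.smul_vecMulVec_of_dotProduct_eq_zero (hι : 3 ≤ Fintype.card ι) (s x : R)
    {u v w : ι → R} (hvu : v ⬝ᵥ u = 0) (hwu : w ⬝ᵥ u = 1) :
    OneAddElementary (Ideal.span {s}) ((s ^ 2 * x) • vecMulVec u v) := by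
  have hkoszul : v = ∑ k : ι × ι, (v k.1 * w k.2) •
      (Pi.single k.1 (u k.2) - Pi.single k.2 (u k.1)) := by
    ext b
    simp only [Fintype.sum_prod_type, Finset.sum_apply, Pi.smul_apply, Pi.sub_apply,
      Pi.single_apply, smul_eq_mul, mul_sub, Finset.sum_sub_distrib, mul_ite, mul_zero]
    have hcol : ∑ i, ∑ j, (if b = i then v i * w j * u j else 0) = v b * (w ⬝ᵥ u) := by
      simp [dotProduct, Finset.mul_sum, mul_assoc]
    have hrow : ∑ i, ∑ j, (if b = j then v i * w j * u i else 0) = w b * (v ⬝ᵥ u) := by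
      simp [dotProduct, Finset.mul_sum, mul_left_comm, mul_assoc]
    rw [hcol, hrow, hvu, hwu, mul_one, mul_zero, sub_zero]
  have hsum : (s ^ 2 * x) • vecMulVec u v = ∑ k : ι × ι, (s ^ 2 * (x * v k.1 * w k.2)) •
      vecMulVec u (Pi.single k.1 (u k.2) - Pi.single k.2 (u k.1)) := by
    ext a b
    conv_lhs => rw [hkoszul]
    simp only [Matrix.smul_apply, Matrix.sum_apply, Matrix.vecMulVec_apply, Finset.sum_apply,
      Finset.mul_sum, Pi.smul_apply, smul_eq_mul]
    exact Finset.sum_congr rfl fun k _ ↦ by ring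
  rw [hsum]
  refine sum _ (fun k ↦ ?_) fun k m ↦ ?_
  · by_cases hk : k.1 = k.2
    · simpa [hk] using zero
    · exact smul_vecMulVec_sub hι s _ hk u
  · rw [Matrix.smul_mul, Matrix.mul_smul, vecMulVec_mul_vecMulVec_of_dotProduct_eq_zero]
    · simp
    · simp [sub_dotProduct, mul_comm]

lemma conj_transvection_mem_elementarySubgroup (hι : 3 ≤ Fintype.card ι) (s x : R)
    (γ : SpecialLinearGroup ι R) {i j : ι} (hij : i ≠ j) :
    γ⁻¹ * transvection hij (s ^ 2 * x) * γ ∈ elementarySubgroup ι (Ideal.span {s}) := by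
  have hγ : (γ : Matrix ι ι R) * (γ⁻¹ : SpecialLinearGroup ι R) = 1 := by
    rw [← Matrix.SpecialLinearGroup.coe_mul, mul_inv_cancel, Matrix.SpecialLinearGroup.coe_one]
  obtain ⟨σ, hσ, hσN⟩ := OneAddElementary.smul_vecMulVec_of_dotProduct_eq_zero hι s x
    (u := (γ⁻¹ : SpecialLinearGroup ι R) *ᵥ Pi.single i 1) (v := Pi.single j 1 ᵥ* γ)
    (w := Pi.single i 1 ᵥ* γ)
    (by rw [Matrix.dotProduct_mulVec, Matrix.vecMul_vecMul, hγ]; simp [hij])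
    (by rw [Matrix.dotProduct_mulVec, Matrix.vecMul_vecMul, hγ]; simp)
  have hsingle : Matrix.single i j (s ^ 2 * x) =
      (s ^ 2 * x) • vecMulVec (Pi.single i 1) (Pi.single j 1) := by
    rw [← Matrix.single_eq_single_vecMulVec_single, Matrix.smul_single, smul_eq_mul, mul_one]
  convert hσ
  apply Subtype.ext
  rw [hσN, Matrix.SpecialLinearGroup.coe_mul, Matrix.SpecialLinearGroup.coe_mul, transvection_coe,
    mul_add, add_mul, mul_one, ← Matrix.SpecialLinearGroup.coe_mul, inv_mul_cancel,
    Matrix.SpecialLinearGroup.coe_one, hsingle, Matrix.mul_smul, Matrix.smul_mul,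
    Matrix.mul_vecMulVec, Matrix.vecMulVec_mul]

lemma inv_map_mul_map_mem_elementarySubgroup (hι : 3 ≤ Fintype.card ι) {s : R} {α β : S →+* R}
    (h : ∀ x, ∃ y, β x = α x + s ^ 2 * y) {σ : SpecialLinearGroup ι S}
    (hσ : σ ∈ elementarySubgroup ι (⊤ : Ideal S)) :
    (Matrix.SpecialLinearGroup.map α σ)⁻¹ * Matrix.SpecialLinearGroup.map β σ ∈
      elementarySubgroup ι (Ideal.span {s}) := by
  induction hσ using elementarySubgroup_induction with
  | one => simp
  | transvection_mul i j hij c _ σ _ ih =>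
    obtain ⟨y, hy⟩ := h c
    convert mul_mem (conj_transvection_mem_elementarySubgroup hι s y
      (Matrix.SpecialLinearGroup.map α σ) hij) ih using 1
    rw [map_mul, map_mul, map_transvection, map_transvection, hy,
      Matrix.SpecialLinearGroup.transvection_add]
    group

end RelativeElementary

section SeparatedLocalization

/-- `B` is a *separated localization* over `R` if it is isomorphic, as an `R`-algebra, to a
polynomial ring over `R` in finitely many variables with a product `F₁(y₁) ⋯ Fₙ(yₙ)` of
one-variable polynomials in distinct variables inverted. -/
def IsSeparatedLocalization (R B : Type*) [CommRing R] [CommRing B] [Algebra R B] : Prop :=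
  ∃ (σ : Type) (_ : Finite σ) (n : ℕ) (y : Fin n → σ) (F : Fin n → R[X]),
    Function.Injective y ∧ Nonempty (Localization.Away (separatedProduct y F) ≃ₐ[R] B)

variable {R B : Type*} [CommRing R] [CommRing B] [Algebra R B]

lemma IsSeparatedLocalization.isNoetherianRing [IsNoetherianRing R]
    (h : IsSeparatedLocalization R B) : IsNoetherianRing B := by
  obtain ⟨σ, _, n, y, F, -, ⟨e⟩⟩ := h
  have : IsNoetherianRing (Localization.Away (separatedProduct y F)) :=
    IsLocalization.isNoetherianRing (.powers (separatedProduct y F)) _ inferInstance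
  exact isNoetherianRing_of_ringEquiv _ e.toRingEquiv

lemma IsSeparatedLocalization.elementaryTransitive [IsNoetherianRing R]
    (h : IsSeparatedLocalization R B) {d k : ℕ} (hk : d < k) (hk2 : 2 ≤ k)
    (hd : ringKrullDim R ≤ d) : ElementaryTransitive (Fin (k + 1)) B := by
  obtain ⟨σ, _, n, y, F, hy, ⟨e⟩⟩ := h
  exact (elementaryTransitive_away_separatedProduct hk hk2 hd hy F).of_ringEquiv e.toRingEquiv

lemma IsSeparatedLocalization.of_algEquiv (h : IsSeparatedLocalization R B) {B' : Type*}
    [CommRing B'] [Algebra R B'] (e : B ≃ₐ[R] B') : IsSeparatedLocalization R B' := by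
  obtain ⟨σ, hσ, n, y, F, hy, ⟨e'⟩⟩ := h
  exact ⟨σ, hσ, n, y, F, hy, ⟨e'.trans e⟩⟩

lemma IsSeparatedLocalization.baseChange (h : IsSeparatedLocalization R B) (R' : Type*)
    [CommRing R'] [Algebra R R'] : IsSeparatedLocalization R' (R' ⊗[R] B) := by
  obtain ⟨σ, _, n, y, F, hy, ⟨e⟩⟩ := h
  let g := separatedProduct y F
  let g' := separatedProduct y fun i ↦ (F i).map (algebraMap R R')
  have hg : Submonoid.map (algebraTensorAlgEquiv (σ := σ) R R') (.powers (1 ⊗ₜ[R] g)) =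
      .powers g' := by
    rw [Submonoid.map_powers, algebraTensorAlgEquiv_tmul, one_smul, map_separatedProduct]
  let eloc : Localization.Away (1 ⊗ₜ[R] g : R' ⊗[R] MvPolynomial σ R) ≃ₐ[R']
      Localization.Away g' :=
    IsLocalization.algEquivOfAlgEquiv _ _ (algebraTensorAlgEquiv R R') hg
  exact ⟨σ, inferInstance, n, y, _, hy, ⟨eloc.symm.trans <|
    (IsLocalization.Away.tensorProductEquivTMulRight R R' g (Localization.Away g)).symm.trans <|
    Algebra.TensorProduct.congr .refl e⟩⟩

lemma IsSeparatedLocalization.quotient (h : IsSeparatedLocalization R B) (I : Ideal R) :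
    IsSeparatedLocalization (R ⧸ I) (B ⧸ I.map (algebraMap R B)) :=
  (h.baseChange (R ⧸ I)).of_algEquiv
    (Algebra.TensorProduct.quotIdealMapEquivQuotTensor B I).symm

end SeparatedLocalization

section Double

lemma ringKrullDim_le_of_isIntegral (R S : Type*) [CommRing R] [CommRing S] [Algebra R S]
    [Algebra.IsIntegral R S] : ringKrullDim S ≤ ringKrullDim R :=
  Order.krullDim_le_of_strictMono (PrimeSpectrum.comap (algebraMap R S)) fun _ _ h ↦
    Ideal.IsIntegral.comap_lt_comap h

/-- For an `R`-algebra `B` and `s : R`, the base change of `B` to `R[ω] / (ω² - s² ω)`. It carries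
two retractions to `B`, sending `ω` to `0` and to `s²`, which are congruent modulo `s²`. -/
abbrev Double {R : Type*} (B : Type*) [CommRing R] [CommRing B] [Algebra R B] (s : R) : Type _ :=
  QuadraticAlgebra R 0 (s ^ 2) ⊗[R] B

variable {R B : Type*} [CommRing R] [CommRing B] [Algebra R B] (s : R)

/-- The retraction of the double determined by a root `c ∈ {0, s²}` of `ω² - s² ω`. -/
def doubleEval (B : Type*) [CommRing B] [Algebra R B] (s c : R) (hc : c * c = s ^ 2 * c) :
    Double B s →ₐ[R] B :=
  Algebra.TensorProduct.lift
    ((Algebra.ofId R B).comp (QuadraticAlgebra.lift ⟨c, by simpa using hc⟩))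
    (AlgHom.id R B) fun _ _ ↦ Commute.all _ _

lemma doubleEval_tmul {c : R} (hc : c * c = s ^ 2 * c) (z : QuadraticAlgebra R 0 (s ^ 2))
    (b : B) : doubleEval B s c hc (z ⊗ₜ b) = algebraMap R B (z.re + z.im * c) * b := by
  simp [doubleEval, Algebra.ofId_apply]

lemma exists_doubleEval_eq_add (x : Double B s) : ∃ y,
    doubleEval B s (s ^ 2) rfl x =
      doubleEval B s 0 (by simp) x + algebraMap R B s ^ 2 * y := by
  induction x using TensorProduct.induction_on with
  | zero => exact ⟨0, by simp⟩
  | tmul z b =>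
    refine ⟨algebraMap R B z.im * b, ?_⟩
    simp only [doubleEval_tmul, map_add, map_mul, map_pow, map_zero]
    ring
  | add x y hx hy =>
    obtain ⟨a, ha⟩ := hx
    obtain ⟨b, hb⟩ := hy
    exact ⟨a + b, by rw [map_add, map_add, ha, hb]; ring⟩

-- If `u ⬝ᵥ v = 1` then `eᵢ - (ω wᵢ) u` is a left inverse of the lift `eᵢ + ω w` of `v` and `eᵢ`.
lemma exists_isUnimodular_double {ι : Type*} [Fintype ι] [DecidableEq ι] {v w : ι → B}
    (hv : IsUnimodular v) {i : ι} (hw : v = Pi.single i 1 + algebraMap R B s ^ 2 • w) :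
    ∃ V : ι → Double B s, IsUnimodular V ∧ doubleEval B s 0 (by simp) ∘ V = Pi.single i 1 ∧
      doubleEval B s (s ^ 2) rfl ∘ V = v := by
  obtain ⟨u, hu⟩ := hv
  let ω : Double B s := QuadraticAlgebra.omega ⊗ₜ 1
  let f : B →ₐ[R] Double B s := Algebra.TensorProduct.includeRight
  have hω : ω * ω = f (algebraMap R B s) ^ 2 * ω := by
    rw [AlgHom.commutes, ← map_pow, ← Algebra.smul_def, Algebra.TensorProduct.tmul_mul_tmul,
      QuadraticAlgebra.omega_mul_omega_eq_add, zero_smul, zero_add, one_mul,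
      TensorProduct.smul_tmul']
  have huw : f (u i) + f (algebraMap R B s) ^ 2 * f (u ⬝ᵥ w) = 1 := by
    rw [← map_pow, ← map_mul, ← map_add, ← map_one f, ← hu, hw, dotProduct_add, dotProduct_smul,
      dotProduct_single_one, smul_eq_mul]
  have hfuw : (f ∘ u) ⬝ᵥ (f ∘ w) = f (u ⬝ᵥ w) :=
    (RingHom.map_dotProduct (f : B →+* Double B s) u w).symm
  let V : ι → Double B s := Pi.single i 1 + ω • (f ∘ w)
  have hV {c : R} (hc : c * c = s ^ 2 * c) :
      doubleEval B s c hc ∘ V = Pi.single i 1 + algebraMap R B c • w := by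
    ext j
    simp [V, ω, f, doubleEval_tmul, Pi.single_apply, apply_ite, Algebra.smul_def]
  refine ⟨V, ⟨Pi.single i 1 - (ω * f (w i)) • (f ∘ u), ?_⟩, ?_, ?_⟩
  · simp only [V, sub_dotProduct, smul_dotProduct, dotProduct_add, dotProduct_smul,
      single_one_dotProduct, dotProduct_single_one, hfuw, smul_eq_mul, Pi.sub_apply, Pi.smul_apply,
      Pi.single_eq_same, Function.comp_apply]
    linear_combination (-ω * f (w i)) * huw - f (w i) * f (u ⬝ᵥ w) * hω
  · rw [hV, map_zero, zero_smul, add_zero]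
  · rw [hV, map_pow, ← hw]

theorem IsSeparatedLocalization.exists_smul_eq_single [IsNoetherianRing R]
    (h : IsSeparatedLocalization R B) {d k : ℕ} (hk : d < k) (hk2 : 2 ≤ k)
    (hd : ringKrullDim R ≤ d) {v w : Fin (k + 1) → B} (hv : IsUnimodular v) {i : Fin (k + 1)}
    (hw : v = Pi.single i 1 + algebraMap R B s ^ 2 • w) :
    ∃ σ ∈ elementarySubgroup (Fin (k + 1)) (Ideal.span {algebraMap R B s}),
      σ • v = Pi.single i 1 := by
  let D := QuadraticAlgebra R 0 (s ^ 2)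
  have : IsNoetherianRing D := IsNoetherianRing.of_finite R D
  have hD : ElementaryTransitive (Fin (k + 1)) (Double B s) :=
    (h.baseChange D).elementaryTransitive hk hk2
      ((ringKrullDim_le_of_isIntegral R D).trans hd)
  obtain ⟨V, hV, hV0, hV1⟩ := exists_isUnimodular_double s hv hw
  obtain ⟨σ, hσ, hσV⟩ := hD V hV i
  refine ⟨_, inv_map_mul_map_mem_elementarySubgroup (by simpa using hk2)
    (α := (doubleEval B s 0 (by simp) : Double B s →+* B))
    (β := (doubleEval B s (s ^ 2) rfl : Double B s →+* B)) (exists_doubleEval_eq_add s) hσ, ?_⟩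
  have hsmul (f : Double B s →ₐ[R] B) :
      Matrix.SpecialLinearGroup.map (f : Double B s →+* B) σ • (f ∘ V) = Pi.single i 1 := by
    refine (map_smul_comp (f : Double B s →+* B) σ V).trans ?_
    rw [hσV]
    exact comp_single_one _ _
  rw [mul_smul, ← hV1, hsmul, inv_smul_eq_iff, ← hV0, hsmul, hV0]

end Double

section UnimodularElement

variable (A : Type*) {M N : Type*} [CommRing A] [AddCommGroup M] [Module A M] [AddCommGroup N]
  [Module A N]

/-- An element of a module is *unimodular* if some linear functional takes the value `1` on it. -/
def IsUnimodularElement (v : M) : Prop := ∃ f : M →ₗ[A] A, f v = 1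

variable {A} {v : M}

lemma IsUnimodularElement.map_equiv (h : IsUnimodularElement A v) (e : M ≃ₗ[A] N) :
    IsUnimodularElement A (e v) := by
  obtain ⟨f, hf⟩ := h
  exact ⟨f ∘ₗ e.symm.toLinearMap, by simpa using hf⟩

lemma IsUnimodularElement.one_tmul (h : IsUnimodularElement A v) (B : Type*) [CommRing B]
    [Algebra A B] : IsUnimodularElement B ((1 : B) ⊗ₜ[A] v) := by
  obtain ⟨f, hf⟩ := h
  exact ⟨(TensorProduct.AlgebraTensorModule.rid A B B).toLinearMap ∘ₗ f.baseChange B, by simp [hf]⟩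

lemma IsUnimodularElement.isUnimodular_of_map {ι : Type*} [Fintype ι] {x : ι → A}
    {f : (ι → A) →ₗ[A] M} (h : IsUnimodularElement A (f x)) : IsUnimodular x := by
  classical
  obtain ⟨g, hg⟩ := h
  obtain ⟨u, hu⟩ := (dotProductEquiv A ι).surjective (g ∘ₗ f)
  exact ⟨u, (LinearMap.congr_fun hu x).trans hg⟩

end UnimodularElement

section Transvection

variable (A P : Type*) [CommRing A] [AddCommGroup P] [Module A P]

/-- The group of automorphisms of `A × P` generated by the transvections
`(a, p) ↦ (a, p + a • q)` and `(a, p) ↦ (a + θ p, p)`. -/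
def transvectionGroup : Subgroup ((A × P) ≃ₗ[A] A × P) :=
  Subgroup.closure
    ({e | ∃ q : P, ∀ x, e x = (x.1, x.2 + x.1 • q)} ∪
      {e | ∃ θ : P →ₗ[A] A, ∀ x, e x = (x.1 + θ x.2, x.2)})

variable {A P}

lemma exists_mem_transvectionGroup_add_smul (q : P) :
    ∃ e ∈ transvectionGroup A P, ∀ x, e x = (x.1, x.2 + x.1 • q) := by
  let e := LinearEquiv.transvection (f := LinearMap.fst A A P) (v := (0, q)) rfl
  have he (x : A × P) : e x = (x.1, x.2 + x.1 • q) :=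
    (LinearEquiv.transvection.apply _ x).trans (by simp [Prod.ext_iff])
  exact ⟨e, Subgroup.subset_closure (.inl ⟨q, he⟩), he⟩

lemma exists_mem_transvectionGroup_add_apply (θ : P →ₗ[A] A) :
    ∃ e ∈ transvectionGroup A P, ∀ x, e x = (x.1 + θ x.2, x.2) := by
  let e := LinearEquiv.transvection (f := θ ∘ₗ LinearMap.snd A A P) (v := (1, 0)) (by simp)
  have he (x : A × P) : e x = (x.1 + θ x.2, x.2) :=
    (LinearEquiv.transvection.apply _ x).trans (by simp [Prod.ext_iff])
  exact ⟨e, Subgroup.subset_closure (.inr ⟨θ, he⟩), he⟩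

variable (A P) in
/-- Reduction of `A × P` modulo an ideal `J` of `A`. -/
def prodMod (J : Ideal A) : A × P →ₗ[A] (A ⧸ J) × (A ⧸ J) ⊗[A] P :=
  (Algebra.linearMap A (A ⧸ J)).prodMap (TensorProduct.mk A (A ⧸ J) P 1)

lemma prodMod_apply (J : Ideal A) (x : A × P) :
    prodMod A P J x = (Ideal.Quotient.mk J x.1, 1 ⊗ₜ x.2) := rfl

variable (A P) in
lemma prodMod_bot_injective : Function.Injective (prodMod A P ⊥) := by
  refine (injective_iff_map_eq_zero _).2 fun x hx ↦ ?_
  rw [prodMod_apply, Prod.mk_eq_zero, Ideal.Quotient.eq_zero_iff_mem, Ideal.mem_bot] at hx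
  have hx₂ : x.2 ∈ LinearMap.ker (TensorProduct.mk A (A ⧸ ⊥) P 1) := hx.2
  rw [LinearMap.ker_tensorProductMk, Submodule.bot_smul, Submodule.mem_bot] at hx₂
  exact Prod.ext hx.1 hx₂

lemma IsUnimodularElement.map_prodMod {v : A × P} (hv : IsUnimodularElement A v) (J : Ideal A) :
    IsUnimodularElement (A ⧸ J) (prodMod A P J v) := by
  let e : (A ⧸ J) ⊗[A] (A × P) ≃ₗ[A ⧸ J] (A ⧸ J) × (A ⧸ J) ⊗[A] P :=
    (TensorProduct.prodRight A (A ⧸ J) (A ⧸ J) A P).trans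
      ((TensorProduct.AlgebraTensorModule.rid A (A ⧸ J) (A ⧸ J)).prodCongr (.refl _ _))
  have he : e (1 ⊗ₜ v) = prodMod A P J v := by
    simp [e, prodMod_apply, Algebra.smul_def]
  exact he ▸ (hv.one_tmul (A ⧸ J)).map_equiv e

lemma exists_prodMod_eq {J : Ideal A} {t : A} {x : A × P}
    (hx : prodMod A P (J ⊔ Ideal.span {t}) x = (1, 0)) : ∃ (a : A ⧸ J) (q : (A ⧸ J) ⊗[A] P),
      prodMod A P J x = (1 + Ideal.Quotient.mk J t * a, Ideal.Quotient.mk J t • q) := by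
  obtain ⟨hx₁, hx₂⟩ := Prod.mk.inj hx
  replace hx₂ : x.2 ∈ LinearMap.ker (TensorProduct.mk A (A ⧸ (J ⊔ Ideal.span {t})) P 1) := hx₂
  replace hx₁ := Ideal.Quotient.eq.1 (show Ideal.Quotient.mk _ x.1 = Ideal.Quotient.mk _ 1 from hx₁)
  rw [LinearMap.ker_tensorProductMk, Submodule.sup_smul] at hx₂
  obtain ⟨b, hb, c, hc, hbc⟩ := Submodule.mem_sup.1 hx₁
  obtain ⟨a, rfl⟩ := Ideal.mem_span_singleton'.1 hc
  obtain ⟨p, hp, p', hp', hpp'⟩ := Submodule.mem_sup.1 hx₂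
  rw [Submodule.ideal_span_singleton_smul] at hp'
  obtain ⟨q, -, rfl⟩ := hp'
  rw [← LinearMap.ker_tensorProductMk, LinearMap.mem_ker, TensorProduct.mk_apply] at hp
  refine ⟨Ideal.Quotient.mk J a, 1 ⊗ₜ q, Prod.ext ?_ ?_⟩
  · rw [prodMod_apply, ← sub_add_cancel x.1 1, ← hbc, map_add, map_add,
      Ideal.Quotient.eq_zero_iff_mem.2 hb, map_mul, map_one]
    ring
  · rw [prodMod_apply, ← hpp', TensorProduct.tmul_add, hp, zero_add]
    exact TensorProduct.tmul_smul t 1 q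

lemma exists_mem_transvectionGroup_prodMod [Module.Projective A P] (J : Ideal A)
    {e : ((A ⧸ J) × (A ⧸ J) ⊗[A] P) ≃ₗ[A ⧸ J] (A ⧸ J) × (A ⧸ J) ⊗[A] P}
    (he : e ∈ transvectionGroup (A ⧸ J) ((A ⧸ J) ⊗[A] P)) :
    ∃ e' ∈ transvectionGroup A P, ∀ x, prodMod A P J (e' x) = e (prodMod A P J x) := by
  induction he using Subgroup.closure_induction with
  | mem e he =>
    obtain ⟨q, he⟩ | ⟨θ, he⟩ := he
    · obtain ⟨q, rfl⟩ := TensorProduct.mk_surjective A P (A ⧸ J) Ideal.Quotient.mk_surjective q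
      obtain ⟨e', he', he''⟩ := exists_mem_transvectionGroup_add_smul (A := A) q
      refine ⟨e', he', fun x ↦ ?_⟩
      rw [he, he'', prodMod_apply, prodMod_apply, TensorProduct.tmul_add, TensorProduct.tmul_smul]
      rfl
    · obtain ⟨θ', hθ'⟩ := Module.projective_lifting_property (Submodule.mkQ J)
        (θ.restrictScalars A ∘ₗ TensorProduct.mk A (A ⧸ J) P 1) (Submodule.mkQ_surjective _)
      obtain ⟨e', he', he''⟩ := exists_mem_transvectionGroup_add_apply θ'
      refine ⟨e', he', fun x ↦ ?_⟩
      rw [he, he'', prodMod_apply, prodMod_apply, map_add]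
      exact congrArg (fun y ↦ (_ + y, _)) (LinearMap.congr_fun hθ' x.2)
  | one => exact ⟨1, one_mem _, fun _ ↦ rfl⟩
  | mul e₁ e₂ _ _ h₁ h₂ =>
    obtain ⟨e₁', he₁, h₁⟩ := h₁
    obtain ⟨e₂', he₂, h₂⟩ := h₂
    exact ⟨e₁' * e₂', mul_mem he₁ he₂, fun x ↦ by
      rw [LinearEquiv.mul_apply, h₁, h₂, LinearEquiv.mul_apply]⟩
  | inv e _ h =>
    obtain ⟨e', he', h⟩ := h
    refine ⟨e'⁻¹, inv_mem he', fun x ↦ e.injective ?_⟩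
    rw [← h, ← LinearEquiv.mul_apply, ← LinearEquiv.mul_apply, mul_inv_cancel, mul_inv_cancel]
    rfl

end Transvection

section Intertwining

variable {ι A M : Type*} [Fintype ι] [DecidableEq ι] [CommRing A] [AddCommGroup M] [Module A M]

/-- The matrices whose action on vectors is carried by `Φ` to an element of `H`. -/
def intertwinedSubgroup (Φ : (ι → A) →ₗ[A] M) (H : Subgroup (M ≃ₗ[A] M)) :
    Subgroup (SpecialLinearGroup ι A) where
  carrier := {σ | ∃ e ∈ H, ∀ x, e (Φ x) = Φ (σ • x)}
  one_mem' := ⟨1, one_mem _, fun x ↦ by rw [one_smul]; rfl⟩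
  mul_mem' := by
    rintro σ τ ⟨e, he, hσ⟩ ⟨e', he', hτ⟩
    exact ⟨e * e', mul_mem he he', fun x ↦ by rw [LinearEquiv.mul_apply, hτ, hσ, mul_smul]⟩
  inv_mem' := by
    rintro σ ⟨e, he, hσ⟩
    refine ⟨e⁻¹, inv_mem he, fun x ↦ e.injective ?_⟩
    rw [hσ, smul_inv_smul, ← LinearEquiv.mul_apply, mul_inv_cancel]
    rfl

lemma commutatorElement_mem {G : Type*} [Group G] {H : Subgroup G} {g h : G} (hg : g ∈ H)
    (hh : h ∈ H) : ⁅g, h⁆ ∈ H :=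
  mul_mem (mul_mem (mul_mem hg hh) (inv_mem hg)) (inv_mem hh)

variable {N : Type*} [AddCommGroup N] [Module A N] {r : ℕ} {s : A}
  (φ : (Fin r → A) →ₗ[A] N) (ψ : N →ₗ[A] (Fin r → A))

/-- The map `A × φ : A^(r+1) → A × N`. -/
def finSuccProd : (Fin (r + 1) → A) →ₗ[A] A × N :=
  (LinearMap.proj 0).prod (φ ∘ₗ LinearMap.funLeft A A Fin.succ)

lemma finSuccProd_cons (a : A) (x : Fin r → A) : finSuccProd φ (Fin.cons a x) = (a, φ x) := rfl

lemma finSuccProd_single_zero : finSuccProd φ (Pi.single 0 1) = (1, 0) := by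
  have h : (LinearMap.funLeft A A Fin.succ) (Pi.single (0 : Fin (r + 1)) (1 : A)) = 0 := by
    ext
    simp [LinearMap.funLeft_apply]
  simp [finSuccProd, h]

lemma finSuccProd_single_succ (j : Fin r) :
    finSuccProd φ (Pi.single j.succ 1) = (0, φ (Pi.single j 1)) := by
  have h : (LinearMap.funLeft A A Fin.succ) (Pi.single j.succ (1 : A)) = Pi.single j 1 := by
    ext
    simp [LinearMap.funLeft_apply, Pi.single_apply]
  simp [finSuccProd, h]

lemma transvection_smul {i j : ι} (hij : i ≠ j) (c : A) (x : ι → A) :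
    transvection hij c • x = x + (c * x j) • Pi.single i 1 := by
  rw [Matrix.SpecialLinearGroup.smul_def, transvection_coe, Matrix.smul_eq_mulVec,
    Matrix.add_mulVec, Matrix.one_mulVec, Matrix.single_mulVec_eq]

lemma transvection_succ_zero_mem_intertwinedSubgroup (j : Fin r) (c : A) :
    transvection j.succ_ne_zero c ∈
      intertwinedSubgroup (finSuccProd φ) (transvectionGroup A N) := by
  obtain ⟨e, he, hx⟩ := exists_mem_transvectionGroup_add_smul (A := A) (c • φ (Pi.single j 1))
  refine ⟨e, he, fun x ↦ ?_⟩
  rw [hx, transvection_smul, map_add, map_smul, finSuccProd_single_succ, mul_comm, mul_smul]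
  simp [finSuccProd]

variable {φ ψ} (h : ψ ∘ₗ φ = s • LinearMap.id)
include h

lemma transvection_zero_succ_mem_intertwinedSubgroup (j : Fin r) (c : A) :
    transvection j.succ_ne_zero.symm (c * s) ∈
      intertwinedSubgroup (finSuccProd φ) (transvectionGroup A N) := by
  obtain ⟨e, he, hx⟩ := exists_mem_transvectionGroup_add_apply (c • LinearMap.proj j ∘ₗ ψ)
  refine ⟨e, he, fun x ↦ ?_⟩
  have hψφ (y) : ψ (φ y) = s • y := LinearMap.congr_fun h y
  rw [hx, transvection_smul, map_add, map_smul, finSuccProd_single_zero]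
  simp [hψφ, mul_assoc, finSuccProd, LinearMap.funLeft_apply]

lemma elementarySubgroup_le_intertwinedSubgroup :
    elementarySubgroup (Fin (r + 1)) (Ideal.span {s}) ≤
      intertwinedSubgroup (finSuccProd φ) (transvectionGroup A N) := by
  refine elementarySubgroup_le_iff.2 fun i j hij c hc ↦ ?_
  obtain ⟨c, rfl⟩ := Ideal.mem_span_singleton'.1 hc
  obtain rfl | ⟨i, rfl⟩ := i.eq_zero_or_eq_succ
  · obtain ⟨j, rfl⟩ := Fin.exists_succ_eq_of_ne_zero hij.symm
    exact transvection_zero_succ_mem_intertwinedSubgroup h j c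
  obtain rfl | ⟨j, rfl⟩ := j.eq_zero_or_eq_succ
  · exact transvection_succ_zero_mem_intertwinedSubgroup φ i _
  rw [← one_mul (c * s), transvection_eq_commutator i.succ_ne_zero j.succ_ne_zero.symm hij]
  exact commutatorElement_mem (transvection_succ_zero_mem_intertwinedSubgroup φ i 1)
    (transvection_zero_succ_mem_intertwinedSubgroup h j c)

end Intertwining

section GenericallyTrivial

/-- A module `N` over an `R`-algebra `B` is *generically trivial* of rank `r` if there are maps
between `N` and `B^r` whose composites are multiplication by a non-nilpotent element of `R`. -/
def GenericallyTrivial (r : ℕ) (R B N : Type*) [CommRing R] [CommRing B] [Algebra R B]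
    [AddCommGroup N] [Module B N] : Prop :=
  ∃ s : R, ¬ IsNilpotent s ∧ ∃ (φ : (Fin r → B) →ₗ[B] N) (ψ : N →ₗ[B] (Fin r → B)),
    φ ∘ₗ ψ = algebraMap R B s • LinearMap.id ∧ ψ ∘ₗ φ = algebraMap R B s • LinearMap.id

variable {R A : Type*} [CommRing R] [IsNoetherianRing R] [CommRing A] [Algebra R A] {d r : ℕ}

-- One factor of `s` lifts `p` along `φ`; the row argument consumes the other two.
lemma IsSeparatedLocalization.exists_mem_transvectionGroup_apply_eq
    (h : IsSeparatedLocalization R A) (hr : d < r) (hr2 : 2 ≤ r) (hd : ringKrullDim R ≤ d)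
    {N : Type*} [AddCommGroup N] [Module A N] {φ : (Fin r → A) →ₗ[A] N} {ψ : N →ₗ[A] (Fin r → A)}
    {s : R} (hφψ : φ ∘ₗ ψ = algebraMap R A s • LinearMap.id)
    (hψφ : ψ ∘ₗ φ = algebraMap R A s • LinearMap.id) {a : A} {p : N}
    (hv : IsUnimodularElement A (1 + algebraMap R A s ^ 3 * a, algebraMap R A s ^ 3 • p)) :
    ∃ e ∈ transvectionGroup A N,
      e (1 + algebraMap R A s ^ 3 * a, algebraMap R A s ^ 3 • p) = (1, 0) := by
  generalize ht : algebraMap R A s = t at *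
  let V : Fin (r + 1) → A := Fin.cons (1 + t ^ 3 * a) (t ^ 2 • ψ p)
  have hV : finSuccProd φ V = (1 + t ^ 3 * a, t ^ 3 • p) := by
    have hp : φ (ψ p) = t • p := LinearMap.congr_fun hφψ p
    rw [finSuccProd_cons, map_smul, hp, smul_smul, ← pow_succ]
  have hw : V = Pi.single 0 1 + algebraMap R A s ^ 2 • Fin.cons (t * a) (ψ p) := by
    rw [ht]
    ext l
    cases l using Fin.cases with
    | zero =>
      simp only [V, Fin.cons_zero, Pi.add_apply, Pi.smul_apply, Pi.single_eq_same, smul_eq_mul]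
      ring
    | succ l => simp [V]
  rw [← hV] at hv ⊢
  obtain ⟨σ, hσ, hσV⟩ := h.exists_smul_eq_single s hr hr2 hd hv.isUnimodular_of_map hw
  rw [ht] at hσ
  obtain ⟨e, he, hx⟩ := elementarySubgroup_le_intertwinedSubgroup hψφ hσ
  refine ⟨e, he, ?_⟩
  rw [hx, hσV, finSuccProd_single_zero]

variable {P : Type*} [AddCommGroup P] [Module A P] [Module.Projective A P]

lemma IsSeparatedLocalization.exists_mem_transvectionGroup_prodMod_apply_eq
    (h : IsSeparatedLocalization R A) (hr : d < r) (hr2 : 2 ≤ r) (hd : ringKrullDim R ≤ d)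
    (hP : ∀ I : Ideal R, I ≠ ⊤ → GenericallyTrivial r (R ⧸ I) (A ⧸ I.map (algebraMap R A))
      ((A ⧸ I.map (algebraMap R A)) ⊗[A] P))
    {v : A × P} (hv : IsUnimodularElement A v) (I : Ideal R) :
    ∃ e ∈ transvectionGroup A P, prodMod A P (I.map (algebraMap R A)) (e v) = (1, 0) := by
  induction I using WellFoundedGT.induction with
  | ind I ih =>
  obtain rfl | hI := eq_or_ne I ⊤
  · have : Subsingleton (A ⧸ Ideal.map (algebraMap R A) ⊤) := by
      rw [Ideal.map_top]
      infer_instance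
    have : Subsingleton ((A ⧸ Ideal.map (algebraMap R A) ⊤) ⊗[A] P) :=
      Module.subsingleton (A ⧸ Ideal.map (algebraMap R A) ⊤) _
    exact ⟨1, one_mem _, Subsingleton.elim _ _⟩
  obtain ⟨s, hs, φ, ψ, hφψ, hψφ⟩ := hP I hI
  obtain ⟨s, rfl⟩ := Ideal.Quotient.mk_surjective s
  have hsI : s ^ 3 ∉ I := fun hsI ↦
    hs ⟨3, by rw [← map_pow, Ideal.Quotient.eq_zero_iff_mem.2 hsI]⟩
  obtain ⟨e, he, hev⟩ := ih (I ⊔ Ideal.span {s ^ 3})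
    (left_lt_sup.2 fun hle ↦ hsI (hle (Ideal.mem_span_singleton_self _)))
  rw [Ideal.map_sup, Ideal.map_span, Set.image_singleton] at hev
  obtain ⟨a, q, haq⟩ := exists_prodMod_eq hev
  have hs3 : Ideal.Quotient.mk (I.map (algebraMap R A)) (algebraMap R A (s ^ 3)) =
      algebraMap (R ⧸ I) (A ⧸ I.map (algebraMap R A)) (Ideal.Quotient.mk I s) ^ 3 := by
    rw [← map_pow, ← map_pow]
    rfl
  rw [hs3] at haq
  obtain ⟨e', he', he'q⟩ := (h.quotient I).exists_mem_transvectionGroup_apply_eq hr hr2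
    ((ringKrullDim_quotient_le I).trans hd) hφψ hψφ (haq ▸ (hv.map_equiv e).map_prodMod _)
  obtain ⟨e'', he'', h''⟩ := exists_mem_transvectionGroup_prodMod _ he'
  exact ⟨e'' * e, mul_mem he'' he, by rw [LinearEquiv.mul_apply, h'', haq, he'q]⟩

theorem IsSeparatedLocalization.exists_mem_transvectionGroup_apply_eq_one_zero
    (h : IsSeparatedLocalization R A) (hr : d < r) (hr2 : 2 ≤ r) (hd : ringKrullDim R ≤ d)
    (hP : ∀ I : Ideal R, I ≠ ⊤ → GenericallyTrivial r (R ⧸ I) (A ⧸ I.map (algebraMap R A))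
      ((A ⧸ I.map (algebraMap R A)) ⊗[A] P))
    {v : A × P} (hv : IsUnimodularElement A v) :
    ∃ e ∈ transvectionGroup A P, e v = (1, 0) := by
  obtain ⟨e, he, hev⟩ := h.exists_mem_transvectionGroup_prodMod_apply_eq hr hr2 hd hP hv ⊥
  rw [Ideal.map_bot] at hev
  exact ⟨e, he, prodMod_bot_injective A P (by rw [hev, prodMod_apply, map_one,
    TensorProduct.tmul_zero])⟩

end GenericallyTrivial

section Horseshoe

variable {B M' M M'' F' F'' : Type*} [CommRing B] [AddCommGroup M'] [Module B M']
  [AddCommGroup M] [Module B M] [AddCommGroup M''] [Module B M''] [AddCommGroup F'] [Module B F']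
  [AddCommGroup F''] [Module B F'']

lemma nonempty_linearEquiv_prod_of_exact [Module.Projective B M''] {i : M' →ₗ[B] M}
    {p : M →ₗ[B] M''} (hi : Function.Injective i) (hp : Function.Surjective p)
    (hip : Function.Exact i p) : Nonempty (M ≃ₗ[B] M' × M'') := by
  obtain ⟨l, hl⟩ := Module.projective_lifting_property p LinearMap.id hp
  exact ⟨(hip.splitSurjectiveEquiv hi ⟨l, hl⟩).1⟩

/-- The identification of `M'` with the kernel of `p` in an exact sequence `0 → M' → M → M''`. -/
def kerEquivOfExact {i : M' →ₗ[B] M} {p : M →ₗ[B] M''} (hi : Function.Injective i)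
    (hip : Function.Exact i p) : M' ≃ₗ[B] LinearMap.ker p :=
  (LinearEquiv.ofInjective i hi).trans (LinearEquiv.ofEq _ _ hip.linearMap_ker_eq.symm)

variable {i : M' →ₗ[B] M} {p : M →ₗ[B] M''} {f' : F' →ₗ[B] M'} {f'' : F'' →ₗ[B] M''}
  {l : F'' →ₗ[B] M}

lemma surjective_coprod_of_exact (hip : Function.Exact i p) (hl : p ∘ₗ l = f'')
    (hf' : Function.Surjective f') (hf'' : Function.Surjective f'') :
    Function.Surjective ((i ∘ₗ f').coprod l) := by
  intro m
  obtain ⟨y, hy⟩ := hf'' (p m)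
  obtain ⟨x, hx⟩ := (hip (m - l y)).1 (by
    rw [map_sub, ← hy, ← hl, LinearMap.comp_apply, sub_self])
  obtain ⟨z, rfl⟩ := hf' x
  exact ⟨(z, y), by simp [hx]⟩

lemma exists_exact_ker_coprod (hi : Function.Injective i) (hip : Function.Exact i p)
    (hl : p ∘ₗ l = f'') (hf' : Function.Surjective f') :
    ∃ (j : LinearMap.ker f' →ₗ[B] LinearMap.ker ((i ∘ₗ f').coprod l))
      (q : LinearMap.ker ((i ∘ₗ f').coprod l) →ₗ[B] LinearMap.ker f''),
      Function.Injective j ∧ Function.Surjective q ∧ Function.Exact j q := by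
  have hker (x : F' × F'') (hx : x ∈ LinearMap.ker ((i ∘ₗ f').coprod l)) : f'' x.2 = 0 := by
    have : i (f' x.1) + l x.2 = 0 := by simpa using hx
    have hl' : p (l x.2) = f'' x.2 := LinearMap.congr_fun hl x.2
    simpa [hip.apply_apply_eq_zero, hl'] using congrArg p this
  refine ⟨(LinearMap.inl B F' F'').restrict fun x hx ↦ by simp [LinearMap.mem_ker.1 hx],
    (LinearMap.snd B F' F'').restrict hker, ?_, ?_, ?_⟩
  · rintro ⟨x, hx⟩ ⟨y, hy⟩ hxy
    exact Subtype.ext (congrArg (fun z ↦ z.1.1) hxy)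
  · rintro ⟨y, hy⟩
    obtain ⟨x, hx⟩ := (hip (l y)).1 ((LinearMap.congr_fun hl y).trans hy)
    obtain ⟨z, rfl⟩ := hf' x
    exact ⟨⟨(-z, y), by simp [hx]⟩, rfl⟩
  · rintro ⟨⟨x, y⟩, hxy⟩
    constructor
    · intro h
      obtain rfl : y = 0 := congrArg Subtype.val h
      have : i (f' x) = 0 := by simpa using hxy
      exact ⟨⟨x, hi (this.trans (map_zero i).symm)⟩, rfl⟩
    · rintro ⟨⟨z, hz⟩, h⟩
      rw [← h]
      rfl

end Horseshoe

/-- `M` has a resolution of length at most `n` by finite free `B`-modules. -/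
def HasFreeResolution (B : Type u) [CommRing B] :
    ℕ → ∀ (M : Type u) [AddCommGroup M] [Module B M], Prop
  | 0, M, _, _ => Module.Finite B M ∧ Module.Free B M
  | n + 1, M, _, _ => ∃ (k : ℕ) (f : (Fin k → B) →ₗ[B] M),
      Function.Surjective f ∧ HasFreeResolution B n (LinearMap.ker f)

namespace HasFreeResolution

variable {B : Type u} [CommRing B] {n : ℕ} {M' M M'' F : Type u} [AddCommGroup M'] [Module B M']
  [AddCommGroup M] [Module B M] [AddCommGroup M''] [Module B M''] [AddCommGroup F] [Module B F]

lemma of_linearEquiv (e : M ≃ₗ[B] M') (h : HasFreeResolution B n M) :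
    HasFreeResolution B n M' := by
  cases n with
  | zero =>
    obtain ⟨_, _⟩ := h
    exact ⟨Module.Finite.equiv e, Module.Free.of_equiv e⟩
  | succ n =>
    obtain ⟨k, f, hf, hker⟩ := h
    refine ⟨k, e.toLinearMap ∘ₗ f, e.surjective.comp hf, ?_⟩
    rwa [LinearMap.ker_comp_of_ker_eq_bot _ e.ker]

lemma of_exact [Module.Free B F] [Module.Finite B F] {i : M' →ₗ[B] F} {f : F →ₗ[B] M}
    (hi : Function.Injective i) (hf : Function.Surjective f) (hif : Function.Exact i f)
    (h : HasFreeResolution B n M') : HasFreeResolution B (n + 1) M := by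
  let e : (Fin (Fintype.card (Module.Free.ChooseBasisIndex B F)) → B) ≃ₗ[B] F :=
    (LinearEquiv.funCongrLeft B B (Fintype.equivFin _)).trans
      (Module.Free.chooseBasis B F).equivFun.symm
  refine ⟨_, f ∘ₗ e.toLinearMap, hf.comp e.surjective, ?_⟩
  refine h.of_linearEquiv (kerEquivOfExact (i := e.symm.toLinearMap ∘ₗ i)
    (e.symm.injective.comp hi) fun x ↦ ?_)
  simp [hif (e x), LinearEquiv.symm_apply_eq]

lemma succ (h : HasFreeResolution B n M) : HasFreeResolution B (n + 1) M := by
  induction n generalizing M with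
  | zero =>
    obtain ⟨_, _⟩ := h
    refine of_exact (M' := PUnit.{u + 1}) (i := 0) (f := LinearMap.id)
      (Function.injective_of_subsingleton _) Function.surjective_id (fun x ↦ ?_)
      ⟨inferInstance, inferInstance⟩
    simp [eq_comm]
  | succ n ih =>
    obtain ⟨k, f, hf, hker⟩ := h
    exact ⟨k, f, hf, ih hker⟩

lemma mono {m : ℕ} (hnm : n ≤ m) (h : HasFreeResolution B n M) : HasFreeResolution B m M := by
  induction m, hnm using Nat.le_induction with
  | base => exact h
  | succ m _ ih => exact ih.succ

lemma of_exact_middle {i : M' →ₗ[B] M} {p : M →ₗ[B] M''} (hi : Function.Injective i)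
    (hp : Function.Surjective p) (hip : Function.Exact i p) (h' : HasFreeResolution B n M')
    (h'' : HasFreeResolution B n M'') : HasFreeResolution B n M := by
  induction n generalizing M' M M'' with
  | zero =>
    obtain ⟨_, _⟩ := h'
    obtain ⟨_, _⟩ := h''
    obtain ⟨e⟩ := nonempty_linearEquiv_prod_of_exact hi hp hip
    exact ⟨Module.Finite.equiv e.symm, Module.Free.of_equiv e.symm⟩
  | succ n ih =>
    obtain ⟨a, f', hf', hker'⟩ := h'
    obtain ⟨b, f'', hf'', hker''⟩ := h''
    obtain ⟨l, hl⟩ := Module.projective_lifting_property p f'' hp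
    obtain ⟨j, q, hj, hq, hjq⟩ := exists_exact_ker_coprod hi hip hl hf'
    exact of_exact (Submodule.subtype_injective _) (surjective_coprod_of_exact hip hl hf' hf'')
      (LinearMap.exact_subtype_ker_map _) (ih hj hq hjq hker' hker'')

lemma of_exact_right {i : M' →ₗ[B] M} {p : M →ₗ[B] M''} (hi : Function.Injective i)
    (hp : Function.Surjective p) (hip : Function.Exact i p) (h' : HasFreeResolution B n M')
    (h : HasFreeResolution B (n + 1) M) : HasFreeResolution B (n + 1) M'' := by
  obtain ⟨k, f, hf, hker⟩ := h
  refine ⟨k, p ∘ₗ f, hp.comp hf, ?_⟩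
  refine of_exact_middle (M'' := LinearMap.ker p)
    (i := Submodule.inclusion (LinearMap.ker_le_ker_comp f p))
    (p := f.restrict (q := LinearMap.ker p) fun _ hx ↦ hx) (Submodule.inclusion_injective _) ?_ ?_
    hker (h'.of_linearEquiv (kerEquivOfExact hi hip))
  · rintro ⟨y, hy⟩
    obtain ⟨x, rfl⟩ := hf y
    exact ⟨⟨x, hy⟩, rfl⟩
  · rintro ⟨x, hx⟩
    constructor
    · exact fun h ↦ ⟨⟨x, congrArg Subtype.val h⟩, rfl⟩
    · rintro ⟨⟨z, hz⟩, h⟩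
      obtain rfl : z = x := congrArg Subtype.val h
      exact Subtype.ext hz

end HasFreeResolution

section BaseChange

lemma exact_baseChange_subtype_ker {B M F : Type*} (B' : Type*) [CommRing B] [CommRing B']
    [Algebra B B'] [AddCommGroup F] [Module B F] [AddCommGroup M] [Module B M] {f : F →ₗ[B] M}
    (hf : Function.Surjective f) :
    Function.Exact ((LinearMap.ker f).subtype.baseChange B') (f.baseChange B') := by
  simp only [LinearMap.baseChange_eq_ltensor]
  exact lTensor_exact _ (LinearMap.exact_subtype_ker_map f) hf

variable {B M : Type u} [CommRing B] [AddCommGroup M] [Module B M] {n : ℕ}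

lemma HasFreeResolution.baseChange (B' : Type u) [CommRing B'] [Algebra B B'] [Module.Flat B B']
    (h : HasFreeResolution B n M) : HasFreeResolution B' n (B' ⊗[B] M) := by
  induction n generalizing M with
  | zero =>
    obtain ⟨_, _⟩ := h
    exact ⟨inferInstance, inferInstance⟩
  | succ n ih =>
    obtain ⟨k, f, hf, hker⟩ := h
    exact of_exact
      (Module.Flat.lTensor_preserves_injective_linearMap _ (Submodule.subtype_injective _))
      (LinearMap.lTensor_surjective _ hf) (exact_baseChange_subtype_ker B' hf) (ih hker)

lemma isStablyFree_of_linearEquiv_prod {B F L M : Type*} [CommRing B] [AddCommGroup F]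
    [Module B F] [AddCommGroup L] [Module B L] [AddCommGroup M] [Module B M] [Module.Finite B F]
    [Module.Free B F] [Module.IsStablyFree B L] (e : F ≃ₗ[B] L × M) : Module.IsStablyFree B M := by
  obtain ⟨N, _, _, _, _, _⟩ := Module.IsStablyFree.exist_free_prod B L
  have : Module.Finite B L := Module.Finite.of_surjective (LinearMap.fst B L M ∘ₗ e.toLinearMap)
    (Prod.fst_surjective.comp e.surjective)
  have : Module.Free B (M × (L × N)) := Module.Free.of_equiv <|
    (e.prodCongr (LinearEquiv.refl B N)).trans <|
    ((LinearEquiv.prodComm B L M).prodCongr (LinearEquiv.refl B N)).trans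
      (LinearEquiv.prodAssoc B M L N)
  exact Module.IsStablyFree.of_free_prod B M (L × N)

lemma HasFreeResolution.isStablyFree_baseChange (B' : Type*) [CommRing B'] [Algebra B B']
    [Module.Flat B B'] (h : HasFreeResolution B n M) [Module.Projective B' (B' ⊗[B] M)] :
    Module.IsStablyFree B' (B' ⊗[B] M) := by
  induction n generalizing M with
  | zero =>
    obtain ⟨_, _⟩ := h
    infer_instance
  | succ n ih =>
    obtain ⟨k, f, hf, hker⟩ := h
    obtain ⟨e⟩ := nonempty_linearEquiv_prod_of_exact
      (i := (LinearMap.ker f).subtype.baseChange B') (p := f.baseChange B')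
      (Module.Flat.lTensor_preserves_injective_linearMap _ (Submodule.subtype_injective _))
      (LinearMap.lTensor_surjective _ hf) (exact_baseChange_subtype_ker B' hf)
    have : Module.Projective B' (B' ⊗[B] LinearMap.ker f) := Module.Projective.of_split
      (e.symm.toLinearMap ∘ₗ LinearMap.inl B' _ _) (LinearMap.fst B' _ _ ∘ₗ e.toLinearMap)
      (by ext; simp)
    have := ih hker
    exact isStablyFree_of_linearEquiv_prod e

end BaseChange

section Pencil

variable {B L L' M : Type*} [CommRing B] [AddCommGroup L] [Module B L] [AddCommGroup L']
  [Module B L']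

/-- The linear pencil `X • i - x`, as a map of extended modules `L[X] → L'[X]`. -/
def pencil (i x : L →ₗ[B] L') : PolynomialModule B L →ₗ[B[X]] PolynomialModule B L' where
  toFun g := (Polynomial.X : B[X]) • PolynomialModule.map B i g - PolynomialModule.map B x g
  map_add' g h := by simp only [map_add, smul_add]; abel
  map_smul' c g := by
    simp only [PolynomialModule.map_smul, Algebra.algebraMap_self, Polynomial.map_id, smul_sub,
      smul_comm c (Polynomial.X : B[X]), RingHom.id_apply]

lemma pencil_single (i x : L →ₗ[B] L') (n : ℕ) (m : L) :
    pencil i x (.single B n m) = .single B (n + 1) (i m) - .single B n (x m) := by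
  simp [pencil, ← Polynomial.monomial_one_one_eq_X, PolynomialModule.monomial_smul_single,
    add_comm]

lemma exists_forall_coeff_eq_zero (g : PolynomialModule B L) :
    ∃ N, ∀ n ≥ N, g.coeff n = 0 := by
  obtain ⟨N, hN⟩ := g.coeff.support.exists_nat_subset_range
  exact ⟨N, fun n hn ↦ Finsupp.notMem_support_iff.1 fun h ↦
    hn.not_gt (Finset.mem_range.1 (hN h))⟩

lemma coeff_pencil_succ (i x : L →ₗ[B] L') (g : PolynomialModule B L) (n : ℕ) :
    (pencil i x g).coeff (n + 1) = i (g.coeff n) - x (g.coeff (n + 1)) := by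
  induction g using PolynomialModule.induction_linear with
  | zero => simp
  | add f g hf hg => simp [hf, hg]; abel
  | single k m =>
    have hsub (f g : PolynomialModule B L') (j : ℕ) : (f - g).coeff j = f.coeff j - g.coeff j :=
      DFunLike.congr_fun (map_sub (PolynomialModule.coeffAddEquiv (R := B)) f g) j
    rw [pencil_single, hsub]
    simp [Finsupp.single_apply, apply_ite i, apply_ite x]

lemma pencil_injective {i : L →ₗ[B] L'} (x : L →ₗ[B] L') (hi : Function.Injective i) :
    Function.Injective (pencil i x) := by
  rw [injective_iff_map_eq_zero]
  intro g hg
  have hstep (n : ℕ) (hn : g.coeff (n + 1) = 0) : g.coeff n = 0 := by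
    have := coeff_pencil_succ i x g n
    rw [hg, hn, map_zero, sub_zero] at this
    exact (map_eq_zero_iff i hi).1 this.symm
  obtain ⟨N, hN⟩ := exists_forall_coeff_eq_zero g
  have hzero (k n : ℕ) (hk : N ≤ n + k) : g.coeff n = 0 := by
    induction k generalizing n with
    | zero => exact hN n hk
    | succ k ih => exact hstep n (ih (n + 1) (by omega))
  exact PolynomialModule.ext (Finsupp.ext fun n ↦ hzero N n (by omega))

variable [AddCommGroup M] [Module B M] [Module B[X] M] [IsScalarTower B B[X] M]

/-- The `B[X]`-linear extension `∑ Xⁿ mₙ ↦ ∑ Xⁿ • s mₙ` of a `B`-linear map `s`. -/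
def polynomialLift (s : L →ₗ[B] M) : PolynomialModule B L →ₗ[B[X]] M where
  toFun g := PolynomialModule.eval Polynomial.X (PolynomialModule.map B[X] s g)
  map_add' g h := by simp only [map_add]
  map_smul' c g := by
    simp [PolynomialModule.map_smul, PolynomialModule.eval_smul, Polynomial.eval_map]

@[simp]
lemma polynomialLift_single (s : L →ₗ[B] M) (n : ℕ) (m : L) :
    polynomialLift s (.single B n m) = (Polynomial.X ^ n : B[X]) • s m := by
  simp [polynomialLift]

lemma polynomialLift_eq_sum (s : L →ₗ[B] M) (g : PolynomialModule B L) :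
    polynomialLift s g = g.coeff.sum fun n m ↦ (Polynomial.X ^ n : B[X]) • s m := by
  induction g using PolynomialModule.induction_linear with
  | zero => simp
  | add f g hf hg =>
    rw [map_add, hf, hg, PolynomialModule.coeff_add, Finsupp.sum_add_index'] <;> simp
  | single k m => simp

lemma range_polynomialLift (s : L →ₗ[B] M) :
    LinearMap.range (polynomialLift s) = Submodule.span B[X] (Set.range s) := by
  refine le_antisymm ?_ (Submodule.span_le.2 ?_)
  · rintro _ ⟨g, rfl⟩
    rw [polynomialLift_eq_sum]
    exact Submodule.sum_mem _ fun n _ ↦ Submodule.smul_mem _ _ (Submodule.subset_span ⟨_, rfl⟩)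
  · rintro _ ⟨m, rfl⟩
    exact ⟨.single B 0 m, by simp⟩

lemma polynomialLift_pencil {i x : L →ₗ[B] L'} {s : L' →ₗ[B] M}
    (hx : ∀ m, s (x m) = (Polynomial.X : B[X]) • s (i m)) (g : PolynomialModule B L) :
    polynomialLift s (pencil i x g) = 0 := by
  induction g using PolynomialModule.induction_linear with
  | zero => simp
  | add f g hf hg => rw [map_add, map_add, hf, hg, add_zero]
  | single k m => simp [pencil_single, hx, pow_succ, mul_smul]

lemma exact_pencil_of_coeff_mem_range {i x : L →ₗ[B] L'} {s : L' →ₗ[B] M}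
    (hs : Function.Injective s) (hx : ∀ m, s (x m) = (Polynomial.X : B[X]) • s (i m))
    (hlead : ∀ g : PolynomialModule B L', polynomialLift s g = 0 → ∀ n,
      (∀ k > n, g.coeff k = 0) → g.coeff n ∈ LinearMap.range i) :
    Function.Exact (pencil i x) (polynomialLift s) := by
  have hrange (n : ℕ) (g : PolynomialModule B L') (hg : polynomialLift s g = 0)
      (hn : ∀ k > n, g.coeff k = 0) : g ∈ Set.range (pencil i x) := by
    induction n generalizing g with
    | zero =>
      have hg0 : g = .single B 0 (g.coeff 0) := by
        ext (_ | k)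
        · simp
        · simp [hn (k + 1) k.succ_pos]
      rw [hg0, polynomialLift_single, pow_zero, one_smul, map_eq_zero_iff s hs] at hg
      exact ⟨0, by rw [hg0, hg]; simp⟩
    | succ n ih =>
      obtain ⟨m, hm⟩ := hlead g hg (n + 1) hn
      have hcoeff (k : ℕ) (hk : n < k) :
          (g + pencil i x (.single B n (-m))).coeff k = 0 := by
        obtain ⟨k, rfl⟩ := Nat.exists_eq_succ_of_ne_zero hk.ne_bot
        obtain rfl | hnk := (Nat.lt_succ_iff.1 hk).eq_or_lt
        · simp [coeff_pencil_succ, hm]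
        · simp [coeff_pencil_succ, hn (k + 1) (by omega), hnk.ne, hk.ne]
      obtain ⟨h, hh⟩ := ih (g + pencil i x (.single B n (-m)))
        (by rw [map_add, hg, polynomialLift_pencil hx, add_zero]) hcoeff
      exact ⟨h - .single B n (-m), by rw [map_sub, hh, add_sub_cancel_right]⟩
  intro g
  refine ⟨fun hg ↦ ?_, fun ⟨h, hh⟩ ↦ hh ▸ polynomialLift_pencil hx h⟩
  obtain ⟨N, hN⟩ := exists_forall_coeff_eq_zero g
  exact hrange N g hg fun k hk ↦ hN k hk.le

variable {L₁ L₁' M₁ : Type*} [AddCommGroup L₁] [Module B L₁] [AddCommGroup L₁'] [Module B L₁']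
  [AddCommGroup M₁] [Module B M₁] [Module B[X] M₁] [IsScalarTower B B[X] M₁]

lemma polynomialLift_map {s : L →ₗ[B] M} {s₁ : L₁ →ₗ[B] M₁} {π : L →ₗ[B] L₁} {q : M →ₗ[B[X]] M₁}
    (hq : ∀ m, s₁ (π m) = q (s m)) (g : PolynomialModule B L) :
    polynomialLift s₁ (PolynomialModule.map B π g) = q (polynomialLift s g) := by
  induction g using PolynomialModule.induction_linear with
  | zero => simp
  | add f g hf hg => simp only [map_add, hf, hg]
  | single k m => simp [hq]

lemma pencil_map {i x : L →ₗ[B] L'} {i₁ x₁ : L₁ →ₗ[B] L₁'} {π : L →ₗ[B] L₁} {π' : L' →ₗ[B] L₁'}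
    (hi : ∀ m, i₁ (π m) = π' (i m)) (hx : ∀ m, x₁ (π m) = π' (x m)) (g : PolynomialModule B L) :
    pencil i₁ x₁ (PolynomialModule.map B π g) = PolynomialModule.map B π' (pencil i x g) := by
  induction g using PolynomialModule.induction_linear with
  | zero => simp
  | add f g hf hg => simp only [map_add, hf, hg]
  | single k m => simp [pencil_single, hi, hx]

lemma exact_pencil_of_surjective {i x : L →ₗ[B] L'} {s : L' →ₗ[B] M} {i₁ x₁ : L₁ →ₗ[B] L₁'}
    {s₁ : L₁' →ₗ[B] M₁} {π : L →ₗ[B] L₁} {π' : L' →ₗ[B] L₁'} {q : M →ₗ[B[X]] M₁}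
    (h : Function.Exact (pencil i x) (polynomialLift s)) (hπ' : Function.Surjective π')
    (hi : ∀ m, i₁ (π m) = π' (i m)) (hx : ∀ m, x₁ (π m) = π' (x m))
    (hq : ∀ m, s₁ (π' m) = q (s m)) (hx₁ : ∀ m, s₁ (x₁ m) = (Polynomial.X : B[X]) • s₁ (i₁ m))
    (hker : LinearMap.ker q ≤ Submodule.span B[X] (s '' LinearMap.ker π')) :
    Function.Exact (pencil i₁ x₁) (polynomialLift s₁) := by
  intro g₁
  refine ⟨fun hg₁ ↦ ?_, fun ⟨h, hh⟩ ↦ hh ▸ polynomialLift_pencil hx₁ h⟩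
  obtain ⟨g, rfl⟩ : ∃ g, PolynomialModule.map B π' g = g₁ := by
    obtain ⟨c, hc⟩ := Finsupp.mapRange_surjective π' (map_zero π') hπ' g₁.coeff
    exact ⟨.ofCoeff B c, PolynomialModule.ext hc⟩
  rw [polynomialLift_map hq] at hg₁
  obtain ⟨k, hk⟩ : polynomialLift s g ∈
      LinearMap.range (polynomialLift (s ∘ₗ (LinearMap.ker π').subtype)) := by
    rw [range_polynomialLift, LinearMap.coe_comp, Set.range_comp, Submodule.coe_subtype,
      Subtype.range_coe]
    exact hker hg₁
  let k' := PolynomialModule.map B (LinearMap.ker π').subtype k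
  have hk' : polynomialLift s k' = polynomialLift s g := by
    rw [← hk]
    exact polynomialLift_map (q := LinearMap.id) (fun _ ↦ rfl) k
  have hπk : PolynomialModule.map B π' k' = 0 := by
    ext n
    simp [k', PolynomialModule.map, PolynomialModule.coeffLinearEquiv]
  obtain ⟨f, hf⟩ := (h (g - k')).1 (by rw [map_sub, hk', sub_self])
  exact ⟨PolynomialModule.map B π f, by rw [pencil_map hi hx, hf, map_sub, hπk, sub_zero]⟩

end Pencil

section DegreeLT

variable (B : Type*) [CommRing B] (ι : Type*)

/-- The `B`-submodule of the free module `B[X]^ι` whose coordinates have degree less than `n`. -/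
def piDegreeLT (n : ℕ) : Submodule B (ι → B[X]) :=
  Submodule.pi Set.univ fun _ ↦ Polynomial.degreeLT B n

variable {B ι} in
lemma mem_piDegreeLT {n : ℕ} {v : ι → B[X]} :
    v ∈ piDegreeLT B ι n ↔ ∀ a k, n ≤ k → (v a).coeff k = 0 := by
  simp [piDegreeLT, Submodule.mem_pi, Polynomial.mem_degreeLT, Polynomial.degree_lt_iff_coeff_zero]

lemma piDegreeLT_le_succ (n : ℕ) : piDegreeLT B ι n ≤ piDegreeLT B ι (n + 1) := fun _ hv ↦
  mem_piDegreeLT.2 fun a k hk ↦ mem_piDegreeLT.1 hv a k (n.le_succ.trans hk)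

lemma X_smul_mem_piDegreeLT {n : ℕ} {v : ι → B[X]} (hv : v ∈ piDegreeLT B ι n) :
    DistribSMul.toLinearMap B (ι → B[X]) (Polynomial.X : B[X]) v ∈ piDegreeLT B ι (n + 1) := by
  refine mem_piDegreeLT.2 fun a k hk ↦ ?_
  obtain ⟨k, rfl⟩ := Nat.exists_eq_add_of_le' (Nat.le_of_add_left_le hk)
  simpa using mem_piDegreeLT.1 hv a k (by omega)

lemma finite_piDegreeLT [Finite ι] (n : ℕ) : Module.Finite B (piDegreeLT B ι n) := by
  let f : (ι → Polynomial.degreeLT B n) →ₗ[B] piDegreeLT B ι n :=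
    { toFun v := ⟨fun a ↦ v a, fun a _ ↦ (v a).2⟩
      map_add' _ _ := rfl
      map_smul' _ _ := rfl }
  exact .of_surjective f fun v ↦ ⟨fun a ↦ ⟨v.1 a, v.2 a trivial⟩, rfl⟩

lemma exists_subset_piDegreeLT [Finite ι] (T : Finset (ι → B[X])) :
    ∃ n, (T : Set (ι → B[X])) ⊆ piDegreeLT B ι n := by
  cases nonempty_fintype ι
  refine ⟨T.sup fun v ↦ Finset.univ.sup fun a ↦ (v a).natDegree + 1, fun v hv ↦
    mem_piDegreeLT.2 fun a k hk ↦ Polynomial.coeff_eq_zero_of_natDegree_lt ?_⟩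
  have h₁ := Finset.le_sup (f := fun v : ι → B[X] ↦ Finset.univ.sup fun a ↦ (v a).natDegree + 1) hv
  have h₂ := Finset.le_sup (f := fun a ↦ (v a).natDegree + 1) (Finset.mem_univ a)
  omega

lemma span_piDegreeLT_succ [Finite ι] (n : ℕ) :
    Submodule.span B[X] (piDegreeLT B ι (n + 1) : Set (ι → B[X])) = ⊤ := by
  classical
  cases nonempty_fintype ι
  refine eq_top_iff.2 fun v _ ↦ pi_eq_sum_univ' v ▸ Submodule.sum_mem _ fun a _ ↦
    Submodule.smul_mem _ _ (Submodule.subset_span (mem_piDegreeLT.2 fun b k hk ↦ ?_))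
  obtain rfl | hab := eq_or_ne b a
  · simp [Polynomial.coeff_one, Nat.ne_of_gt ((Nat.zero_lt_succ n).trans_le hk)]
  · simp [hab]

lemma exact_pencil_piDegreeLT (n : ℕ) :
    Function.Exact
      (pencil (Submodule.inclusion (piDegreeLT_le_succ B ι n))
        ((DistribSMul.toLinearMap B (ι → B[X]) (Polynomial.X : B[X])).restrict
          fun _ ↦ X_smul_mem_piDegreeLT B ι))
      (polynomialLift (piDegreeLT B ι (n + 1)).subtype) := by
  refine exact_pencil_of_coeff_mem_range Subtype.val_injective (fun _ ↦ rfl) fun g hg N hN ↦ ?_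
  rw [Submodule.range_inclusion, Submodule.mem_comap, mem_piDegreeLT]
  intro a k hk
  obtain rfl | hnk := hk.eq_or_lt'
  · have hsum : ((polynomialLift (piDegreeLT B ι (k + 1)).subtype g) a).coeff (k + N) = 0 := by
      rw [hg]; rfl
    rw [polynomialLift_eq_sum, Finsupp.sum, Finset.sum_apply, Polynomial.finsetSum_coeff,
      Finset.sum_eq_single N] at hsum
    · simpa [Polynomial.coeff_X_pow_mul] using hsum
    · intro j _ hjN
      obtain hlt | hgt := hjN.lt_or_gt
      · have hz := mem_piDegreeLT.1 (g.coeff j).2 a (k + N - j) (by omega)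
        rw [show k + N = k + N - j + j by omega]
        simpa [Polynomial.coeff_X_pow_mul] using hz
      · simp [hN j hgt]
    · intro hj
      simp [Finsupp.notMem_support_iff.1 hj]
  · exact mem_piDegreeLT.1 (g.coeff N).2 a k hnk

end DegreeLT

section Submodule

variable {B E M : Type*} [CommRing B] [AddCommGroup E] [Module B E] [Module B[X] E]
  [IsScalarTower B B[X] E] [AddCommGroup M] [Module B M] [Module B[X] M] [IsScalarTower B B[X] M]

lemma exact_pencil_map {D D' : Submodule B E} {q : E →ₗ[B[X]] M} (hD : D ≤ D')
    (hX : ∀ v ∈ D, DistribSMul.toLinearMap B E (Polynomial.X : B[X]) v ∈ D')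
    (hX' : ∀ m ∈ D.map (q.restrictScalars B),
      DistribSMul.toLinearMap B M (Polynomial.X : B[X]) m ∈ D'.map (q.restrictScalars B))
    (hker : LinearMap.ker q ≤ Submodule.span B[X] (D' ∩ LinearMap.ker q))
    (h : Function.Exact (pencil (Submodule.inclusion hD) (LinearMap.restrict _ hX))
      (polynomialLift D'.subtype)) :
    Function.Exact
      (pencil (Submodule.inclusion (Submodule.map_mono hD)) (LinearMap.restrict _ hX'))
      (polynomialLift (D'.map (q.restrictScalars B)).subtype) := by
  refine exact_pencil_of_surjective h (q := q)
    (π := (q.restrictScalars B).restrict fun v hv ↦ Submodule.mem_map_of_mem hv)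
    (π' := (q.restrictScalars B).restrict fun v hv ↦ Submodule.mem_map_of_mem hv)
    ?_ (fun _ ↦ rfl) (fun v ↦ Subtype.ext (map_smul q _ _).symm) (fun _ ↦ rfl) (fun _ ↦ rfl)
    (hker.trans (Submodule.span_mono fun v hv ↦ ⟨⟨v, hv.1⟩, Subtype.ext hv.2, rfl⟩))
  rintro ⟨_, v, hv, rfl⟩
  exact ⟨⟨v, hv⟩, rfl⟩

lemma exists_exact_pencil [IsNoetherianRing B] [Module.Finite B[X] M] :
    ∃ (L L' : Submodule B M) (i x : L →ₗ[B] L'), Module.Finite B L ∧ Module.Finite B L' ∧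
      Function.Injective (pencil i x) ∧ Function.Surjective (polynomialLift L'.subtype) ∧
      Function.Exact (pencil i x) (polynomialLift L'.subtype) := by
  obtain ⟨k, q, hq⟩ := Module.Finite.exists_fin' B[X] M
  obtain ⟨T, hT⟩ := IsNoetherian.noetherian (LinearMap.ker q)
  obtain ⟨n, hn⟩ := exists_subset_piDegreeLT B (Fin k) T
  have hD := piDegreeLT_le_succ B (Fin k) n
  have hfin (j : ℕ) : Module.Finite B ((piDegreeLT B (Fin k) j).map (q.restrictScalars B)) :=
    have := finite_piDegreeLT B (Fin k) j
    inferInstance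
  have hX (m : M) (hm : m ∈ (piDegreeLT B (Fin k) n).map (q.restrictScalars B)) :
      DistribSMul.toLinearMap B M (Polynomial.X : B[X]) m ∈
        (piDegreeLT B (Fin k) (n + 1)).map (q.restrictScalars B) := by
    obtain ⟨v, hv, rfl⟩ := hm
    exact ⟨_, X_smul_mem_piDegreeLT B (Fin k) hv, map_smul q _ _⟩
  refine ⟨_, _, _, _, hfin n, hfin (n + 1), pencil_injective _ (Submodule.inclusion_injective _),
    ?_, exact_pencil_map hD _ hX ?_ (exact_pencil_piDegreeLT B (Fin k) n)⟩
  · rw [← LinearMap.range_eq_top, range_polynomialLift, Submodule.coe_subtype, Subtype.range_coe,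
      Submodule.map_coe, LinearMap.coe_restrictScalars, Submodule.span_image,
      span_piDegreeLT_succ, Submodule.map_top, LinearMap.range_eq_top.2 hq]
  · exact hT.ge.trans (Submodule.span_mono fun v hv ↦
      ⟨hD (hn hv), hT.le (Submodule.subset_span hv)⟩)

end Submodule

/-- Every finite `B`-module has a finite resolution by finite free modules. -/
def HasFiniteFreeResolutions (B : Type u) [CommRing B] : Prop :=
  ∀ (M : Type u) [AddCommGroup M] [Module B M] [Module.Finite B M], ∃ n, HasFreeResolution B n M

lemma exists_tensorProduct_linearEquiv {S B N : Type*} [CommRing S] [CommRing B] [Algebra S B]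
    (g : Submonoid S) [IsLocalization g B] [AddCommGroup N] [Module B N] [Module.Finite B N] :
    ∃ (k : ℕ) (L : Submodule S (Fin k → S)), Nonempty (B ⊗[S] ((Fin k → S) ⧸ L) ≃ₗ[B] N) := by
  let _ : Module S N := Module.compHom N (algebraMap S B)
  have : IsScalarTower S B N := .of_algebraMap_smul fun _ _ ↦ rfl
  obtain ⟨k, f, hf⟩ := Module.Finite.exists_fin' B N
  let h : (Fin k → S) →ₗ[S] N := f.restrictScalars S ∘ₗ (Algebra.linearMap S B).compLeft (Fin k)
  let i : ((Fin k → S) ⧸ LinearMap.ker h) →ₗ[S] N := (LinearMap.ker h).liftQ h le_rfl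
  have hi : Function.Injective i :=
    LinearMap.ker_eq_bot.1 (Submodule.ker_liftQ_eq_bot _ _ _ le_rfl)
  have : IsLocalizedModule g i :=
    { map_units s := by
        have := (IsLocalization.map_units B s).map (Algebra.lsmul S S N)
        rwa [AlgHom.commutes] at this
      surj y := by
        obtain ⟨v, rfl⟩ := hf y
        obtain ⟨c, hc⟩ := IsLocalization.exist_integer_multiples_of_finite g v
        choose z hz using hc
        refine ⟨(Submodule.Quotient.mk z, c), ?_⟩
        have hcv : c.1 • v = fun j ↦ algebraMap S B (z j) := funext fun j ↦ (hz j).symm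
        exact (f.map_smul_of_tower c.1 v).symm.trans (congrArg f hcv)
      exists_of_eq h := ⟨1, by rw [hi h]⟩ }
  exact ⟨k, LinearMap.ker h, ⟨(IsLocalizedModule.isBaseChange g B i).equiv⟩⟩

namespace HasFiniteFreeResolutions

lemma of_field (K : Type u) [Field K] : HasFiniteFreeResolutions K :=
  fun _ _ _ _ ↦ ⟨0, inferInstance, inferInstance⟩

/-- Every finite `B[X]`-module `M` fits into an exact sequence `0 → L[X] → L'[X] → M → 0`
with `L` and `L'` finite over `B`. -/
theorem polynomial {B : Type u} [CommRing B] [IsNoetherianRing B]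
    (hB : HasFiniteFreeResolutions B) : HasFiniteFreeResolutions B[X] := by
  intro M _ _ _
  let _ : Module B M := Module.compHom M Polynomial.C
  have : IsScalarTower B B[X] M := .of_algebraMap_smul fun _ _ ↦ rfl
  obtain ⟨L, L', i, x, _, _, hinj, hsurj, hexact⟩ := exists_exact_pencil (B := B) (M := M)
  have hext (N : Submodule B M) [Module.Finite B N] :
      ∃ n, HasFreeResolution B[X] n (PolynomialModule B N) := by
    obtain ⟨n, hn⟩ := hB N
    exact ⟨n, (hn.baseChange B[X]).of_linearEquiv
      (PolynomialModule.polynomialTensorProductLEquivPolynomialModule B N)⟩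
  obtain ⟨a, ha⟩ := hext L
  obtain ⟨b, hb⟩ := hext L'
  exact ⟨max a b + 1, .of_exact_right hinj hsurj hexact (ha.mono (le_max_left a b))
    (hb.mono ((le_max_right a b).trans (Nat.le_succ _)))⟩

lemma of_isLocalization {S B : Type u} [CommRing S] [CommRing B] [Algebra S B] (g : Submonoid S)
    [IsLocalization g B] (hS : HasFiniteFreeResolutions S) : HasFiniteFreeResolutions B := by
  intro N _ _ _
  obtain ⟨k, L, ⟨e⟩⟩ := exists_tensorProduct_linearEquiv (B := B) (N := N) g
  obtain ⟨n, hn⟩ := hS ((Fin k → S) ⧸ L)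
  have := IsLocalization.flat B g
  exact ⟨n, (hn.baseChange B).of_linearEquiv e⟩

lemma of_ringEquiv {S B : Type u} [CommRing S] [CommRing B] (e : S ≃+* B)
    (hS : HasFiniteFreeResolutions S) : HasFiniteFreeResolutions B := by
  let _ := e.toRingHom.toAlgebra
  have : IsLocalization (IsUnit.submonoid S) B := .of_le_isUnit_of_bijective
    Algebra.algebraMapSubmonoid_isUnit_le e.bijective
  exact hS.of_isLocalization (IsUnit.submonoid S)

lemma mvPolynomial {K : Type u} [Field K] (σ : Type) [Finite σ] :
    HasFiniteFreeResolutions (MvPolynomial σ K) := by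
  have hfin (n : ℕ) : HasFiniteFreeResolutions (MvPolynomial (Fin n) K) := by
    induction n with
    | zero => exact (of_field K).of_ringEquiv (isEmptyRingEquiv K (Fin 0)).symm
    | succ n ih => exact ih.polynomial.of_ringEquiv (finSuccEquiv K n).symm.toRingEquiv
  obtain ⟨n, ⟨e⟩⟩ := Finite.exists_equiv_fin σ
  exact (hfin n).of_ringEquiv (renameEquiv K e.symm).toRingEquiv

lemma isStablyFree_of_isLocalization {S : Type u} {B N : Type*} [CommRing S] [CommRing B]
    [Algebra S B] (g : Submonoid S) [IsLocalization g B] [AddCommGroup N] [Module B N]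
    [Module.Finite B N] [Module.Projective B N] (hS : HasFiniteFreeResolutions S) :
    Module.IsStablyFree B N := by
  obtain ⟨k, L, ⟨e⟩⟩ := exists_tensorProduct_linearEquiv (B := B) (N := N) g
  obtain ⟨n, hn⟩ := hS ((Fin k → S) ⧸ L)
  have := IsLocalization.flat B g
  have := Module.Projective.of_equiv e.symm
  have := hn.isStablyFree_baseChange B
  exact .equiv e

end HasFiniteFreeResolutions

section Cancellation

variable (A P : Type*) [CommRing A] [AddCommGroup P] [Module A P]

/-- The automorphisms of `A × P` act transitively on its unimodular elements. -/
def UnimodularTransitive : Prop :=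
  ∀ v : A × P, IsUnimodularElement A v → ∃ e : (A × P) ≃ₗ[A] A × P, e v = (1, 0)

variable {A P} {Q : Type*} [AddCommGroup Q] [Module A Q]

lemma nonempty_linearEquiv_of_apply_one_zero {e : (A × Q) ≃ₗ[A] A × P} (he : e (1, 0) = (1, 0)) :
    Nonempty (Q ≃ₗ[A] P) := by
  have hinl : e.toLinearMap ∘ₗ LinearMap.inl A A Q = LinearMap.inl A A P :=
    LinearMap.ext_ring (by simp [he])
  have hker : (LinearMap.ker (LinearMap.snd A A Q)).map e.toLinearMap =
      LinearMap.ker (LinearMap.snd A A P) := by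
    rw [LinearMap.ker_snd, LinearMap.ker_snd, ← LinearMap.range_comp, hinl]
  exact ⟨((LinearMap.snd A A Q).quotKerEquivOfSurjective LinearMap.snd_surjective).symm.trans <|
    (Submodule.Quotient.equiv _ _ e hker).trans <|
      (LinearMap.snd A A P).quotKerEquivOfSurjective LinearMap.snd_surjective⟩

lemma UnimodularTransitive.nonempty_linearEquiv (h : UnimodularTransitive A P)
    (e : (A × Q) ≃ₗ[A] A × P) : Nonempty (Q ≃ₗ[A] P) := by
  have hv : IsUnimodularElement A ((1, 0) : A × Q) := ⟨LinearMap.fst A A Q, rfl⟩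
  obtain ⟨e', he'⟩ := h _ (hv.map_equiv e)
  exact nonempty_linearEquiv_of_apply_one_zero (e := e.trans e') he'

variable (A P) in
/-- Splitting one coordinate off the free summand of `P × A^(t+1)`. -/
def prodSuccEquiv (t : ℕ) : (A × P × (Fin t → A)) ≃ₗ[A] P × (Fin (t + 1) → A) :=
  (LinearEquiv.prodAssoc A A P _).symm.trans <|
    ((LinearEquiv.prodComm A A P).prodCongr (.refl A _)).trans <|
    (LinearEquiv.prodAssoc A P A _).trans <|
    (LinearEquiv.refl A P).prodCongr (Fin.consLinearEquiv A fun _ ↦ A)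

lemma nonempty_linearEquiv_prod_of_le {s t : ℕ} (hst : s ≤ t)
    (h : ∀ j, s ≤ j → UnimodularTransitive A (P × (Fin j → A)))
    (e : (P × (Fin t → A)) ≃ₗ[A] Q × (Fin t → A)) :
    Nonempty ((P × (Fin s → A)) ≃ₗ[A] Q × (Fin s → A)) := by
  induction t, hst using Nat.le_induction with
  | base => exact ⟨e⟩
  | succ t hst ih =>
    obtain ⟨f⟩ := (h t hst).nonempty_linearEquiv
      (((prodSuccEquiv A Q t).trans e.symm).trans (prodSuccEquiv A P t).symm)
    exact ih f.symm

lemma ElementaryTransitive.unimodularTransitive {n : ℕ}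
    (h : ElementaryTransitive (Fin (n + 1)) A) (φ : (Fin n → A) ≃ₗ[A] P) :
    UnimodularTransitive A P := by
  intro v hv
  obtain ⟨x, rfl⟩ : ∃ x, finSuccProd φ.toLinearMap x = v :=
    ⟨Fin.cons v.1 (φ.symm v.2), by simp [finSuccProd_cons]⟩
  obtain ⟨σ, hσ, hσv⟩ := h _ hv.isUnimodular_of_map 0
  have hφ : φ.symm.toLinearMap ∘ₗ φ.toLinearMap = (1 : A) • LinearMap.id := by
    rw [LinearEquiv.symm_comp, one_smul]
  obtain ⟨e, -, he⟩ := elementarySubgroup_le_intertwinedSubgroup hφ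
    (Ideal.span_singleton_one (α := A) ▸ hσ)
  exact ⟨e, by rw [he, hσv, finSuccProd_single_zero]⟩

end Cancellation

section FieldCase

variable {K : Type u} {B N : Type*} [Field K] [CommRing B] [Algebra K B] [AddCommGroup N]
  [Module B N] [Module.Finite B N] [Module.Projective B N]

lemma IsSeparatedLocalization.isStablyFree (h : IsSeparatedLocalization K B) :
    Module.IsStablyFree B N := by
  obtain ⟨σ, _, n, y, F, -, ⟨e⟩⟩ := h
  let _ : Algebra (MvPolynomial σ K) B := (e.toRingHom.comp (algebraMap _ _)).toAlgebra
  have : IsLocalization.Away (separatedProduct y F) B :=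
    IsLocalization.isLocalization_of_algEquiv _
      (AlgEquiv.ofRingEquiv (f := e.toRingEquiv) fun _ ↦ rfl :
        Localization.Away (separatedProduct y F) ≃ₐ[MvPolynomial σ K] B)
  exact (HasFiniteFreeResolutions.mvPolynomial σ).isStablyFree_of_isLocalization
    (.powers (separatedProduct y F))

lemma IsSeparatedLocalization.nonempty_linearEquiv_pi (h : IsSeparatedLocalization K B) {r : ℕ}
    (hr2 : 2 ≤ r) (hr : ∀ p, Module.rankAtStalk (R := B) N p = r) :
    Nonempty (N ≃ₗ[B] (Fin r → B)) := by
  obtain hB | hB := subsingleton_or_nontrivial B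
  · have := Module.subsingleton B N
    exact ⟨0⟩
  have := h.isStablyFree (N := N)
  obtain ⟨F, _, _, _, _, _⟩ := Module.IsStablyFree.exist_free_prod B N
  let a := Module.finrank B F
  obtain ⟨eF⟩ : Nonempty (F ≃ₗ[B] (Fin a → B)) := ⟨LinearEquiv.ofFinrankEq _ _ (by simp [a])⟩
  have hrank : Module.finrank B (N × F) = r + a := by
    have hp := congrFun (Module.rankAtStalk_prod (R := B) N F) (Classical.arbitrary _)
    simpa [Module.rankAtStalk_eq_finrank_of_free, hr] using hp
  let e : ((Fin r → B) × (Fin a → B)) ≃ₗ[B] N × (Fin a → B) :=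
    (LinearEquiv.ofFinrankEq _ (N × F) (by simp [hrank])).trans
      ((LinearEquiv.refl B N).prodCongr eF)
  obtain ⟨f⟩ := nonempty_linearEquiv_prod_of_le (Nat.zero_le a) (fun j _ ↦
    (h.elementaryTransitive (d := 0) (k := r + j) (by omega) (by omega)
      (by simp [ringKrullDim_eq_zero_of_field])).unimodularTransitive
      (LinearEquiv.ofFinrankEq _ _ (by simp))) e
  exact ⟨LinearEquiv.prodUnique.symm.trans (f.symm.trans LinearEquiv.prodUnique)⟩

end FieldCase

section ClearDenominators

variable {B M M' N N' : Type*} [CommRing B] (S : Submonoid B) [AddCommGroup M] [Module B M]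
  [AddCommGroup M'] [Module B M'] [AddCommGroup N] [Module B N] [AddCommGroup N'] [Module B N']
  [Module.FinitePresentation B M] [Module.FinitePresentation B N]

lemma exists_comp_eq_smul_id_of_isLocalizedModule (f : M →ₗ[B] M') [IsLocalizedModule S f]
    (g : N →ₗ[B] N') [IsLocalizedModule S g] (e : M' ≃ₗ[B] N') :
    ∃ s ∈ S, ∃ (φ : M →ₗ[B] N) (ψ : N →ₗ[B] M),
      φ ∘ₗ ψ = s • LinearMap.id ∧ ψ ∘ₗ φ = s • LinearMap.id := by
  obtain ⟨φ, a, hφ⟩ :=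
    Module.FinitePresentation.exists_lift_of_isLocalizedModule S g (e.toLinearMap ∘ₗ f)
  obtain ⟨ψ, b, hψ⟩ :=
    Module.FinitePresentation.exists_lift_of_isLocalizedModule S f (e.symm.toLinearMap ∘ₗ g)
  have hφ' (x) : g (φ x) = a • e (f x) := LinearMap.congr_fun hφ x
  have hψ' (x) : f (ψ x) = b • e.symm (g x) := LinearMap.congr_fun hψ x
  obtain ⟨c, hc⟩ := Module.Finite.exists_smul_of_comp_eq_of_isLocalizedModule S g (φ ∘ₗ ψ)
    ((a * b) • LinearMap.id) (LinearMap.ext fun x ↦ by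
      simp [hφ', hψ', Submonoid.smul_def, mul_smul])
  obtain ⟨d, hd⟩ := Module.Finite.exists_smul_of_comp_eq_of_isLocalizedModule S f (ψ ∘ₗ φ)
    ((a * b) • LinearMap.id) (LinearMap.ext fun x ↦ by
      simp [hφ', hψ', Submonoid.smul_def, smul_smul, mul_comm])
  refine ⟨(d * c * (a * b) : S), SetLike.coe_mem _, φ, (d * c) • ψ, ?_, ?_⟩
  · rw [LinearMap.comp_smul, mul_smul, hc, ← mul_smul, ← mul_smul]
    rfl
  · rw [LinearMap.smul_comp, mul_comm d, mul_smul, hd, ← mul_smul, ← mul_smul]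
    rfl

end ClearDenominators

section Nakayama

variable {C M N : Type*} [CommRing C] {J : Ideal C} [AddCommGroup M] [Module C M]
  [Module.Finite C M] [AddCommGroup N] [Module C N]

lemma bijective_of_mk_comp_eq (hJ : J ≤ Ideal.jacobson ⊥) {θ : M →ₗ[C] M}
    (hθ : TensorProduct.mk C (C ⧸ J) M 1 ∘ₗ θ = TensorProduct.mk C (C ⧸ J) M 1) :
    Function.Bijective θ := by
  refine OrzechProperty.bijective_of_surjective_endomorphism θ (LinearMap.range_eq_top.1 ?_)
  refine top_le_iff.1 (Submodule.le_of_le_smul_of_le_jacobson_bot Module.Finite.fg_top hJ ?_)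
  intro x _
  have hx : x - θ x ∈ J • (⊤ : Submodule C M) := by
    rw [← LinearMap.ker_tensorProductMk, LinearMap.mem_ker, map_sub, sub_eq_zero]
    exact (LinearMap.congr_fun hθ x).symm
  rw [← add_sub_cancel (θ x) x]
  exact Submodule.add_mem_sup ⟨x, rfl⟩ hx

lemma nonempty_linearEquiv_of_quotient [Module.Projective C M] [Module.Finite C N]
    [Module.Projective C N] (hJ : J ≤ Ideal.jacobson ⊥)
    (e : ((C ⧸ J) ⊗[C] M) ≃ₗ[C] (C ⧸ J) ⊗[C] N) : Nonempty (M ≃ₗ[C] N) := by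
  have hsurj := Ideal.Quotient.mk_surjective (I := J)
  obtain ⟨φ, hφ⟩ := Module.projective_lifting_property (TensorProduct.mk C (C ⧸ J) N 1)
    (e.toLinearMap ∘ₗ TensorProduct.mk C (C ⧸ J) M 1) (TensorProduct.mk_surjective _ _ _ hsurj)
  obtain ⟨ψ, hψ⟩ := Module.projective_lifting_property (TensorProduct.mk C (C ⧸ J) M 1)
    (e.symm.toLinearMap ∘ₗ TensorProduct.mk C (C ⧸ J) N 1)
    (TensorProduct.mk_surjective _ _ _ hsurj)
  have hψφ : Function.Bijective (ψ ∘ₗ φ) := bijective_of_mk_comp_eq hJ <| by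
    rw [← LinearMap.comp_assoc, hψ, LinearMap.comp_assoc, hφ, ← LinearMap.comp_assoc,
      e.symm_comp, LinearMap.id_comp]
  have hφψ : Function.Bijective (φ ∘ₗ ψ) := bijective_of_mk_comp_eq hJ <| by
    rw [← LinearMap.comp_assoc, hφ, LinearMap.comp_assoc, hψ, ← LinearMap.comp_assoc,
      e.comp_symm, LinearMap.id_comp]
  rw [LinearMap.coe_comp] at hψφ hφψ
  exact ⟨LinearEquiv.ofBijective φ ⟨hψφ.injective.of_comp, hφψ.surjective.of_comp⟩⟩

end Nakayama

section GenericTriviality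

variable {R : Type u} {B : Type*} [CommRing R] [CommRing B] [Algebra R B] {N : Type*}
  [AddCommGroup N] [Module B N] [Module.Finite B N] [Module.Projective B N] {r : ℕ}

lemma IsSeparatedLocalization.nonempty_linearEquiv_pi_of_nilpotent [IsLocalRing R]
    (hR : IsLocalRing.maximalIdeal R ≤ nilradical R) (h : IsSeparatedLocalization R B)
    (hr2 : 2 ≤ r) (hr : ∀ p, Module.rankAtStalk (R := B) N p = r) :
    Nonempty (N ≃ₗ[B] (Fin r → B)) := by
  let J : Ideal B := (IsLocalRing.maximalIdeal R).map (algebraMap R B)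
  have hJ : J ≤ Ideal.jacobson ⊥ := Ideal.map_le_iff_le_comap.2 fun x hx ↦
    Ideal.radical_le_jacobson ((mem_nilradical.1 (hR hx)).map (algebraMap R B))
  let _ : Field (R ⧸ IsLocalRing.maximalIdeal R) := Ideal.Quotient.field _
  obtain ⟨e⟩ := (h.quotient (IsLocalRing.maximalIdeal R)).nonempty_linearEquiv_pi
    (N := (B ⧸ J) ⊗[B] N) hr2 fun q ↦ by rw [Module.rankAtStalk_baseChange, hr]
  exact nonempty_linearEquiv_of_quotient hJ
    ((e.trans (TensorProduct.piScalarRight B (B ⧸ J) (B ⧸ J) (Fin r)).symm).restrictScalars B)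

lemma IsSeparatedLocalization.genericallyTrivial [IsNoetherianRing R] [Nontrivial R]
    (h : IsSeparatedLocalization R B) (hr2 : 2 ≤ r)
    (hr : ∀ p, Module.rankAtStalk (R := B) N p = r) : GenericallyTrivial r R B N := by
  obtain ⟨p, hp⟩ := Ideal.nonempty_minimalPrimes (I := (⊥ : Ideal R)) bot_ne_top
  have : p.IsPrime := hp.1.1
  have hm : IsLocalRing.maximalIdeal (Localization.AtPrime p) ≤ nilradical _ := by
    have hrad := IsLocalization.AtPrime.radical_map_of_mem_minimalPrimes
      (A := Localization.AtPrime p) p ⊥ hp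
    rw [Ideal.map_bot, IsLocalization.AtPrime.map_eq_maximalIdeal p] at hrad
    exact hrad.ge
  let S := Algebra.algebraMapSubmonoid B p.primeCompl
  let B' := Localization S
  have h' : IsSeparatedLocalization (Localization.AtPrime p) B' :=
    (h.baseChange _).of_algEquiv (Localization.tensorRightAlgEquiv p.primeCompl B)
  obtain ⟨e⟩ := h'.nonempty_linearEquiv_pi_of_nilpotent (N := B' ⊗[B] N) hm hr2 fun q ↦ by
    rw [Module.rankAtStalk_baseChange, hr]
  have := h.isNoetherianRing
  have := Module.finitePresentation_of_finite B N
  obtain ⟨_, ⟨s, hs, rfl⟩, φ, ψ, hφψ, hψφ⟩ := exists_comp_eq_smul_id_of_isLocalizedModule S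
    (LinearMap.pi fun i : Fin r ↦ Algebra.linearMap B B' ∘ₗ LinearMap.proj i)
    (TensorProduct.mk B B' N 1) (e.restrictScalars B).symm
  exact ⟨s, fun hnil ↦ hs (nilradical_le_prime p hnil), φ, ψ, hφψ, hψφ⟩

theorem IsSeparatedLocalization.unimodularTransitive [IsNoetherianRing R]
    (h : IsSeparatedLocalization R B) {d : ℕ} (hdr : d < r) (hr2 : 2 ≤ r)
    (hd : ringKrullDim R ≤ d) (hr : ∀ p, Module.rankAtStalk (R := B) N p = r) :
    UnimodularTransitive B N := by
  intro v hv
  obtain ⟨e, -, he⟩ := h.exists_mem_transvectionGroup_apply_eq_one_zero hdr hr2 hd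
    (fun I hI ↦ by
      have := Ideal.Quotient.nontrivial_iff.2 hI
      exact (h.quotient I).genericallyTrivial hr2 fun q ↦ by
        rw [Module.rankAtStalk_baseChange, hr]) hv
  exact ⟨e, he⟩

end GenericTriviality

section RankOne

variable {A P Q : Type*} [CommRing A] [AddCommGroup P] [Module A P] [AddCommGroup Q] [Module A Q]

lemma exists_smul_mem_span_singleton [Module.Finite A P] [Module.Projective A P]
    {p : PrimeSpectrum A} (hp : Module.rankAtStalk P p = 1) :
    ∃ b : P, ∀ x, ∃ s ∉ p.asIdeal, ∃ a : A, s • x = a • b := by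
  let S := p.asIdeal.primeCompl
  let f := LocalizedModule.mkLinearMap S P
  have : Module.Free (Localization S) (LocalizedModule S P) :=
    Module.free_of_flat_of_isLocalRing (R := Localization.AtPrime p.asIdeal)
  obtain ⟨e⟩ := Module.nonempty_linearEquiv_of_finrank_eq_one hp
  obtain ⟨⟨b, t⟩, hb⟩ := IsLocalizedModule.mk'_surjective S f (e 1)
  refine ⟨b, fun x ↦ ?_⟩
  obtain ⟨a, u, ha⟩ := IsLocalization.exists_mk'_eq S (e.symm (f x))
  have hx : IsLocalizedModule.mk' f (a • b) (u * t) = f x := by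
    rw [← IsLocalizedModule.mk'_smul_mk' (Localization S), ha]
    change _ • Function.uncurry (IsLocalizedModule.mk' f) (b, t) = _
    rw [hb, ← map_smul, smul_eq_mul, mul_one, e.apply_symm_apply]
  rw [IsLocalizedModule.mk'_eq_iff, Submonoid.smul_def, ← map_smul,
    IsLocalizedModule.eq_iff_exists S] at hx
  obtain ⟨c, hc⟩ := hx
  refine ⟨(c * (u * t) : S), SetLike.coe_mem (c * (u * t)), c * a, ?_⟩
  rw [Submonoid.coe_mul, mul_smul, mul_smul]
  exact hc.symm

lemma apply_apply_eq_zero_of_isAlt [Module.Finite A P] [Module.Projective A P]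
    (hP : ∀ p, Module.rankAtStalk (R := A) P p = 1) {F : P →ₗ[A] P →ₗ[A] Q} (hF : F.IsAlt)
    (x y : P) : F x y = 0 := by
  refine Module.eq_zero_of_localization_maximal
    (fun (m : Ideal A) _ ↦ LocalizedModule m.primeCompl Q)
    (fun (m : Ideal A) _ ↦ LocalizedModule.mkLinearMap m.primeCompl Q) _ fun m hm ↦ ?_
  obtain ⟨b, hb⟩ := exists_smul_mem_span_singleton (hP ⟨m, hm.isPrime⟩)
  obtain ⟨s, hs, a, hx⟩ := hb x
  obtain ⟨t, ht, c, hy⟩ := hb y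
  rw [IsLocalizedModule.eq_zero_iff m.primeCompl]
  refine ⟨⟨s, hs⟩ * ⟨t, ht⟩, ?_⟩
  calc (s * t) • F x y = F (s • x) (t • y) := by simp [mul_smul, smul_comm s t]
    _ = 0 := by simp [hx, hy, hF b]

variable (A Q) in
/-- The `Q`-component of the exterior product `Λ²(A × Q) = Q ⊕ Λ²Q`. -/
def prodWedge : A × Q →ₗ[A] A × Q →ₗ[A] Q :=
  LinearMap.mk₂ A (fun x y ↦ x.1 • y.2 - y.1 • x.2)
    (fun _ _ _ ↦ by simp only [Prod.fst_add, Prod.snd_add]; module)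
    (fun _ _ _ ↦ by simp only [Prod.smul_fst, Prod.smul_snd, smul_eq_mul]; module)
    (fun _ _ _ ↦ by simp only [Prod.fst_add, Prod.snd_add]; module)
    (fun _ _ _ ↦ by simp only [Prod.smul_fst, Prod.smul_snd, smul_eq_mul]; module)

/-- The map `P → Q` induced by `f : A × P → A × Q` on second exterior powers. -/
def wedgeMap (f : A × P →ₗ[A] A × Q) : P →ₗ[A] Q :=
  prodWedge A Q (f (1, 0)) ∘ₗ f ∘ₗ LinearMap.inr A A P

lemma wedgeMap_prodWedge [Module.Finite A P] [Module.Projective A P]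
    (hP : ∀ p, Module.rankAtStalk (R := A) P p = 1) (f : A × P →ₗ[A] A × Q) (x y : A × P) :
    wedgeMap f (prodWedge A P x y) = prodWedge A Q (f x) (f y) := by
  have hf (x : A × P) : f x = x.1 • f (1, 0) + f (0, x.2) := by
    rw [← map_smul, ← map_add]
    simp
  have halt (x : A × Q) : prodWedge A Q x x = 0 := by simp [prodWedge]
  have hswap (x y : A × Q) : prodWedge A Q x y = - prodWedge A Q y x := by simp [prodWedge]
  have hzero : prodWedge A Q (f (0, x.2)) (f (0, y.2)) = 0 :=
    apply_apply_eq_zero_of_isAlt hP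
      (F := (prodWedge A Q).compl₁₂ (f ∘ₗ LinearMap.inr A A P) (f ∘ₗ LinearMap.inr A A P))
      (fun z ↦ halt _) x.2 y.2
  have hw (z : P) : wedgeMap f z = prodWedge A Q (f (1, 0)) (f (0, z)) := rfl
  have hxy : prodWedge A P x y = x.1 • y.2 - y.1 • x.2 := rfl
  rw [hxy, map_sub, map_smul, map_smul, hw, hw, hf x, hf y]
  simp only [map_add, map_smul, LinearMap.add_apply, LinearMap.smul_apply, halt, hzero]
  rw [hswap (f (0, x.2))]
  module

lemma wedgeMap_wedgeMap_symm [Module.Finite A P] [Module.Projective A P]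
    (hP : ∀ p, Module.rankAtStalk (R := A) P p = 1) (e : (A × P) ≃ₗ[A] A × Q) (q : Q) :
    wedgeMap e.toLinearMap (wedgeMap e.symm.toLinearMap q) = q := by
  refine (wedgeMap_prodWedge hP _ (e.symm (1, 0)) (e.symm (0, q))).trans ?_
  simp [prodWedge]

lemma nonempty_linearEquiv_of_rankAtStalk_eq_one [Module.Finite A P] [Module.Projective A P]
    [Module.Finite A Q] [Module.Projective A Q] (hP : ∀ p, Module.rankAtStalk (R := A) P p = 1)
    (hQ : ∀ p, Module.rankAtStalk (R := A) Q p = 1) (e : (A × P) ≃ₗ[A] A × Q) :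
    Nonempty (P ≃ₗ[A] Q) :=
  ⟨.ofLinearMap (wedgeMap e.toLinearMap) (wedgeMap e.symm.toLinearMap)
    (LinearMap.ext (wedgeMap_wedgeMap_symm hP e))
    (LinearMap.ext (wedgeMap_wedgeMap_symm hQ e.symm))⟩

variable (A P) in
/-- The identification `P × A¹ ≃ A × P` of the two ways of adding a free summand of rank one. -/
def prodFinOneEquiv : (P × (Fin 1 → A)) ≃ₗ[A] A × P :=
  ((LinearEquiv.refl A P).prodCongr (.funUnique (Fin 1) A A)).trans (LinearEquiv.prodComm A P A)

end RankOne

section FreeSummands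

variable {A P Q : Type*} [CommRing A] [AddCommGroup P] [Module A P] [Module.Finite A P]
  [Module.Projective A P] [AddCommGroup Q] [Module A Q]

lemma rankAtStalk_prod_pi (p : PrimeSpectrum A) (t : ℕ) :
    Module.rankAtStalk (P × (Fin t → A)) p = Module.rankAtStalk P p + t := by
  have := p.nontrivial
  simp [Module.rankAtStalk_prod, Module.rankAtStalk_eq_finrank_of_free]

variable {R : Type u} [CommRing R] [Algebra R A]

lemma IsSeparatedLocalization.of_isLocalization {σ : Type} [Finite σ]
    [Algebra (MvPolynomial σ R) A] [IsScalarTower R (MvPolynomial σ R) A] {n : ℕ} {y : Fin n → σ}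
    (hy : Function.Injective y) (F : Fin n → Polynomial R)
    [IsLocalization.Away (separatedProduct y F) A] : IsSeparatedLocalization R A :=
  ⟨σ, inferInstance, n, y, F, hy,
    ⟨(IsLocalization.algEquiv (.powers (separatedProduct y F)) (Localization.Away _)
      A).restrictScalars R⟩⟩

variable [IsNoetherianRing R] {d r : ℕ}

lemma IsSeparatedLocalization.nonempty_linearEquiv_prod_of_le (h : IsSeparatedLocalization R A)
    (hdr : d < r) (hd : ringKrullDim R ≤ d) (hP : ∀ p, Module.rankAtStalk (R := A) P p = r)
    {s t : ℕ} (hrs : 2 ≤ r + s) (hst : s ≤ t)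
    (e : (P × (Fin t → A)) ≃ₗ[A] Q × (Fin t → A)) :
    Nonempty ((P × (Fin s → A)) ≃ₗ[A] Q × (Fin s → A)) :=
  DhorajiaKeshari.nonempty_linearEquiv_prod_of_le hst (fun j hj ↦
    h.unimodularTransitive (by omega) (r := r + j) (by omega) hd fun p ↦ by
      rw [rankAtStalk_prod_pi, hP]) e

variable [Module.Finite A Q] [Module.Projective A Q]

lemma nonempty_linearEquiv_of_prod_of_rankAtStalk_eq_one
    (hP : ∀ p, Module.rankAtStalk (R := A) P p = 1)
    (e : (P × (Fin 1 → A)) ≃ₗ[A] Q × (Fin 1 → A)) : Nonempty (P ≃ₗ[A] Q) := by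
  have hQ (p) : Module.rankAtStalk (R := A) Q p = 1 := by
    have hp := congrFun (Module.rankAtStalk_eq_of_equiv e) p
    rw [rankAtStalk_prod_pi, rankAtStalk_prod_pi, hP] at hp
    omega
  exact nonempty_linearEquiv_of_rankAtStalk_eq_one hP hQ <|
    (prodFinOneEquiv A P).symm.trans <| e.trans (prodFinOneEquiv A Q)

end FreeSummands

end DhorajiaKeshari

/-- **Theorem (Dhorajia–Keshari).** Let `R` be Noetherian of finite Krull dimension `d`,
`f_i ∈ R[Y_i]` for `1 ≤ i ≤ n`, and `A = R[X_1,…,X_m,Y_1,…,Y_n, (f_1⋯f_n)⁻¹]`.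
Then every finitely generated projective `A`-module `P` of constant rank `r ≥ d + 1` is
cancellative: `P ⊕ Aᵗ ≅ Q ⊕ Aᵗ` implies `P ≅ Q`. -/
theorem projective_cancellation_dhorajia_keshari
    (R : Type*) [CommRing R] [IsNoetherianRing R] (d : ℕ) (hdim : ringKrullDim R = d)
    (m n : ℕ) (F : Fin n → Polynomial R)
    (A : Type*) [CommRing A] [Algebra (MvPolynomial (Fin m ⊕ Fin n) R) A]
    [IsLocalization.Away
      (∏ i : Fin n, Polynomial.aeval (X (Sum.inr i) : MvPolynomial (Fin m ⊕ Fin n) R) (F i)) A]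
    (P : Type*) [AddCommGroup P] [Module A P] [Module.Finite A P] [Module.Projective A P]
    (r : ℕ) (hr : d + 1 ≤ r)
    (hrank : ∀ p : PrimeSpectrum A,
      Module.finrank (Localization.AtPrime p.asIdeal) (LocalizedModule p.asIdeal.primeCompl P)
        = r)
    (Q : Type*) [AddCommGroup Q] [Module A Q] [Module.Finite A Q] [Module.Projective A Q]
    (t : ℕ) (ht : 0 < t)
    (hiso : Nonempty ((P × (Fin t → A)) ≃ₗ[A] (Q × (Fin t → A)))) :
    Nonempty (P ≃ₗ[A] Q) := by
  let _ : Algebra R A := ((algebraMap (MvPolynomial (Fin m ⊕ Fin n) R) A).comp C).toAlgebra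
  have : IsScalarTower R (MvPolynomial (Fin m ⊕ Fin n) R) A := .of_algebraMap_eq fun _ ↦ rfl
  have : IsLocalization.Away
      (DhorajiaKeshari.separatedProduct (Sum.inr : Fin n → Fin m ⊕ Fin n) F) A := ‹_›
  have hA : DhorajiaKeshari.IsSeparatedLocalization R A :=
    .of_isLocalization (σ := Fin m ⊕ Fin n) (y := Sum.inr) Sum.inr_injective F
  obtain ⟨e⟩ := hiso
  obtain rfl | hr2 : r = 1 ∨ 2 ≤ r := by omega
  · obtain ⟨f⟩ := hA.nonempty_linearEquiv_prod_of_le hr hdim.le hrank (s := 1) le_rfl ht e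
    exact DhorajiaKeshari.nonempty_linearEquiv_of_prod_of_rankAtStalk_eq_one hrank f
  · obtain ⟨f⟩ := hA.nonempty_linearEquiv_prod_of_le hr hdim.le hrank (s := 0) hr2 t.zero_le e
    exact ⟨LinearEquiv.prodUnique.symm.trans (f.trans LinearEquiv.prodUnique)⟩
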